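/- arXiv:1203.2986 — 3 statements merged into one kernel-verified Lean document; each statement's English description precedes it below -/
import Mathlib

section
/- For every ε > 0, the Dirichlet problem Δu(x) = ε⁻²·(exp(u(x)) − |x|²·exp(−u(x))) in B₁(0), u = 0 on ∂B₁(0), has exactly one solution ū_ε. Moreover, ū_ε is radially symmetric (ū_ε(x) depends only on |x|) and is strictly radially increasing: its radial derivative ∂ū_ε/∂r is positive for 0 < |x| < 1. -/
open Real Set Metric

/-- The Euclidean Laplacian of `u : ℝ² → ℝ`: the sum of the second partial
derivatives along the coordinate directions. -/
noncomputable def laplacian2 (u : EuclideanSpace ℝ (Fin 2) → ℝ)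
    (x : EuclideanSpace ℝ (Fin 2)) : ℝ :=
  ∑ i : Fin 2,
    fderiv ℝ (fun y => fderiv ℝ u y (EuclideanSpace.single i 1)) x (EuclideanSpace.single i 1)

/-- `u` is a solution of the Dirichlet problem
`Δu = ε⁻²·(exp u − |x|²·exp (−u))` in `B₁(0)`, `u = 0` on `∂B₁(0)`:
continuous on the closed unit disc, smooth on the open disc, satisfying the
equation pointwise in the open disc and the boundary condition. -/
def IsDirichletSol (ε : ℝ) (u : EuclideanSpace ℝ (Fin 2) → ℝ) : Prop :=
  ContinuousOn u (closedBall 0 1) ∧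
  ContDiffOn ℝ (⊤ : ℕ∞) u (ball 0 1) ∧
  (∀ x ∈ ball (0 : EuclideanSpace ℝ (Fin 2)) 1,
    laplacian2 u x = (ε ^ 2)⁻¹ * (Real.exp (u x) - ‖x‖ ^ 2 * Real.exp (-u x))) ∧
  (∀ x ∈ sphere (0 : EuclideanSpace ℝ (Fin 2)) 1, u x = 0)


theorem aux_deriv_param (j : ℕ) (H H' : ℝ → ℝ) (hH : ∀ x, HasDerivAt H (H' x) x)
    (hc : Continuous H') (t : ℝ) :
    HasDerivAt (fun t => ∫ σ in (0:ℝ)..1, σ ^ j * H (t * σ))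
      (∫ σ in (0:ℝ)..1, σ ^ (j+1) * H' (t * σ)) t := by
  have hHc : Continuous H := continuous_iff_continuousAt.2 fun x => (hH x).continuousAt
  obtain ⟨C, hC⟩ := (isCompact_Icc (a := -(|t|+1)) (b := |t|+1)).exists_bound_of_continuousOn
    hc.continuousOn
  refine (intervalIntegral.hasDerivAt_integral_of_dominated_loc_of_deriv_le
    (F := fun t σ => σ ^ j * H (t * σ)) (F' := fun t σ => σ ^ (j+1) * H' (t * σ))
    (s := ball t 1) (bound := fun _ => C) (ball_mem_nhds t one_pos) ?_ ?_ ?_ ?_ ?_ ?_).2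
  · refine Filter.Eventually.of_forall fun x => ?_
    exact (by fun_prop : Continuous fun σ : ℝ => σ ^ j * H (x * σ)).aestronglyMeasurable
  · exact (by fun_prop : Continuous fun σ : ℝ => σ ^ j * H (t * σ)).intervalIntegrable _ _
  · exact (by fun_prop : Continuous fun σ : ℝ => σ ^ (j+1) * H' (t * σ)).aestronglyMeasurable
  · refine Filter.Eventually.of_forall fun σ hσ x hx => ?_
    rw [uIoc_of_le zero_le_one] at hσ
    have hx' : |x| ≤ |t| + 1 := by
      rw [mem_ball, Real.dist_eq] at hx
      have := abs_sub_abs_le_abs_sub x t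
      linarith
    have h1 : |x * σ| ≤ |t| + 1 := by
      rw [abs_mul, abs_of_pos hσ.1]
      nlinarith [abs_nonneg x, hσ.1, hσ.2]
    have h2 := hC (x * σ) (abs_le.1 h1)
    rw [norm_mul, norm_pow, Real.norm_of_nonneg hσ.1.le]
    have h3 : σ ^ (j+1) ≤ 1 := pow_le_one₀ hσ.1.le hσ.2
    have h4 : 0 ≤ σ ^ (j+1) := pow_nonneg hσ.1.le _
    nlinarith [norm_nonneg (H' (x * σ))]
  · exact continuous_const.intervalIntegrable _ _
  · refine Filter.Eventually.of_forall fun σ hσ x hx => ?_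
    have h1 : HasDerivAt (fun x : ℝ => x * σ) σ x := by
      simpa using (hasDerivAt_id x).mul_const σ
    have := ((hH (x * σ)).comp x h1).const_mul (σ ^ j)
    exact this.congr_deriv (by ring)

theorem aux_contDiff_param (n : ℕ) : ∀ (j : ℕ) (H : ℝ → ℝ), ContDiff ℝ n H →
    ContDiff ℝ n (fun t => ∫ σ in (0:ℝ)..1, σ ^ j * H (t * σ)) := by
  induction n with
  | zero =>
    intro j H hH
    have hc : Continuous H := hH.continuous
    refine contDiff_zero.2 ?_
    apply intervalIntegral.continuous_parametric_intervalIntegral_of_continuous'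
    simp only [Function.uncurry_def]
    fun_prop
  | succ n ih =>
    intro j H hH
    push_cast at hH ⊢
    rw [contDiff_succ_iff_deriv] at hH ⊢
    obtain ⟨h1, -, h2⟩ := hH
    have hd := aux_deriv_param j H (deriv H) (fun x => (h1 x).hasDerivAt) h2.continuous
    refine ⟨fun t => (hd t).differentiableAt, by simp, ?_⟩
    rw [show deriv (fun t => ∫ σ in (0:ℝ)..1, σ ^ j * H (t * σ)) = _ from
      funext fun t => (hd t).deriv]
    exact ih (j+1) _ h2

theorem aux_cosh (f : ℝ → ℝ) (C Λ : ℝ) (hΛ : 0 < Λ)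
    (hf : ∀ t, |f t| ≤ C * cosh (Λ * t)) (s : ℝ) :
    |∫ t in (0:ℝ)..s, f t| ≤ C / Λ * cosh (Λ * s) := by
  have hC : 0 ≤ C := by simpa using (abs_nonneg _).trans (hf 0)
  have h1 : ∫ t in (0:ℝ)..s, C * cosh (Λ * t) = C / Λ * sinh (Λ * s) := by
    have := intervalIntegral.integral_eq_sub_of_hasDerivAt (a := 0) (b := s)
      (f := fun t => C / Λ * sinh (Λ * t)) (f' := fun t => C * cosh (Λ * t)) ?_ ?_
    · simpa using this
    · intro x _
      have h1 : HasDerivAt (fun x : ℝ => Λ * x) Λ x := by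
        simpa using (hasDerivAt_id x).const_mul Λ
      exact ((h1.sinh).const_mul (C / Λ)).congr_deriv (by field_simp)
    · exact (by fun_prop : Continuous fun t : ℝ => C * cosh (Λ * t)).intervalIntegrable _ _
  have h2 := intervalIntegral.norm_integral_le_abs_of_norm_le (a := 0) (b := s) (f := f)
    (g := fun t => C * cosh (Λ * t)) (μ := MeasureTheory.volume)
    (Filter.Eventually.of_forall fun t => hf t)
    ((by fun_prop : Continuous fun t : ℝ => C * cosh (Λ * t)).intervalIntegrable _ _)
  rw [h1] at h2
  refine (h2 : |_| ≤ _).trans ?_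
  rw [abs_mul, abs_of_nonneg (div_nonneg hC hΛ.le)]
  refine mul_le_mul_of_nonneg_left ?_ (div_nonneg hC hΛ.le)
  rw [abs_le]
  constructor
  · have := sinh_add_cosh (Λ*s)
    have := exp_pos (Λ*s)
    linarith
  · exact (sinh_lt_cosh _).le

/-- Global solution of the singular initial value problem. -/
theorem aux_ivp (F : ℝ → ℝ → ℝ) (hF : Continuous (Function.uncurry F)) (M L : ℝ) (hL0 : 0 ≤ L)
    (hM : ∀ s y, |F s y| ≤ M) (hL : ∀ s y z, |F s y - F s z| ≤ L * |y - z|) :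
    ∃ φ : ℝ → ℝ → ℝ, (∀ a, Continuous (φ a)) ∧ (Continuous fun a => φ a 1) ∧
      ∀ a s, φ a s = a + ∫ t in (0:ℝ)..s, ∫ σ in (0:ℝ)..1, F (t * σ) (φ a (t * σ)) := by
  set Λ : ℝ := 2 * L + 1 with hΛd
  have hΛ : 0 < Λ := by positivity
  have hM0 : 0 ≤ M := (abs_nonneg _).trans (hM 0 0)
  let G : BoundedContinuousFunction ℝ ℝ → ℝ → ℝ := fun ψ t =>
    ∫ σ in (0:ℝ)..1, F (t * σ) (cosh (Λ * (t * σ)) * ψ (t * σ))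
  have hin : ∀ ψ : BoundedContinuousFunction ℝ ℝ,
      Continuous (fun s => F s (cosh (Λ * s) * ψ s)) := fun ψ =>
    hF.comp (by fun_prop : Continuous fun s : ℝ => (s, cosh (Λ * s) * ψ s))
  have hG : ∀ ψ, Continuous (G ψ) := fun ψ => by
    apply intervalIntegral.continuous_parametric_intervalIntegral_of_continuous'
    exact (hin ψ).comp (by fun_prop : Continuous fun p : ℝ × ℝ => p.1 * p.2)
  have hGM : ∀ ψ t, |G ψ t| ≤ M := fun ψ t => by
    have := intervalIntegral.norm_integral_le_of_norm_le_const (a := 0) (b := 1) (C := M)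
      (f := fun σ => F (t * σ) (cosh (Λ * (t * σ)) * ψ (t * σ))) (fun _ _ => hM _ _)
    simpa using this
  have hGL : ∀ ψ₁ ψ₂ t, |G ψ₁ t - G ψ₂ t| ≤ L * dist ψ₁ ψ₂ * cosh (Λ * t) := fun ψ₁ ψ₂ t => by
    have hi : ∀ ψ : BoundedContinuousFunction ℝ ℝ, IntervalIntegrable
        (fun σ => F (t * σ) (cosh (Λ * (t * σ)) * ψ (t * σ))) MeasureTheory.volume 0 1 := fun ψ =>
      ((hin ψ).comp (by fun_prop : Continuous fun σ : ℝ => t * σ)).intervalIntegrable _ _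
    have := intervalIntegral.norm_integral_le_of_norm_le_const (a := 0) (b := 1)
      (C := L * dist ψ₁ ψ₂ * cosh (Λ * t))
      (f := fun σ => F (t * σ) (cosh (Λ * (t * σ)) * ψ₁ (t * σ)) -
        F (t * σ) (cosh (Λ * (t * σ)) * ψ₂ (t * σ))) ?_
    · rw [intervalIntegral.integral_sub (hi _) (hi _)] at this
      simpa using this
    · intro σ hσ
      rw [uIoc_of_le zero_le_one] at hσ
      refine (hL _ _ _).trans ?_
      rw [← mul_sub, abs_mul, abs_of_pos (cosh_pos _), mul_assoc L]
      refine mul_le_mul_of_nonneg_left ?_ hL0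
      rw [mul_comm]
      refine mul_le_mul (BoundedContinuousFunction.dist_coe_le_dist (f := ψ₁) (g := ψ₂) _) ?_ (cosh_pos _).le dist_nonneg
      rw [cosh_le_cosh, abs_mul, abs_mul Λ t, abs_mul t, abs_of_pos hσ.1]
      refine mul_le_mul_of_nonneg_left ?_ (abs_nonneg _)
      nlinarith [abs_nonneg t, hσ.1, hσ.2]
  have hone : ∀ x : ℝ, 1 ≤ cosh x := one_le_cosh
  have hIc : ∀ ψ, Continuous fun s => ∫ t in (0:ℝ)..s, G ψ t := fun ψ =>
    intervalIntegral.continuous_primitive (fun a b => (hG ψ).intervalIntegrable a b) 0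
  let S : ℝ → BoundedContinuousFunction ℝ ℝ → BoundedContinuousFunction ℝ ℝ := fun a ψ =>
    BoundedContinuousFunction.ofNormedAddCommGroup
      (fun s => (a + ∫ t in (0:ℝ)..s, G ψ t) / cosh (Λ * s))
      ((continuous_const.add (hIc ψ)).div (by fun_prop) (fun s => (cosh_pos _).ne'))
      (|a| + M / Λ) (by
        intro s
        have h1 := aux_cosh (G ψ) M Λ hΛ (fun t => (hGM ψ t).trans (by nlinarith [hone (Λ * t)])) s
        rw [norm_div, Real.norm_of_nonneg (cosh_pos (Λ * s)).le, div_le_iff₀ (cosh_pos _)]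
        refine (abs_add_le _ _).trans ?_
        nlinarith [hone (Λ * s), abs_nonneg a])
  have hS : ∀ a ψ s, S a ψ s = (a + ∫ t in (0:ℝ)..s, G ψ t) / cosh (Λ * s) := fun _ _ _ => rfl
  have hcon : ∀ a, ContractingWith (1/2) (S a) := fun a => by
    refine ⟨by norm_num, LipschitzWith.of_dist_le_mul fun ψ₁ ψ₂ => ?_⟩
    rw [BoundedContinuousFunction.dist_le (by positivity)]
    intro s
    rw [hS, hS, Real.dist_eq, ← sub_div, abs_div, abs_of_pos (cosh_pos (Λ * s)),
      div_le_iff₀ (cosh_pos _), add_sub_add_left_eq_sub,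
      ← intervalIntegral.integral_sub ((hG _).intervalIntegrable _ _)
        ((hG _).intervalIntegrable _ _)]
    refine (aux_cosh _ _ Λ hΛ (hGL ψ₁ ψ₂) s).trans ?_
    refine mul_le_mul_of_nonneg_right ?_ (cosh_pos _).le
    rw [div_le_iff₀ hΛ]
    have : (0:ℝ) ≤ dist ψ₁ ψ₂ := dist_nonneg
    push_cast
    rw [hΛd]
    nlinarith
  let ψ : ℝ → BoundedContinuousFunction ℝ ℝ := fun a => ContractingWith.fixedPoint (S a) (hcon a)
  have hfix : ∀ a, S a (ψ a) = ψ a := fun a => (hcon a).fixedPoint_isFixedPt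
  have hlip : ∀ a b, dist (ψ a) (ψ b) ≤ 2 * dist a b := fun a b => by
    have := (hcon a).dist_fixedPoint_fixedPoint_of_dist_le' (S b) (hfix a) (hfix b)
      (C := dist a b) ?_
    · refine this.trans (le_of_eq ?_)
      push_cast
      ring
    · intro z
      rw [BoundedContinuousFunction.dist_le dist_nonneg]
      intro s
      rw [hS, hS, Real.dist_eq, ← sub_div, abs_div, abs_of_pos (cosh_pos (Λ * s)),
        div_le_iff₀ (cosh_pos _), add_sub_add_right_eq_sub, Real.dist_eq]
      nlinarith [hone (Λ * s), abs_nonneg (a - b)]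
  refine ⟨fun a s => cosh (Λ * s) * ψ a s, fun a => by fun_prop, ?_, ?_⟩
  · refine continuous_const.mul ?_
    have hψ : Continuous ψ :=
      (LipschitzWith.of_dist_le_mul (K := 2) (fun a b => by simpa using hlip a b)).continuous
    exact (BoundedContinuousFunction.lipschitz_eval_const (1:ℝ)).continuous.comp hψ
  · intro a s
    have h1 : ψ a s = (a + ∫ t in (0:ℝ)..s, G (ψ a) t) / cosh (Λ * s) := by
      rw [← hS, hfix]
    show cosh (Λ * s) * ψ a s = a + ∫ t in (0:ℝ)..s, G (ψ a) t
    rw [h1, mul_div_cancel₀ _ (cosh_pos _).ne']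

/-- Smoothness of fixed points and the ODE. -/
theorem aux_smooth (F : ℝ → ℝ → ℝ) (hF : ∀ n : ℕ, ContDiff ℝ n (Function.uncurry F))
    (φ : ℝ → ℝ) (a : ℝ) (hφ : Continuous φ)
    (h : ∀ s, φ s = a + ∫ t in (0:ℝ)..s, ∫ σ in (0:ℝ)..1, F (t * σ) (φ (t * σ))) :
    ContDiff ℝ (⊤ : ℕ∞) φ ∧ ∀ s, HasDerivAt (fun s => s * deriv φ s) (F s (φ s)) s := by
  have hH : ∀ n : ℕ, ContDiff ℝ n φ → ContDiff ℝ n (fun s => F s (φ s)) := fun n hn =>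
    (hF n).comp (contDiff_id.prodMk hn)
  have hHc : Continuous (fun s => F s (φ s)) := (hH 0 (contDiff_zero.2 hφ)).continuous
  have hG : ∀ n : ℕ, ContDiff ℝ n φ →
      ContDiff ℝ n (fun t => ∫ σ in (0:ℝ)..1, F (t * σ) (φ (t * σ))) := fun n hn => by
    simpa using aux_contDiff_param n 0 _ (hH n hn)
  have hGc := (hG 0 (contDiff_zero.2 hφ)).continuous
  have hd : ∀ s, HasDerivAt φ (∫ σ in (0:ℝ)..1, F (s * σ) (φ (s * σ))) s := fun s => by
    have := (intervalIntegral.integral_hasDerivAt_right (hGc.intervalIntegrable 0 s)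
      (hGc.stronglyMeasurableAtFilter _ _) hGc.continuousAt).const_add a
    rwa [← show φ = _ from funext h] at this
  have hde : deriv φ = fun t => ∫ σ in (0:ℝ)..1, F (t * σ) (φ (t * σ)) :=
    funext fun s => (hd s).deriv
  refine ⟨contDiff_infty.2 fun n => ?_, fun s => ?_⟩
  · induction n with
    | zero => exact contDiff_zero.2 hφ
    | succ n ih =>
      push_cast
      rw [contDiff_succ_iff_deriv]
      refine ⟨fun s => (hd s).differentiableAt, by simp, ?_⟩
      rw [hde]
      exact hG n ih
  · have h2 : (fun s => s * deriv φ s) = fun s => ∫ t in (0:ℝ)..s, F t (φ t) := by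
      funext s
      rw [hde]
      have := intervalIntegral.mul_integral_comp_mul_left (a := 0) (b := 1)
        (f := fun t => F t (φ t)) s
      simpa using this
    rw [h2]
    exact intervalIntegral.integral_hasDerivAt_right (hHc.intervalIntegrable 0 s)
      (hHc.stronglyMeasurableAtFilter _ _) hHc.continuousAt

theorem aux_max (v p : ℝ → ℝ) (s0 s1 d : ℝ) (h01 : s0 < s1) (hs0 : 0 ≤ s0)
    (hv : ContinuousOn v (Icc s0 s1)) (hd : ∀ s ∈ Ioo s0 s1, HasDerivAt v (p s / s) s)
    (hp0 : p s0 = 0) (hp : HasDerivAt p d s0) (hdpos : 0 < d)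
    (hmax : ∀ s ∈ Icc s0 s1, v s ≤ v s0) : False := by
  have h1 : ∀ᶠ s in nhdsWithin s0 (Ioi s0), 0 < slope p s0 s :=
    ((hasDerivAt_iff_tendsto_slope.1 hp).mono_left
      (nhdsWithin_mono _ (fun x hx => (ne_of_gt hx)))).eventually (lt_mem_nhds hdpos)
  obtain ⟨c, hc, hcs⟩ := (mem_nhdsGT_iff_exists_Ioo_subset).1 h1
  set m := min c s1 with hm
  have hsm : s0 < m := lt_min hc h01
  have hmono : StrictMonoOn v (Icc s0 m) := by
    refine strictMonoOn_of_deriv_pos (convex_Icc _ _)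
      (hv.mono (Icc_subset_Icc_right (min_le_right _ _))) fun x hx => ?_
    rw [interior_Icc] at hx
    rw [(hd x ⟨hx.1, hx.2.trans_le (min_le_right _ _)⟩).deriv]
    have h2 : 0 < slope p s0 x := hcs ⟨hx.1, hx.2.trans_le (min_le_left _ _)⟩
    rw [slope_def_field, hp0, sub_zero] at h2
    have h3 : 0 < x - s0 := sub_pos.2 hx.1
    have h4 : 0 < p x := by
      have := mul_pos h2 h3
      rwa [div_mul_cancel₀ _ h3.ne'] at this
    exact div_pos h4 (hs0.trans_lt hx.1)
  have := hmono (left_mem_Icc.2 hsm.le) (right_mem_Icc.2 hsm.le) hsm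
  exact absurd (hmax m ⟨hsm.le, min_le_right _ _⟩) (not_le.2 this)

theorem aux_trunc (k : ℝ) (hk : 0 < k) : ∃ χ : ℝ → ℝ, (∀ n : ℕ, ContDiff ℝ n χ) ∧
    HasCompactSupport χ ∧ (∀ y, |y| ≤ k + 1 → χ y = y) ∧ (∀ y, 0 ≤ y → 0 ≤ χ y) ∧
    (∀ y, y ≤ 0 → χ y ≤ 0) ∧ ∀ y, |χ y| ≤ k + 2 := by
  let b : ContDiffBump (0:ℝ) := ⟨k+1, k+2, by linarith, by linarith⟩
  refine ⟨fun y => y * b y, fun n => contDiff_id.mul b.contDiff, b.hasCompactSupport.mul_left,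
    fun y hy => ?_, fun y hy => mul_nonneg hy b.nonneg,
    fun y hy => mul_nonpos_of_nonpos_of_nonneg hy b.nonneg, fun y => ?_⟩
  · have : b y = 1 := b.one_of_mem_closedBall (by simpa using hy)
    simp [this]
  · rcases le_or_gt (k+2) |y| with h | h
    · have : b y = 0 := b.zero_of_le_dist (by simpa using h)
      simp only [this, mul_zero, abs_zero]
      linarith
    · rw [abs_mul, abs_of_nonneg b.nonneg]
      have := b.le_one (x := y)
      have := b.nonneg (x := y)
      nlinarith [abs_nonneg y]

theorem aux_bvp (k : ℝ) (hk : 0 < k) (χ : ℝ → ℝ) (hχ : ∀ n : ℕ, ContDiff ℝ n χ)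
    (hcs : HasCompactSupport χ) (hb : ∀ y, |χ y| ≤ k + 2) :
    ∃ φ : ℝ → ℝ, ContDiff ℝ (⊤ : ℕ∞) φ ∧ φ 1 = 0 ∧
      ∀ s, HasDerivAt (fun s => s * deriv φ s)
        (k * (exp (χ (φ s)) - χ s * exp (-χ (φ s)))) s := by
  let F : ℝ → ℝ → ℝ := fun s y => k * (exp (χ y) - χ s * exp (-χ y))
  have hF : ∀ n : ℕ, ContDiff ℝ n (Function.uncurry F) := fun n => by
    have h1 : ContDiff ℝ n (fun p : ℝ × ℝ => χ p.1) := (hχ n).comp contDiff_fst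
    have h2 : ContDiff ℝ n (fun p : ℝ × ℝ => χ p.2) := (hχ n).comp contDiff_snd
    exact contDiff_const.mul (h2.exp.sub (h1.mul h2.neg.exp))
  obtain ⟨C1, hC1⟩ := ContDiff.lipschitzWith_of_hasCompactSupport (𝕂 := ℝ) (n := (1:ℕ))
    (f := (fun z => exp z - 1) ∘ χ) (hcs.comp_left (by simp))
    ((Real.contDiff_exp.sub contDiff_const).comp (hχ 1)) (by simp)
  obtain ⟨C2, hC2⟩ := ContDiff.lipschitzWith_of_hasCompactSupport (𝕂 := ℝ) (n := (1:ℕ))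
    (f := (fun z => exp (-z) - 1) ∘ χ) (hcs.comp_left (by simp))
    ((contDiff_id.neg.exp.sub contDiff_const).comp (hχ 1)) (by simp)
  have e1 : ∀ y z, |exp (χ y) - exp (χ z)| ≤ C1 * |y - z| := fun y z => by
    simpa [Real.dist_eq] using hC1.dist_le_mul y z
  have e2 : ∀ y z, |exp (-χ y) - exp (-χ z)| ≤ C2 * |y - z| := fun y z => by
    simpa [Real.dist_eq] using hC2.dist_le_mul y z
  set R := k + 2 with hR
  have hR0 : 0 < R := by positivity
  have b1 : ∀ y, exp (χ y) ≤ exp R := fun y => exp_le_exp.2 (abs_le.1 (hb y)).2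
  have b2 : ∀ y, exp (-χ y) ≤ exp R := fun y => exp_le_exp.2 (by linarith [(abs_le.1 (hb y)).1])
  set M := k * (exp R + R * exp R) with hM
  have hFM : ∀ s y, |F s y| ≤ M := fun s y => by
    simp only [F, hM]
    rw [abs_mul, abs_of_pos hk]
    refine mul_le_mul_of_nonneg_left ?_ hk.le
    refine (abs_sub _ _).trans ?_
    rw [abs_mul, abs_of_pos (exp_pos _), abs_of_pos (exp_pos _)]
    exact add_le_add (b1 y) (mul_le_mul (hb s) (b2 y) (exp_pos _).le hR0.le)
  have hFL : ∀ s y z, |F s y - F s z| ≤ k * (C1 + R * C2) * |y - z| := fun s y z => by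
    have : F s y - F s z = k * ((exp (χ y) - exp (χ z)) - χ s * (exp (-χ y) - exp (-χ z))) := by
      simp only [F]; ring
    rw [this, abs_mul, abs_of_pos hk, mul_assoc]
    refine mul_le_mul_of_nonneg_left ?_ hk.le
    refine (abs_sub _ _).trans ?_
    rw [abs_mul, add_mul, mul_assoc R]
    exact add_le_add (e1 y z) (mul_le_mul (hb s) (e2 y z) (abs_nonneg _) hR0.le)
  obtain ⟨Φ, hΦc, hΦ1, hΦ⟩ := aux_ivp F (hF 0).continuous M (k * (C1 + R * C2)) (by positivity)
    hFM hFL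
  have hbd : ∀ a, |Φ a 1 - a| ≤ M := fun a => by
    have h1 : Φ a 1 - a = ∫ t in (0:ℝ)..1, ∫ σ in (0:ℝ)..1, F (t * σ) (Φ a (t * σ)) := by
      rw [hΦ a 1]; ring
    rw [h1]
    have h2 : ∀ t, |∫ σ in (0:ℝ)..1, F (t * σ) (Φ a (t * σ))| ≤ M := fun t => by
      have := intervalIntegral.norm_integral_le_of_norm_le_const (a := 0) (b := 1) (C := M)
        (f := fun σ => F (t * σ) (Φ a (t * σ))) (fun _ _ => hFM _ _)
      simpa using this
    have := intervalIntegral.norm_integral_le_of_norm_le_const (a := 0) (b := 1) (C := M)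
        (f := fun t => ∫ σ in (0:ℝ)..1, F (t * σ) (Φ a (t * σ))) (fun t _ => h2 t)
    simpa using this
  have hM0 : 0 ≤ M := (abs_nonneg _).trans (hFM 0 0)
  obtain ⟨a, -, ha⟩ := intermediate_value_Icc (by linarith : -M ≤ M) hΦ1.continuousOn
    (show (0:ℝ) ∈ Icc (Φ (-M) 1) (Φ M 1) from
      ⟨by linarith [(abs_le.1 (hbd (-M))).2], by linarith [(abs_le.1 (hbd M)).1]⟩)
  obtain ⟨h1, h2⟩ := aux_smooth F hF (Φ a) a (hΦc a) (hΦ a)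
  exact ⟨Φ a, h1, ha, h2⟩

theorem aux_profile (k : ℝ) (hk : 0 < k) :
    ∃ φ : ℝ → ℝ, ContDiff ℝ (⊤ : ℕ∞) φ ∧ φ 1 = 0 ∧
      (∀ s ∈ Icc (0:ℝ) 1, HasDerivAt (fun s => s * deriv φ s)
        (k * (exp (φ s) - s * exp (-φ s))) s) ∧ ∀ s ∈ Ioo (0:ℝ) 1, 0 < deriv φ s := by
  obtain ⟨χ, hχ, hcs, hid, hpos, hneg, hb⟩ := aux_trunc k hk
  obtain ⟨φ, hφ, h1, hode⟩ := aux_bvp k hk χ hχ hcs hb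
  have hids : ∀ s ∈ Icc (0:ℝ) 1, χ s = s := fun s hs =>
    hid s (by rw [abs_of_nonneg hs.1]; linarith [hs.2])
  have hdiff : Differentiable ℝ φ := hφ.differentiable (by simp)
  have hd : ∀ s, HasDerivAt φ (deriv φ s) s := fun s => (hdiff s).hasDerivAt
  have hcont : Continuous φ := hφ.continuous
  set p : ℝ → ℝ := fun s => s * deriv φ s with hp
  have hpd : ∀ s, s ≠ 0 → p s / s = deriv φ s := fun s hs => by
    simp only [hp]; field_simp
  have hp00 : p 0 = 0 := by simp [hp]
  have hpc : Continuous p := continuous_iff_continuousAt.2 fun s => (hode s).continuousAt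
  -- upper bound
  have hle : ∀ s ∈ Icc (0:ℝ) 1, φ s ≤ 0 := by
    obtain ⟨s0, hs0, hmax⟩ := isCompact_Icc.exists_isMaxOn (nonempty_Icc.2 zero_le_one)
      (hcont.continuousOn (s := Icc (0:ℝ) 1))
    have hmax' : ∀ s ∈ Icc (0:ℝ) 1, φ s ≤ φ s0 := hmax
    by_contra hcon
    push Not at hcon
    obtain ⟨t, ht, ht0⟩ := hcon
    have hs0p : 0 < φ s0 := ht0.trans_le (hmax' t ht)
    have hs01 : s0 < 1 := lt_of_le_of_ne hs0.2 (by rintro rfl; linarith)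
    refine aux_max φ p s0 1 _ hs01 hs0.1 hcont.continuousOn (fun s hs => ?_) ?_ (hode s0) ?_
      (fun s hs => hmax' s ⟨hs0.1.trans hs.1, hs.2⟩)
    · rw [hpd s (hs0.1.trans_lt hs.1).ne']
      exact hd s
    · rcases hs0.1.eq_or_lt with h | h
      · rw [← h, hp00]
      · have : IsLocalMax φ s0 := hmax.isLocalMax (Icc_mem_nhds h hs01)
        simp only [hp, this.deriv_eq_zero, mul_zero]
    · rw [hids s0 hs0]
      refine mul_pos hk ?_
      have a1 : 1 ≤ exp (χ (φ s0)) := one_le_exp (hpos _ hs0p.le)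
      have a2 : exp (-χ (φ s0)) ≤ 1 := exp_le_one_iff.2 (by linarith [hpos _ hs0p.le])
      nlinarith [hs0.1, exp_pos (-χ (φ s0))]
  -- lower bound
  have hpk : ∀ s ∈ Icc (0:ℝ) 1, p s ≤ k * s := by
    intro s hs
    have := (convex_Icc (0:ℝ) 1).image_sub_le_mul_sub_of_deriv_le (f := p) (C := k)
      hpc.continuousOn (fun x hx => (hode x).differentiableAt.differentiableWithinAt) ?_ 0
      (left_mem_Icc.2 zero_le_one) s hs hs.1
    · rw [hp00] at this; linarith
    · intro x hx
      rw [interior_Icc] at hx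
      have hx' : x ∈ Icc (0:ℝ) 1 := ⟨hx.1.le, hx.2.le⟩
      rw [(hode x).deriv, hids x hx']
      have a1 : exp (χ (φ x)) ≤ 1 := exp_le_one_iff.2 (hneg _ (hle x hx'))
      have a2 : 0 ≤ x * exp (-χ (φ x)) := mul_nonneg hx'.1 (exp_pos _).le
      nlinarith
  have hge : ∀ s ∈ Icc (0:ℝ) 1, -k ≤ φ s := by
    intro s hs
    have := (convex_Icc (0:ℝ) 1).image_sub_le_mul_sub_of_deriv_le (f := φ) (C := k)
      hcont.continuousOn (fun x hx => (hdiff x).differentiableWithinAt) ?_ s hs 1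
      (right_mem_Icc.2 zero_le_one) hs.2
    · rw [h1] at this; nlinarith [hs.1]
    · intro x hx
      rw [interior_Icc] at hx
      have := hpk x ⟨hx.1.le, hx.2.le⟩
      rw [← hpd x hx.1.ne', div_le_iff₀ hx.1]
      exact this
  have hode' : ∀ s ∈ Icc (0:ℝ) 1, HasDerivAt p (k * (exp (φ s) - s * exp (-φ s))) s := by
    intro s hs
    have h2 := hode s
    rwa [hids s hs, hid (φ s) (abs_le.2 ⟨by linarith [hge s hs], by linarith [hle s hs]⟩)] at h2
  refine ⟨φ, hφ, h1, hode', ?_⟩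
  -- comparison with the logarithm
  set w : ℝ → ℝ := fun s => log s - 2 * φ s with hw
  have hwd : ∀ s, 0 < s → HasDerivAt w ((1 - 2 * p s) / s) s := fun s hs => by
    refine ((hasDerivAt_log hs.ne').sub ((hd s).const_mul 2)).congr_deriv ?_
    rw [sub_div, mul_div_assoc, hpd s hs.ne', one_div]
  have hwle : ∀ s ∈ Ioc (0:ℝ) 1, w s ≤ 0 := by
    set c := exp (-2 * k) with hc
    have hc0 : 0 < c := exp_pos _
    have hc1 : c ≤ 1 := exp_le_one_iff.2 (by linarith)
    have hsmall : ∀ s ∈ Ioc (0:ℝ) c, w s ≤ 0 := fun s hs => by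
      have a1 : log s ≤ -2 * k := (log_le_iff_le_exp hs.1).2 hs.2
      have := hge s ⟨hs.1.le, hs.2.trans hc1⟩
      simp only [hw]; linarith
    have hwc : ContinuousOn w (Icc c 1) := fun s hs =>
      (hwd s (hc0.trans_le hs.1)).continuousAt.continuousWithinAt
    obtain ⟨s0, hs0, hmax⟩ := isCompact_Icc.exists_isMaxOn (nonempty_Icc.2 hc1) hwc
    have hmax' : ∀ s ∈ Icc c 1, w s ≤ w s0 := hmax
    by_contra hcon
    push Not at hcon
    obtain ⟨t, ht, ht0⟩ := hcon
    have htc : c ≤ t := by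
      by_contra h
      exact absurd (hsmall t ⟨ht.1, (not_le.1 h).le⟩) (not_le.2 ht0)
    have hs0p : 0 < w s0 := ht0.trans_le (hmax' t ⟨htc, ht.2⟩)
    have hs01 : s0 < 1 := lt_of_le_of_ne hs0.2 (by
      rintro rfl
      simp [hw, h1] at hs0p)
    have hcs0 : c < s0 := lt_of_le_of_ne hs0.1 (by
      intro h
      exact absurd (hsmall s0 ⟨hc0.trans_le hs0.1, h.ge⟩) (not_le.2 hs0p))
    have hs00 : 0 < s0 := hc0.trans hcs0
    have hs0I : s0 ∈ Icc (0:ℝ) 1 := ⟨hs00.le, hs0.2⟩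
    refine aux_max w (fun s => 1 - 2 * p s) s0 1 _ hs01 hs00.le
      (hwc.mono (Icc_subset_Icc_left hs0.1)) (fun s hs => hwd s (hs00.trans hs.1)) ?_
      (((hode' s0 hs0I).const_mul 2).const_sub 1) ?_
      (fun s hs => hmax' s ⟨hs0.1.trans hs.1, hs.2⟩)
    · have hl : IsLocalMax w s0 := hmax.isLocalMax (Icc_mem_nhds hcs0 hs01)
      have := hl.hasDerivAt_eq_zero (hwd s0 hs00)
      rcases div_eq_zero_iff.1 this with h | h
      · exact h
      · exact absurd h hs00.ne'
    · have a1 : exp (φ s0) < s0 * exp (-φ s0) := by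
        have a2 : s0 * exp (-φ s0) = exp (log s0 + -φ s0) := by
          rw [exp_add, exp_log hs00]
        rw [a2, exp_lt_exp]
        simp only [hw] at hs0p
        linarith
      nlinarith
  have hFnn : ∀ s ∈ Icc (0:ℝ) 1, 0 ≤ k * (exp (φ s) - s * exp (-φ s)) := fun s hs => by
    refine mul_nonneg hk.le ?_
    rcases hs.1.eq_or_lt with h | h
    · rw [← h]; simp [(exp_pos _).le]
    · have a2 : s * exp (-φ s) = exp (log s + -φ s) := by
        rw [exp_add, exp_log h]
      rw [a2, sub_nonneg, exp_le_exp]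
      have := hwle s ⟨h, hs.2⟩
      simp only [hw] at this
      linarith
  have hmono : MonotoneOn p (Icc 0 1) := by
    refine monotoneOn_of_deriv_nonneg (convex_Icc _ _) hpc.continuousOn
      (fun x hx => (hode x).differentiableAt.differentiableWithinAt) fun x hx => ?_
    rw [interior_Icc] at hx
    rw [(hode' x ⟨hx.1.le, hx.2.le⟩).deriv]
    exact hFnn x ⟨hx.1.le, hx.2.le⟩
  intro s hs
  rw [← hpd s hs.1.ne']
  refine div_pos ?_ hs.1
  by_contra hcon
  have hps : p s ≤ 0 := not_lt.1 hcon
  -- then `p ≤ 0` on `[0, s]`, so `φ` is nonincreasing there, contradicting `p' (0) > 0`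
  have hple : ∀ t ∈ Icc (0:ℝ) s, p t ≤ 0 := fun t ht =>
    (hmono ⟨ht.1, ht.2.trans hs.2.le⟩ ⟨hs.1.le, hs.2.le⟩ ht.2).trans hps
  refine aux_max φ p 0 s _ hs.1 le_rfl hcont.continuousOn (fun t ht => ?_) hp00
    (hode' 0 ⟨le_rfl, zero_le_one⟩) (by simpa using mul_pos hk (exp_pos _)) (fun t ht => ?_)
  · rw [hpd t ht.1.ne']; exact hd t
  · refine antitoneOn_of_deriv_nonpos (convex_Icc 0 s) hcont.continuousOn
      (fun x hx => (hdiff x).differentiableWithinAt) (fun x hx => ?_)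
      (left_mem_Icc.2 hs.1.le) ht ht.1
    rw [interior_Icc] at hx
    rw [← hpd x hx.1.ne']
    exact div_nonpos_of_nonpos_of_nonneg (hple x ⟨hx.1.le, hx.2.le⟩) hx.1.le

theorem aux_second (ψ : ℝ → ℝ) (hmax : IsLocalMax ψ 0) (hc : ContinuousAt ψ 0) :
    deriv (deriv ψ) 0 ≤ 0 := by
  by_contra h
  have hmin := isLocalMin_of_deriv_deriv_pos (not_le.1 h) hmax.deriv_eq_zero hc
  have he : ψ =ᶠ[nhds 0] fun _ => ψ 0 := by
    filter_upwards [hmax, hmin] with x h1 h2 using le_antisymm h1 h2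
  have h2 := he.deriv.deriv_eq
  simp only [deriv_const'] at h2
  rw [h2] at h
  simp at h

theorem aux_line (u : EuclideanSpace ℝ (Fin 2) → ℝ) (x e : EuclideanSpace ℝ (Fin 2))
    (hu : ContDiffAt ℝ 2 u x) :
    deriv (deriv (fun t : ℝ => u (x + t • e))) 0 = fderiv ℝ (fun y => fderiv ℝ u y e) x e := by
  have hline : ∀ t : ℝ, HasDerivAt (fun t : ℝ => x + t • e) e t := fun t => by
    simpa using ((hasDerivAt_id t).smul_const e).const_add x
  have ht : Filter.Tendsto (fun t : ℝ => x + t • e) (nhds 0) (nhds x) := by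
    have := (hline 0).continuousAt.tendsto
    simpa using this
  have hev : ∀ᶠ y in nhds x, DifferentiableAt ℝ u y := by
    filter_upwards [hu.eventually (by simp)] with y hy
    exact hy.differentiableAt (by simp)
  have h1 : deriv (fun t : ℝ => u (x + t • e)) =ᶠ[nhds 0]
      fun t => fderiv ℝ u (x + t • e) e := by
    filter_upwards [ht.eventually hev] with t hy
    exact (hy.hasFDerivAt.comp_hasDerivAt t (hline t)).deriv
  rw [h1.deriv_eq]
  have h2 : DifferentiableAt ℝ (fderiv ℝ u) x :=
    (hu.fderiv_right (m := 1) (by norm_num)).differentiableAt (by simp)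
  have h3 : DifferentiableAt ℝ (fun y => fderiv ℝ u y e) x :=
    h2.clm_apply (differentiableAt_const e)
  have h4 : HasFDerivAt (fun y => fderiv ℝ u y e) (fderiv ℝ (fun y => fderiv ℝ u y e) x)
      (x + (0:ℝ) • e) := by
    simpa using h3.hasFDerivAt
  exact (h4.comp_hasDerivAt (0:ℝ) (hline 0)).deriv

theorem aux_lap_sub (u v : EuclideanSpace ℝ (Fin 2) → ℝ) (x : EuclideanSpace ℝ (Fin 2))
    (hu : ContDiffAt ℝ 2 u x) (hv : ContDiffAt ℝ 2 v x) :
    laplacian2 (fun y => u y - v y) x = laplacian2 u x - laplacian2 v x := by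
  unfold laplacian2
  rw [← Finset.sum_sub_distrib]
  refine Finset.sum_congr rfl fun i _ => ?_
  have hev : ∀ w : EuclideanSpace ℝ (Fin 2) → ℝ, ContDiffAt ℝ 2 w x →
      ∀ᶠ y in nhds x, DifferentiableAt ℝ w y := fun w hw => by
    filter_upwards [hw.eventually (by simp)] with y hy
    exact hy.differentiableAt (by simp)
  have hdd : ∀ w : EuclideanSpace ℝ (Fin 2) → ℝ, ContDiffAt ℝ 2 w x → ∀ e,
      DifferentiableAt ℝ (fun y => fderiv ℝ w y e) x := fun w hw e =>
    ((hw.fderiv_right (m := 1) (by norm_num)).differentiableAt (by simp)).clm_apply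
      (differentiableAt_const e)
  have h1 : (fun y => fderiv ℝ (fun y => u y - v y) y (EuclideanSpace.single i 1)) =ᶠ[nhds x]
      fun y => fderiv ℝ u y (EuclideanSpace.single i 1) -
        fderiv ℝ v y (EuclideanSpace.single i 1) := by
    filter_upwards [hev u hu, hev v hv] with y h1 h2
    rw [fderiv_fun_sub h1 h2]
    rfl
  rw [h1.fderiv_eq, fderiv_fun_sub (hdd u hu _) (hdd v hv _)]
  rfl

theorem aux_le (ε : ℝ) (hε : 0 < ε) (u v : EuclideanSpace ℝ (Fin 2) → ℝ)
    (hu : IsDirichletSol ε u) (hv : IsDirichletSol ε v) :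
    ∀ x ∈ closedBall (0 : EuclideanSpace ℝ (Fin 2)) 1, u x ≤ v x := by
  obtain ⟨uc, us, ue, ub⟩ := hu
  obtain ⟨vc, vs, ve, vb⟩ := hv
  obtain ⟨x, hx, hmax⟩ := (isCompact_closedBall (0 : EuclideanSpace ℝ (Fin 2)) 1).exists_isMaxOn
    (nonempty_closedBall.2 zero_le_one) (uc.sub vc)
  have hmax' : ∀ y ∈ closedBall (0 : EuclideanSpace ℝ (Fin 2)) 1, u y - v y ≤ u x - v x := hmax
  intro y hy
  by_contra hcon
  have hpos : 0 < u x - v x := by have := hmax' y hy; linarith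
  have hxb : x ∈ ball (0 : EuclideanSpace ℝ (Fin 2)) 1 := by
    rcases (mem_closedBall.1 hx).lt_or_eq with h | h
    · exact h
    · rw [ub x h, vb x h] at hpos
      simp at hpos
  have hnb := isOpen_ball.mem_nhds hxb
  have hu2 : ContDiffAt ℝ 2 u x := contDiffAt_infty.1 (us.contDiffAt hnb) 2
  have hv2 : ContDiffAt ℝ 2 v x := contDiffAt_infty.1 (vs.contDiffAt hnb) 2
  have hl := aux_lap_sub u v x hu2 hv2
  have hle : laplacian2 (fun y => u y - v y) x ≤ 0 := by
    refine Finset.sum_nonpos fun i _ => ?_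
    rw [← aux_line _ _ _ (hu2.sub hv2)]
    have hlm : IsLocalMax (fun y => u y - v y) x :=
      hmax.isLocalMax (Filter.mem_of_superset hnb ball_subset_closedBall)
    have hlc : ContinuousAt (fun t : ℝ => x + t • (EuclideanSpace.single i (1:ℝ))) 0 := by fun_prop
    have hx0 : x + (0:ℝ) • (EuclideanSpace.single i (1:ℝ)) = x := by simp
    refine aux_second _ ?_ ?_
    · have := hlc.tendsto
      rw [hx0] at this
      have h2 := this.eventually hlm
      simpa [IsLocalMax, IsMaxFilter] using h2
    · have h3 := (hu2.sub hv2).continuousAt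
      rw [← hx0] at h3
      exact ContinuousAt.comp (f := fun t : ℝ => x + t • (EuclideanSpace.single i (1:ℝ))) h3 hlc
  rw [hl, ue x hxb, ve x hxb] at hle
  have hk : 0 < (ε ^ 2)⁻¹ := by positivity
  have e1 : exp (v x) < exp (u x) := exp_lt_exp.2 (by linarith)
  have e2 : exp (-u x) < exp (-v x) := exp_lt_exp.2 (by linarith)
  have e3 : ‖x‖ ^ 2 * exp (-u x) ≤ ‖x‖ ^ 2 * exp (-v x) :=
    mul_le_mul_of_nonneg_left e2.le (by positivity)
  rw [← mul_sub] at hle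
  have : 0 < exp (u x) - ‖x‖ ^ 2 * exp (-u x) - (exp (v x) - ‖x‖ ^ 2 * exp (-v x)) := by linarith
  exact absurd hle (not_le.2 (mul_pos hk this))

theorem aux_lap_radial (φ : ℝ → ℝ) (hφ : ContDiff ℝ (⊤ : ℕ∞) φ) (x : EuclideanSpace ℝ (Fin 2)) :
    laplacian2 (fun y => φ (‖y‖ ^ 2)) x =
      4 * (‖x‖ ^ 2 * deriv (deriv φ) (‖x‖ ^ 2) + deriv φ (‖x‖ ^ 2)) := by
  have hd : Differentiable ℝ φ := hφ.differentiable (by simp)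
  have hdd : Differentiable ℝ (deriv φ) :=
    ((contDiff_infty_iff_deriv.1 hφ).2).differentiable (by simp)
  have hcomp : ∀ f : ℝ → ℝ, Differentiable ℝ f → ∀ y : EuclideanSpace ℝ (Fin 2),
      HasFDerivAt (fun y : EuclideanSpace ℝ (Fin 2) => f (‖y‖ ^ 2))
        (deriv f (‖y‖ ^ 2) • (2 • innerSL ℝ y)) y := fun f hf y =>
    (hf _).hasDerivAt.comp_hasFDerivAt y (hasStrictFDerivAt_norm_sq y).hasFDerivAt
  have hin : ∀ (y : EuclideanSpace ℝ (Fin 2)) (i : Fin 2),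
      inner ℝ y (EuclideanSpace.single i (1:ℝ)) = y i := fun y i => by
    simp [EuclideanSpace.inner_single_right]
  have h1 : ∀ i : Fin 2, (fun y => fderiv ℝ (fun y : EuclideanSpace ℝ (Fin 2) => φ (‖y‖ ^ 2)) y
      (EuclideanSpace.single i 1)) = fun y => deriv φ (‖y‖ ^ 2) * (2 * y i) := fun i => by
    funext y
    rw [(hcomp φ hd y).fderiv]
    simp [hin]
  have h2 : ∀ i : Fin 2, fderiv ℝ (fun y : EuclideanSpace ℝ (Fin 2) =>
      deriv φ (‖y‖ ^ 2) * (2 * y i)) x (EuclideanSpace.single i 1) =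
      4 * (x i) ^ 2 * deriv (deriv φ) (‖x‖ ^ 2) + 2 * deriv φ (‖x‖ ^ 2) := fun i => by
    have hp : HasFDerivAt (fun y : EuclideanSpace ℝ (Fin 2) => 2 * y i)
        ((2:ℝ) • (EuclideanSpace.proj i : EuclideanSpace ℝ (Fin 2) →L[ℝ] ℝ)) x :=
      ((EuclideanSpace.proj i : EuclideanSpace ℝ (Fin 2) →L[ℝ] ℝ).hasFDerivAt).const_mul 2
    rw [((hcomp _ hdd x).fun_mul hp).fderiv]
    simp [hin]
    ring
  unfold laplacian2
  simp only [h1, h2, Fin.sum_univ_two]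
  have h3 : ‖x‖ ^ 2 = x 0 ^ 2 + x 1 ^ 2 := by
    rw [EuclideanSpace.norm_sq_eq]; simp [Fin.sum_univ_two]
  generalize deriv (deriv φ) (‖x‖ ^ 2) = A
  generalize deriv φ (‖x‖ ^ 2) = B
  rw [h3]; ring

theorem aux_exists (ε : ℝ) (hε : 0 < ε) : ∃ φ : ℝ → ℝ,
    IsDirichletSol ε (fun x => φ (‖x‖ ^ 2)) ∧ Differentiable ℝ φ ∧
    ∀ s ∈ Ioo (0:ℝ) 1, 0 < deriv φ s := by
  obtain ⟨φ, hφ, h1, hode, hpos⟩ := aux_profile ((ε ^ 2)⁻¹ / 4) (by positivity)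
  have hd : Differentiable ℝ φ := hφ.differentiable (by simp)
  have hs : ContDiff ℝ (⊤ : ℕ∞) (fun x : EuclideanSpace ℝ (Fin 2) => φ (‖x‖ ^ 2)) :=
    hφ.comp (contDiff_norm_sq ℝ)
  refine ⟨φ, ⟨hs.continuous.continuousOn, hs.contDiffOn, fun x hx => ?_, fun x hx => ?_⟩, hd, hpos⟩
  · rw [aux_lap_radial φ hφ]
    have hx1 : ‖x‖ < 1 := by simpa using hx
    have hx2 : ‖x‖ ^ 2 ∈ Icc (0:ℝ) 1 := ⟨by positivity, by nlinarith [norm_nonneg x]⟩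
    have hdd : Differentiable ℝ (deriv φ) :=
      ((contDiff_infty_iff_deriv.1 hφ).2).differentiable (by simp)
    have h2 := (hasDerivAt_id (‖x‖ ^ 2)).mul (hdd (‖x‖ ^ 2)).hasDerivAt
    have h3 := h2.unique (hode _ hx2)
    simp only [id, one_mul] at h3
    rw [add_comm (‖x‖ ^ 2 * _), h3]
    ring
  · have : ‖x‖ = 1 := by simpa using hx
    simp [this, h1]

/-- for every `ε > 0` the Dirichlet problem has exactly one solution,
and this solution is radially symmetric with positive radial derivative for `0 < |x| < 1`. -/
theorem stmt_0 (ε : ℝ) (hε : 0 < ε) :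
    (∃ u, IsDirichletSol ε u) ∧
    (∀ u v, IsDirichletSol ε u → IsDirichletSol ε v →
      ∀ x ∈ closedBall (0 : EuclideanSpace ℝ (Fin 2)) 1, u x = v x) ∧
    (∀ u, IsDirichletSol ε u → ∃ g : ℝ → ℝ,
      (∀ x ∈ closedBall (0 : EuclideanSpace ℝ (Fin 2)) 1, u x = g ‖x‖) ∧
      (∀ r ∈ Ioo (0 : ℝ) 1, 0 < deriv g r)) := by
  obtain ⟨φ, hsol, hd, hpos⟩ := aux_exists ε hε
  have huniq : ∀ u v, IsDirichletSol ε u → IsDirichletSol ε v →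
      ∀ x ∈ closedBall (0 : EuclideanSpace ℝ (Fin 2)) 1, u x = v x := fun u v hu hv x hx =>
    le_antisymm (aux_le ε hε u v hu hv x hx) (aux_le ε hε v u hv hu x hx)
  refine ⟨⟨_, hsol⟩, huniq, fun u hu => ⟨fun r => φ (r ^ 2), fun x hx => huniq _ _ hu hsol x hx,
    fun r hr => ?_⟩⟩
  have h1 : HasDerivAt (fun r : ℝ => φ (r ^ 2)) (deriv φ (r ^ 2) * (2 * r)) r := by
    have h2 : HasDerivAt (fun r : ℝ => r ^ 2) (2 * r) r := by simpa using hasDerivAt_pow 2 r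
    exact (hd (r ^ 2)).hasDerivAt.comp r h2
  rw [h1.deriv]
  have h3 : r ^ 2 ∈ Ioo (0:ℝ) 1 := ⟨pow_pos hr.1 2, by nlinarith [hr.1, hr.2]⟩
  have := hpos _ h3
  have := hr.1
  positivity
end

section
/- Fix r₀ > 0. For every ε > 0 the Dirichlet problem Δu = 4π²·ε⁻²·(exp(2u) − r²·exp(−2u)) in B_{2r₀}(0) ⊂ ℝ² (where r = |x|), with boundary value u = (1/2)·ln(2r₀) on ∂B_{2r₀}(0), has a unique smooth radially symmetric solution u_ε, and it satisfies: (1) setting v_ε(r) = u_ε(r) − (1/2)·ln r for r ∈ [r₀, 2r₀], for any integers l > k ≥ 0 there is a constant C = C(r₀, l, k) such that for all 0 < ε < 1/8, sup_{r ∈ [r₀, 2r₀]} |v_ε^{(k)}(r)| ≤ C·ε^{l−k}; and (2) for any integer k ≥ 0 and any 0 < R ≤ 2r₀ there is a constant C = C(r₀, R, k) such that for all 0 < ε < 1/8, the C^k norm of u_ε on B_R(0) (the supremum over B_R(0) of all partial derivatives of order at most k) is at most C·ε^{−k−2}. -/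
open Real Set Metric

/-- `u` is a solution of the Dirichlet problem
`Δu = 4π²·ε⁻²·(exp(2u) − r²·exp(−2u))` in `B_{2r₀}(0)`, `u = (1/2)·ln(2r₀)` on the
boundary: continuous on the closed disc, smooth on the open disc, satisfying the equation
pointwise and the boundary condition. -/
def IsDirichletSolR (r₀ ε : ℝ) (u : EuclideanSpace ℝ (Fin 2) → ℝ) : Prop :=
  ContinuousOn u (closedBall 0 (2 * r₀)) ∧
  ContDiffOn ℝ (⊤ : ℕ∞) u (ball 0 (2 * r₀)) ∧
  (∀ x ∈ ball (0 : EuclideanSpace ℝ (Fin 2)) (2 * r₀),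
    laplacian2 u x =
      4 * π ^ 2 * (ε ^ 2)⁻¹ * (Real.exp (2 * u x) - ‖x‖ ^ 2 * Real.exp (-(2 * u x)))) ∧
  (∀ x ∈ sphere (0 : EuclideanSpace ℝ (Fin 2)) (2 * r₀), u x = (1/2) * Real.log (2 * r₀))

/-- `u` is radially symmetric on the closed disc of radius `2r₀`, with radial profile `g`. -/
def IsRadialR (r₀ : ℝ) (u : EuclideanSpace ℝ (Fin 2) → ℝ) (g : ℝ → ℝ) : Prop :=
  ∀ x ∈ closedBall (0 : EuclideanSpace ℝ (Fin 2)) (2 * r₀), u x = g ‖x‖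

lemma aux_int_pos (φ : ℝ → ℝ) (c μ t : ℝ) (hμ : 0 < μ) (hc : 0 ≤ c) (ht : 0 ≤ t)
    (h : ∀ s, |φ s| ≤ c * Real.exp (μ * |s|)) : |∫ s in (0:ℝ)..t, φ s| ≤ c * Real.exp (μ * |t|) / μ := by
  have h1 : ‖∫ s in (0:ℝ)..t, φ s‖ ≤ ∫ s in (0:ℝ)..t, c * Real.exp (μ * s) := by
    apply intervalIntegral.norm_integral_le_of_norm_le ht
    · refine Filter.Eventually.of_forall fun s hs => ?_
      have := h s
      rwa [abs_of_pos hs.1] at this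
    · apply Continuous.intervalIntegrable; fun_prop
  have h2 : ∫ s in (0:ℝ)..t, c * Real.exp (μ * s) = c * Real.exp (μ * t) / μ - c / μ := by
    have : ∀ s ∈ uIcc 0 t, HasDerivAt (fun s => c * Real.exp (μ * s) / μ) (c * Real.exp (μ * s)) s := by
      intro s _
      have h3 : HasDerivAt (fun s : ℝ => μ * s) (μ * 1) s := (hasDerivAt_id s).const_mul μ
      have h4 := (h3.exp.const_mul c).div_const μ
      refine h4.congr_deriv ?_
      field_simp
    rw [intervalIntegral.integral_eq_sub_of_hasDerivAt this]
    · simp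
    · apply Continuous.intervalIntegrable; fun_prop
  rw [abs_of_nonneg ht]
  rw [h2] at h1
  have : 0 ≤ c / μ := by positivity
  rw [Real.norm_eq_abs] at h1
  linarith

lemma aux_int (φ : ℝ → ℝ) (c μ t : ℝ) (hμ : 0 < μ) (hc : 0 ≤ c)
    (h : ∀ s, |φ s| ≤ c * Real.exp (μ * |s|)) : |∫ s in (0:ℝ)..t, φ s| ≤ c * Real.exp (μ * |t|) / μ := by
  rcases le_total 0 t with ht | ht
  · exact aux_int_pos φ c μ t hμ hc ht h
  · have h1 := aux_int_pos (fun s => φ (-s)) c μ (-t) hμ hc (by linarith)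
      (fun s => by simpa using h (-s))
    rw [intervalIntegral.integral_comp_neg] at h1
    rw [intervalIntegral.integral_symm, abs_neg]
    simpa using h1

noncomputable def QQ (G : ℝ → ℝ → ℝ) (h : ℝ → ℝ) (s : ℝ) : ℝ :=
  ∫ τ in (0:ℝ)..1, G (s * τ) (h (s * τ))

lemma QQ_cont (G : ℝ → ℝ → ℝ) (hG : Continuous (Function.uncurry G)) (h : ℝ → ℝ)
    (hh : Continuous h) : Continuous (QQ G h) := by
  unfold QQ
  apply intervalIntegral.continuous_parametric_intervalIntegral_of_continuous' 
  have : (Function.uncurry fun (s τ : ℝ) => G (s * τ) (h (s * τ))) =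
    fun p : ℝ × ℝ => Function.uncurry G (p.1 * p.2, h (p.1 * p.2)) := by
    ext p; rfl
  rw [this]
  fun_prop

lemma QQ_diff (G : ℝ → ℝ → ℝ) (hG : Continuous (Function.uncurry G)) (L : ℝ) (hL : 0 < L)
    (hLip : ∀ t y z, |G t y - G t z| ≤ L * |y - z|) (h k : ℝ → ℝ) (hh : Continuous h)
    (hk : Continuous k) (s c : ℝ) (hc : ∀ σ, |σ| ≤ |s| → |h σ - k σ| ≤ c) :
    |QQ G h s - QQ G k s| ≤ L * c := by
  unfold QQ
  have c1 : ∀ h : ℝ → ℝ, Continuous h → Continuous (fun τ => G (s * τ) (h (s * τ))) := by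
    intro h hh
    have : (fun τ => G (s * τ) (h (s * τ))) =
      fun p : ℝ => Function.uncurry G (s * p, h (s * p)) := by
      ext p; rfl
    rw [this]
    fun_prop
  rw [← intervalIntegral.integral_sub ((c1 h hh).intervalIntegrable _ _)
    ((c1 k hk).intervalIntegrable _ _)]
  have := intervalIntegral.norm_integral_le_of_norm_le_const (a := (0:ℝ)) (b := 1) (C := L * c)
    (f := fun τ => G (s * τ) (h (s * τ)) - G (s * τ) (k (s * τ))) ?_
  · simpa using this
  · intro τ hτ
    rw [uIoc_of_le zero_le_one] at hτ
    refine (hLip _ _ _).trans ?_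
    gcongr
    apply hc
    rw [abs_mul, abs_of_pos hτ.1]
    have := abs_nonneg s
    nlinarith [hτ.2]

lemma QQ_bound (G : ℝ → ℝ → ℝ) (M : ℝ) (hM : ∀ t y, |G t y| ≤ M) (h : ℝ → ℝ) (s : ℝ) :
    |QQ G h s| ≤ M := by
  unfold QQ
  have := intervalIntegral.norm_integral_le_of_norm_le_const (a := (0:ℝ)) (b := 1) (C := M)
    (f := fun τ => G (s * τ) (h (s * τ))) (fun τ _ => hM _ _)
  simpa using this

lemma volterra (G : ℝ → ℝ → ℝ) (hG : Continuous (Function.uncurry G)) (M : ℝ)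
    (hM : ∀ t y, |G t y| ≤ M) (L : ℝ) (hL : 0 < L)
    (hLip : ∀ t y z, |G t y - G t z| ≤ L * |y - z|) :
    ∃ H : ℝ → ℝ → ℝ, (∀ a, Continuous (H a)) ∧
      (∀ a t, H a t = a + ∫ s in (0:ℝ)..t, QQ G (H a) s) ∧ (∀ T, Continuous (fun a => H a T)) := by
  have hM0 : 0 ≤ M := (abs_nonneg _).trans (hM 0 0)
  set μ := 2 * L with hμ
  have hμ0 : 0 < μ := by positivity
  let E : (ℝ → ℝ) → ℝ → ℝ := fun k t => Real.exp (μ * |t|) * k t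
  have hE : ∀ k, Continuous k → Continuous (E k) := fun k hk => by
    change Continuous (fun t => Real.exp (μ * |t|) * k t)
    fun_prop
  let S0 : ℝ → (ℝ → ℝ) → ℝ → ℝ := fun a k t =>
    Real.exp (-(μ * |t|)) * (a + ∫ s in (0:ℝ)..t, QQ G (E k) s)
  have hS0c : ∀ a k, Continuous k → Continuous (S0 a k) := fun a k hk => by
    have h1 := QQ_cont G hG _ (hE k hk)
    have h2 : Continuous (fun t => ∫ s in (0:ℝ)..t, QQ G (E k) s) :=
      intervalIntegral.continuous_primitive (fun a b => h1.intervalIntegrable a b) 0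
    change Continuous (fun t => Real.exp (-(μ * |t|)) * (a + ∫ s in (0:ℝ)..t, QQ G (E k) s))
    fun_prop
  have hexp : ∀ t : ℝ, Real.exp (-(μ * |t|)) ≤ 1 := fun t => by
    rw [Real.exp_le_one_iff]; have := abs_nonneg t; nlinarith
  have hS0b : ∀ a k t, |S0 a k t| ≤ |a| + M / μ := fun a k t => by
    have h1 := aux_int (QQ G (E k)) M μ t hμ0 hM0 (fun s => by
      refine (QQ_bound G M hM _ s).trans ?_
      have : 1 ≤ Real.exp (μ * |s|) := Real.one_le_exp (by positivity)
      nlinarith)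
    change |Real.exp (-(μ * |t|)) * (a + ∫ s in (0:ℝ)..t, QQ G (E k) s)| ≤ _
    rw [abs_mul, abs_of_pos (Real.exp_pos _)]
    have h2 : |a + ∫ s in (0:ℝ)..t, QQ G (E k) s| ≤ |a| + M * Real.exp (μ * |t|) / μ :=
      (abs_add_le _ _).trans (by linarith)
    calc _ ≤ Real.exp (-(μ * |t|)) * (|a| + M * Real.exp (μ * |t|) / μ) := by gcongr
      _ = Real.exp (-(μ * |t|)) * |a| + M / μ := by
        rw [Real.exp_neg]; field_simp
      _ ≤ _ := by have := hexp t; have := abs_nonneg a; nlinarith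
  let S : ℝ → BoundedContinuousFunction ℝ ℝ → BoundedContinuousFunction ℝ ℝ := fun a k =>
    BoundedContinuousFunction.ofNormedAddCommGroup (S0 a k) (hS0c a k k.continuous) (|a| + M / μ)
      (fun t => by rw [Real.norm_eq_abs]; exact hS0b a k t)
  have hSd : ∀ a a' k k', dist (S a k) (S a' k') ≤ |a - a'| + 1/2 * dist k k' := by
    intro a a' k k'
    rw [BoundedContinuousFunction.dist_le (by positivity)]
    intro t
    change dist (S0 a k t) (S0 a' k' t) ≤ _
    rw [Real.dist_eq]
    have e1 : S0 a k t - S0 a' k' t = Real.exp (-(μ * |t|)) * ((a - a') +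
        ∫ s in (0:ℝ)..t, (QQ G (E k) s - QQ G (E k') s)) := by
      rw [intervalIntegral.integral_sub
        ((QQ_cont G hG _ (hE k k.continuous)).intervalIntegrable _ _)
        ((QQ_cont G hG _ (hE k' k'.continuous)).intervalIntegrable _ _)]
      change Real.exp (-(μ * |t|)) * (a + ∫ s in (0:ℝ)..t, QQ G (E k) s) -
        Real.exp (-(μ * |t|)) * (a' + ∫ s in (0:ℝ)..t, QQ G (E k') s) = _
      ring
    have h1 := aux_int (fun s => QQ G (E k) s - QQ G (E k') s) (L * dist k k') μ t hμ0
      (by positivity) (fun s => by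
        have := QQ_diff G hG L hL hLip (E k) (E k') (hE k k.continuous) (hE k' k'.continuous) s
          (Real.exp (μ * |s|) * dist k k') (fun σ hσ => by
            change |Real.exp (μ * |σ|) * k σ - Real.exp (μ * |σ|) * k' σ| ≤ _
            rw [← mul_sub, abs_mul, abs_of_pos (Real.exp_pos _)]
            have := BoundedContinuousFunction.dist_coe_le_dist (f := k) (g := k') σ
            rw [Real.dist_eq] at this
            gcongr)
        linarith)
    rw [e1, abs_mul, abs_of_pos (Real.exp_pos _)]
    have h2 := (abs_add_le (a - a') (∫ s in (0:ℝ)..t, (QQ G (E k) s - QQ G (E k') s)))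
    calc _ ≤ Real.exp (-(μ * |t|)) * (|a - a'| + L * dist k k' * Real.exp (μ * |t|) / μ) := by
          gcongr; linarith
      _ = Real.exp (-(μ * |t|)) * |a - a'| + 1/2 * dist k k' := by
        rw [Real.exp_neg, hμ]; field_simp
      _ ≤ _ := by have := hexp t; have := abs_nonneg (a - a'); nlinarith
  have hcon : ∀ a, ContractingWith (1/2 : NNReal) (S a) := fun a => by
    refine ⟨by rw [← NNReal.coe_lt_coe]; push_cast; norm_num, LipschitzWith.of_dist_le_mul fun k k' => ?_⟩
    have := hSd a a k k'
    simpa using this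
  let F : ℝ → BoundedContinuousFunction ℝ ℝ := fun a => ContractingWith.fixedPoint (S a) (hcon a)
  have hF : ∀ a, S a (F a) = F a := fun a => (hcon a).fixedPoint_isFixedPt
  have hFd : ∀ a a', dist (F a) (F a') ≤ 2 * |a - a'| := fun a a' => by
    have := hSd a a' (F a) (F a')
    rw [hF, hF] at this
    linarith
  refine ⟨fun a => E (F a), fun a => hE _ (F a).continuous, fun a t => ?_, fun T => ?_⟩
  · have h1 : F a t = S0 a (F a) t := by
      conv_lhs => rw [← hF a]
      rfl
    change Real.exp (μ * |t|) * F a t = _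
    rw [h1]
    change Real.exp (μ * |t|) * (Real.exp (-(μ * |t|)) * (a + ∫ s in (0:ℝ)..t, QQ G (E (F a)) s)) = _
    rw [← mul_assoc, ← Real.exp_add]; simp
  · change Continuous (fun a => Real.exp (μ * |T|) * F a T)
    refine continuous_const.mul ?_
    have : Continuous F := by
      have : LipschitzWith 2 F := LipschitzWith.of_dist_le_mul fun a a' => by
        rw [Real.dist_eq]; exact_mod_cast hFd a a'
      exact this.continuous
    exact (BoundedContinuousFunction.lipschitz_eval_const T).continuous.comp this
lemma maxp (α β : ℝ) (hα : 0 ≤ α) (hαβ : α < β) (φ φ' P' : ℝ → ℝ)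
    (h1 : ∀ t ∈ Icc α β, HasDerivAt φ (φ' t) t)
    (h2 : ∀ t ∈ Icc α β, HasDerivAt (fun t => t * φ' t) (P' t) t)
    (h3 : ∀ t ∈ Icc α β, φ t < 0 → P' t < 0)
    (h4 : α = 0 ∨ 0 ≤ φ α) (h5 : 0 ≤ φ β) : ∀ t ∈ Icc α β, 0 ≤ φ t := by
  have hc : ContinuousOn φ (Icc α β) := fun t ht => (h1 t ht).continuousAt.continuousWithinAt
  obtain ⟨m, hm, hmin⟩ := isCompact_Icc.exists_isMinOn (nonempty_Icc.2 hαβ.le) hc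
  by_contra hcon
  push Not at hcon
  obtain ⟨t₀, ht₀, hneg⟩ := hcon
  have hm0 : φ m < 0 := lt_of_le_of_lt (hmin ht₀) hneg
  have hmβ : m < β := lt_of_le_of_ne hm.2 (by rintro rfl; linarith)
  have hP0 : m * φ' m = 0 := by
    rcases eq_or_lt_of_le hm.1 with h | h
    · rcases h4 with h4 | h4
      · rw [← h, h4]; simp
      · rw [← h] at hm0; linarith
    · have : IsLocalMin φ m := hmin.isLocalMin (Icc_mem_nhds h hmβ)
      rw [this.hasDerivAt_eq_zero (h1 m hm)]; simp
  obtain ⟨δ, hδ, hδ'⟩ : ∃ δ > 0, ∀ t, |t - m| < δ → φ t < 0 := by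
    have := (h1 m hm).continuousAt.eventually (gt_mem_nhds hm0)
    obtain ⟨δ, hδ, h⟩ := Metric.eventually_nhds_iff.1 this
    exact ⟨δ, hδ, fun t ht => h (by rwa [Real.dist_eq])⟩
  set b := min β (m + δ / 2) with hb
  have hmb : m < b := lt_min hmβ (by linarith)
  have hbβ : b ≤ β := min_le_left _ _
  have hbδ : b ≤ m + δ / 2 := min_le_right _ _
  have hsub : ∀ t ∈ Icc m b, t ∈ Icc α β := fun t ht => ⟨hm.1.trans ht.1, ht.2.trans hbβ⟩
  have hanti : StrictAntiOn (fun t => t * φ' t) (Icc m b) := by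
    apply strictAntiOn_of_deriv_neg (convex_Icc _ _)
    · exact fun t ht => (h2 t (hsub t ht)).continuousAt.continuousWithinAt
    · intro t ht
      rw [interior_Icc] at ht
      have ht' := hsub t ⟨ht.1.le, ht.2.le⟩
      rw [(h2 t ht').deriv]
      apply h3 t ht' (hδ' t _)
      rw [abs_lt]; constructor <;> linarith [ht.1, ht.2]
  have hanti2 : StrictAntiOn φ (Icc m b) := by
    apply strictAntiOn_of_deriv_neg (convex_Icc _ _)
    · exact fun t ht => (h1 t (hsub t ht)).continuousAt.continuousWithinAt
    · intro t ht
      rw [interior_Icc] at ht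
      have ht' := hsub t ⟨ht.1.le, ht.2.le⟩
      rw [(h1 t ht').deriv]
      have h6 := hanti (left_mem_Icc.2 hmb.le) ⟨ht.1.le, ht.2.le⟩ ht.1
      simp only [hP0] at h6
      have : 0 < t := lt_of_le_of_lt (hα.trans hm.1) ht.1
      by_contra h7
      push Not at h7
      nlinarith
  have h8 := hanti2 (left_mem_Icc.2 hmb.le) (right_mem_Icc.2 hmb.le) hmb
  have h9 : φ m ≤ φ b := hmin (hsub b (right_mem_Icc.2 hmb.le))
  linarith

/-- averages are smooth -/
lemma avg_cont (a b : ℝ) (ha : a < 0) (hb : 0 < b) (j : ℕ) (f : ℝ → ℝ)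
    (hf : ContinuousOn f (Ioo a b)) :
    ContinuousOn (fun t => ∫ τ in (0:ℝ)..1, τ ^ j * f (t * τ)) (Ioo a b) := by
  intro t ht
  apply ContinuousAt.continuousWithinAt
  obtain ⟨a', ha1, ha2⟩ := exists_between (lt_min ha ht.1)
  obtain ⟨b', hb1, hb2⟩ := exists_between (max_lt hb ht.2)
  rw [lt_min_iff] at ha2
  rw [max_lt_iff] at hb1
  have hab : a' ≤ b' := by linarith [ha2.1, hb1.1]
  let F := Set.IccExtend hab (fun x : Icc a' b' => f x)
  have hF : Continuous F := by
    apply Continuous.Icc_extend'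
    exact continuousOn_iff_continuous_domRestrict.1 (hf.mono (fun x hx => ⟨ha1.trans_le hx.1, hx.2.trans_lt hb2⟩))
  have h1 : Continuous (fun t => ∫ τ in (0:ℝ)..1, τ ^ j * F (t * τ)) := by
    apply intervalIntegral.continuous_parametric_intervalIntegral_of_continuous'
    simp only [Function.uncurry_def]
    fun_prop
  refine h1.continuousAt.congr ?_
  filter_upwards [Ioo_mem_nhds ha2.2 hb1.2] with s hs
  apply intervalIntegral.integral_congr
  intro τ hτ
  rw [uIcc_of_le zero_le_one] at hτ
  have : s * τ ∈ Icc a' b' := by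
    constructor
    · nlinarith [hτ.1, hτ.2, hs.1, ha2.1]
    · nlinarith [hτ.1, hτ.2, hs.2, hb1.1]
  simp only [F]
  rw [Set.IccExtend_of_mem hab _ this]

lemma avg_deriv (a b : ℝ) (ha : a < 0) (hb : 0 < b) (j : ℕ) (f f' : ℝ → ℝ)
    (hf : ∀ t ∈ Ioo a b, HasDerivAt f (f' t) t) (hf' : ContinuousOn f' (Ioo a b)) (t : ℝ)
    (ht : t ∈ Ioo a b) :
    HasDerivAt (fun t => ∫ τ in (0:ℝ)..1, τ ^ j * f (t * τ))
      (∫ τ in (0:ℝ)..1, τ ^ (j + 1) * f' (t * τ)) t := by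
  obtain ⟨a', ha1, ha2⟩ := exists_between (lt_min ha ht.1)
  obtain ⟨b', hb1, hb2⟩ := exists_between (max_lt hb ht.2)
  rw [lt_min_iff] at ha2
  rw [max_lt_iff] at hb1
  have hsub : Icc a' b' ⊆ Ioo a b := fun x hx => ⟨ha1.trans_le hx.1, hx.2.trans_lt hb2⟩
  obtain ⟨C, hC⟩ := isCompact_Icc.exists_bound_of_continuousOn (hf'.mono hsub)
  have hmem : ∀ s ∈ Ioo a' b', ∀ τ ∈ Icc (0:ℝ) 1, s * τ ∈ Icc a' b' := by
    intro s hs τ hτ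
    constructor
    · nlinarith [hτ.1, hτ.2, hs.1, ha2.1]
    · nlinarith [hτ.1, hτ.2, hs.2, hb1.1]
  have hcf : ContinuousOn f (Ioo a b) := fun t ht => (hf t ht).continuousAt.continuousWithinAt
  have hci : ∀ (g : ℝ → ℝ) (i : ℕ), ContinuousOn g (Ioo a b) → ∀ s ∈ Ioo a' b',
      ContinuousOn (fun τ => τ ^ i * g (s * τ)) (Icc 0 1) := by
    intro g i hg s hs
    apply ContinuousOn.mul (by fun_prop)
    apply ContinuousOn.comp hg (by fun_prop)
    exact fun τ hτ => hsub (hmem s hs τ hτ)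
  have hu : uIoc (0:ℝ) 1 = Ioc 0 1 := uIoc_of_le zero_le_one
  have ht' : t ∈ Ioo a' b' := ⟨ha2.2, hb1.2⟩
  have hms : ∀ (g : ℝ → ℝ) (i : ℕ), ContinuousOn g (Ioo a b) → ∀ s ∈ Ioo a' b',
    MeasureTheory.AEStronglyMeasurable (fun τ => τ ^ i * g (s * τ))
      (MeasureTheory.volume.restrict (uIoc (0:ℝ) 1)) := by
    intro g i hg s hs
    rw [hu]
    exact ((hci g i hg s hs).mono Ioc_subset_Icc_self).aestronglyMeasurable measurableSet_Ioc
  refine (intervalIntegral.hasDerivAt_integral_of_dominated_loc_of_deriv_le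
    (F := fun s τ => τ ^ j * f (s * τ)) (F' := fun s τ => τ ^ (j + 1) * f' (s * τ))
    (s := Ioo a' b') (bound := fun _ => C) (Ioo_mem_nhds ha2.2 hb1.2) ?_ ?_ ?_ ?_ ?_ ?_).2
  · filter_upwards [Ioo_mem_nhds ha2.2 hb1.2] with s hs
    exact hms f j hcf s hs
  · apply ContinuousOn.intervalIntegrable
    rw [uIcc_of_le zero_le_one]
    exact hci f j hcf t ht'
  · exact hms f' (j+1) hf' t ht'
  · refine Filter.Eventually.of_forall fun τ hτ s hs => ?_
    rw [hu] at hτ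
    have h1 := hC _ (hmem s hs τ ⟨hτ.1.le, hτ.2⟩)
    rw [norm_mul, norm_pow, Real.norm_of_nonneg hτ.1.le]
    have h2 : τ ^ (j+1) ≤ 1 := pow_le_one₀ hτ.1.le hτ.2
    have h3 : 0 ≤ τ ^ (j+1) := pow_nonneg hτ.1.le _
    have := norm_nonneg (f' (s * τ))
    nlinarith
  · simp
  · refine Filter.Eventually.of_forall fun τ hτ s hs => ?_
    rw [hu] at hτ
    have h1 := hf _ (hsub (hmem s hs τ ⟨hτ.1.le, hτ.2⟩))
    have h2 : HasDerivAt (fun s : ℝ => s * τ) τ s := by simpa using (hasDerivAt_id s).mul_const τ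
    have h3 := (HasDerivAt.comp s h1 h2).const_mul (τ ^ j)
    refine h3.congr_deriv ?_
    ring

lemma avg_smooth (a b : ℝ) (ha : a < 0) (hb : 0 < b) (n : ℕ) : ∀ (j : ℕ) (f : ℝ → ℝ),
    ContDiffOn ℝ n f (Ioo a b) →
    ContDiffOn ℝ n (fun t => ∫ τ in (0:ℝ)..1, τ ^ j * f (t * τ)) (Ioo a b) := by
  induction n with
  | zero =>
    intro j f hf
    have := avg_cont a b ha hb j f hf.continuousOn
    simpa using this
  | succ n ih =>
    intro j f hf
    push_cast at hf ⊢
    rw [contDiffOn_succ_iff_deriv_of_isOpen isOpen_Ioo] at hf ⊢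
    have hd := avg_deriv a b ha hb j f (deriv f)
      (fun t ht => ((hf.1 t ht).differentiableAt (Ioo_mem_nhds ht.1 ht.2)).hasDerivAt)
      hf.2.2.continuousOn
    refine ⟨fun t ht => (hd t ht).differentiableAt.differentiableWithinAt, by simp, ?_⟩
    exact (ih (j+1) (deriv f) hf.2.2).congr fun t ht => (hd t ht).deriv
/-- smooth solutions of the reduced equation -/
def IsH (T K : ℝ) (h : ℝ → ℝ) : Prop :=
  ContDiff ℝ (⊤ : ℕ∞) h ∧ h T = (1/4) * Real.log T ∧ ∃ δ > 0, ∀ t ∈ Ioo (-δ) (T + δ),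
    t * deriv (deriv h) t + deriv h t = K / 4 * (Real.exp (2 * h t) - t * Real.exp (-(2 * h t)))

lemma clamp_lip (m M : ℝ) (y z : ℝ) : |max m (min y M) - max m (min z M)| ≤ |y - z| := by
  have h1 := abs_max_sub_max_le_abs (min y M) (min z M) m
  have h2 := abs_min_sub_min_le_max y M z M
  rw [max_comm m, max_comm m]
  refine h1.trans (h2.trans ?_)
  simp

lemma G_lip (m M K S : ℝ) (hK : 0 < K) (hmM : m ≤ M) (hS : 0 ≤ S) (s : ℝ) (hs : |s| ≤ S) (c d : ℝ)
    (hc : c ∈ Icc m M) (hd : d ∈ Icc m M) :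
    |K / 4 * (Real.exp (2 * c) - s * Real.exp (-(2 * c))) -
      K / 4 * (Real.exp (2 * d) - s * Real.exp (-(2 * d)))| ≤
      K / 4 * (2 * Real.exp (2 * M) + S * (2 * Real.exp (-(2 * m)))) * |c - d| := by
  have := Convex.norm_image_sub_le_of_norm_hasDerivWithin_le (s := Icc m M)
    (f := fun c => K / 4 * (Real.exp (2 * c) - s * Real.exp (-(2 * c))))
    (f' := fun c => K / 4 * (Real.exp (2 * c) * (2 * 1) - s * (Real.exp (-(2 * c)) * (-(2 * 1)))))
    (C := K / 4 * (2 * Real.exp (2 * M) + S * (2 * Real.exp (-(2 * m))))) (x := d) (y := c) ?_ ?_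
    (convex_Icc m M) hd hc
  · simpa only [Real.norm_eq_abs] using this
  · intro x _
    have h1 : HasDerivAt (fun x : ℝ => 2 * x) (2 * 1) x := (hasDerivAt_id x).const_mul 2
    exact ((h1.exp.sub (h1.neg.exp.const_mul s)).const_mul (K/4)).hasDerivWithinAt
  · intro x hx
    rw [Real.norm_eq_abs, abs_mul, abs_of_pos (by positivity : 0 < K / 4)]
    gcongr
    refine (abs_sub _ _).trans ?_
    rw [abs_mul, abs_mul s, abs_mul (Real.exp (-(2 * x))), abs_of_pos (Real.exp_pos (2 * x)),
      abs_of_pos (Real.exp_pos (-(2 * x)))]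
    have h1 : Real.exp (2 * x) ≤ Real.exp (2 * M) := Real.exp_le_exp.2 (by linarith [hx.2])
    have h2 : Real.exp (-(2 * x)) ≤ Real.exp (-(2 * m)) := Real.exp_le_exp.2 (by linarith [hx.1])
    norm_num
    rw [mul_comm (Real.exp (2 * x)), mul_comm (Real.exp (-(2 * x)))]
    gcongr

lemma exists_h (T K : ℝ) (hT : 0 < T) (hK : 0 < K) : ∃ h, IsH T K h := by
  set b := (1/4) * Real.log T with hb
  set B := T + |b| + |Real.log K| with hB
  have hexpb : Real.exp (4 * b) = T := by
    rw [hb, show 4 * (1/4 * Real.log T) = Real.log T by ring, Real.exp_log hT]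
  have hB1 : K / 4 * Real.exp (2 * (T - B)) < 1 := by
    have h1 : Real.exp (2 * (T - B)) ≤ Real.exp (- Real.log K) := by
      apply Real.exp_le_exp.2
      have := neg_abs_le (Real.log K)
      have := le_abs_self (Real.log K)
      have := abs_nonneg b
      have := abs_nonneg (Real.log K)
      rw [hB]; linarith
    rw [Real.exp_neg, Real.exp_log hK] at h1
    calc _ ≤ K / 4 * K⁻¹ := by gcongr
      _ < 1 := by field_simp; norm_num
  have hB2 : T - B ≤ b := by
    have := neg_abs_le b
    have := abs_nonneg (Real.log K)
    rw [hB]; linarith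
  have hB0 : 0 ≤ B := by rw [hB]; positivity
  set m := -B - 1 with hm
  set M := b + 1 with hM
  have hmM : m < M := by linarith
  let cl : ℝ → ℝ := fun y => max m (min y M)
  let ct : ℝ → ℝ := fun t => max (-1) (min t (T + 1))
  have hcl : ∀ y, cl y ∈ Icc m M := fun y => ⟨le_max_left _ _, max_le hmM.le (min_le_right _ _)⟩
  have hct : ∀ y, |ct y| ≤ T + 1 := fun y => by
    rw [abs_le]
    exact ⟨by linarith [le_max_left (-1) (min y (T+1))], max_le (by linarith) (min_le_right _ _)⟩
  let G : ℝ → ℝ → ℝ := fun t y => K / 4 * (Real.exp (2 * cl y) - ct t * Real.exp (-(2 * cl y)))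
  have hG : Continuous (Function.uncurry G) := by
    change Continuous (fun p : ℝ × ℝ => K / 4 * (Real.exp (2 * max m (min p.2 M)) -
      max (-1) (min p.1 (T + 1)) * Real.exp (-(2 * max m (min p.2 M)))))
    fun_prop
  set MG := K / 4 * (Real.exp (2 * M) + (T + 1) * Real.exp (-(2 * m))) with hMG
  have hGb : ∀ t y, |G t y| ≤ MG := by
    intro t y
    change |K / 4 * (Real.exp (2 * cl y) - ct t * Real.exp (-(2 * cl y)))| ≤ _
    rw [abs_mul, abs_of_pos (by positivity : 0 < K / 4), hMG]
    refine mul_le_mul_of_nonneg_left ?_ (by positivity)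
    refine (abs_sub _ _).trans ?_
    rw [abs_mul, abs_of_pos (Real.exp_pos _), abs_of_pos (Real.exp_pos _)]
    have h1 : Real.exp (2 * cl y) ≤ Real.exp (2 * M) := Real.exp_le_exp.2 (by linarith [(hcl y).2])
    have h2 : Real.exp (-(2 * cl y)) ≤ Real.exp (-(2 * m)) :=
      Real.exp_le_exp.2 (by linarith [(hcl y).1])
    gcongr
    exact hct t
  have hGL := fun t y z => (G_lip m M K (T + 1) hK hmM.le (by linarith) (ct t) (hct t) (cl y) (cl z)
    (hcl y) (hcl z)).trans (mul_le_mul_of_nonneg_left (clamp_lip m M y z) (by positivity))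
  obtain ⟨H, hH1, hH2, hH3⟩ := volterra G hG MG hGb _ (by positivity) hGL
  have hMG0 : 0 ≤ MG := by positivity
  have hHT : ∀ a, |H a T - a| ≤ MG * T := by
    intro a
    rw [hH2 a T]
    have := intervalIntegral.norm_integral_le_of_norm_le_const (a := (0:ℝ)) (b := T) (C := MG)
      (f := QQ G (H a)) (fun τ _ => QQ_bound G MG hGb _ _)
    simpa [abs_of_pos hT] using this
  obtain ⟨a, ha⟩ : b ∈ Set.range (fun a => H a T) := by
    apply mem_range_of_exists_le_of_exists_ge (hH3 T)
    · refine ⟨b - MG * T, ?_⟩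
      have := (abs_le.1 (hHT (b - MG * T))).2
      linarith
    · refine ⟨b + MG * T, ?_⟩
      have := (abs_le.1 (hHT (b + MG * T))).1
      linarith
  set h := H a with hh
  change h T = b at ha
  have hhc : Continuous h := hH1 a
  have hQc := QQ_cont G hG h hhc
  have hd : ∀ t, HasDerivAt h (QQ G h t) t := by
    intro t
    have h1 := intervalIntegral.integral_hasDerivAt_right (hQc.intervalIntegrable 0 t)
      (hQc.stronglyMeasurableAtFilter _ _) hQc.continuousAt
    have h2 := h1.const_add a
    have h3 : h = fun u => a + ∫ x in (0:ℝ)..u, QQ G h x := funext (hH2 a)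
    rw [← h3] at h2
    exact h2
  have hGh : Continuous (fun t => G t (h t)) := by
    have : (fun t => G t (h t)) = fun t => Function.uncurry G (t, h t) := rfl
    rw [this]; fun_prop
  have hP : ∀ t, HasDerivAt (fun t => t * QQ G h t) (G t (h t)) t := by
    intro t
    have h1 := intervalIntegral.integral_hasDerivAt_right (hGh.intervalIntegrable 0 t)
      (hGh.stronglyMeasurableAtFilter _ _) hGh.continuousAt
    have h2 : (fun t => t * QQ G h t) = fun u => ∫ x in (0:ℝ)..u, G x (h x) := by
      ext s
      unfold QQ
      rw [intervalIntegral.mul_integral_comp_mul_left (f := fun x => G x (h x))]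
      simp
    rw [h2]; exact h1
  have hctt : ∀ t, -1 < t → t < T + 1 → ct t = t := by
    intro t h1 h2
    change max (-1) (min t (T+1)) = t
    rw [min_eq_left h2.le, max_eq_right h1.le]
  have hup : ∀ t ∈ Icc 0 T, 0 ≤ b - h t := by
    apply maxp 0 T le_rfl hT (fun t => b - h t) (fun t => - QQ G h t) (fun t => - G t (h t))
    · intro t _
      simpa using (hd t).const_sub b
    · intro t _
      have := (hP t).neg
      refine this.congr_of_eventuallyEq (Filter.Eventually.of_forall fun s => ?_)
      simp
    · intro t ht hlt
      have h1 : b < cl (h t) := by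
        change b < max m (min (h t) M)
        refine lt_of_lt_of_le (lt_min ?_ ?_) (le_max_right _ _) <;> linarith
      have h2 : Real.exp (4 * b) < Real.exp (4 * cl (h t)) := Real.exp_lt_exp.2 (by linarith)
      rw [hexpb] at h2
      have h3 : 0 < G t (h t) := by
        change 0 < K / 4 * (Real.exp (2 * cl (h t)) - ct t * Real.exp (-(2 * cl (h t))))
        rw [hctt t (by linarith [ht.1]) (by linarith [ht.2])]
        apply mul_pos (by positivity)
        have h4 : Real.exp (2 * cl (h t)) = Real.exp (4 * cl (h t)) * Real.exp (-(2 * cl (h t))) := by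
          rw [← Real.exp_add]; ring_nf
        rw [h4, ← sub_mul]
        apply mul_pos _ (Real.exp_pos _)
        linarith [ht.2]
      linarith
    · left; rfl
    · simp [ha]
  have hlow : ∀ t ∈ Icc 0 T, 0 ≤ h t - (t - B) := by
    apply maxp 0 T le_rfl hT (fun t => h t - (t - B)) (fun t => QQ G h t - 1) (fun t => G t (h t) - 1)
    · intro t _
      exact (hd t).sub ((hasDerivAt_id t).sub_const B)
    · intro t _
      refine ((hP t).sub (hasDerivAt_id t)).congr_of_eventuallyEq (Filter.Eventually.of_forall fun s => ?_)
      simp; ring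
    · intro t ht hlt
      have h1 : cl (h t) ≤ T - B := by
        apply max_le
        · linarith
        · refine (min_le_left _ _).trans ?_
          linarith [ht.2]
      have h3 : G t (h t) ≤ K / 4 * Real.exp (2 * (T - B)) := by
        change K / 4 * (Real.exp (2 * cl (h t)) - ct t * Real.exp (-(2 * cl (h t)))) ≤ _
        rw [hctt t (by linarith [ht.1]) (by linarith [ht.2])]
        gcongr
        have : Real.exp (2 * cl (h t)) ≤ Real.exp (2 * (T - B)) := Real.exp_le_exp.2 (by linarith)
        have : 0 ≤ t * Real.exp (-(2 * cl (h t))) := mul_nonneg ht.1 (Real.exp_pos _).le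
        linarith
      linarith
    · left; rfl
    · simp only [ha]; linarith
  -- the open interval
  have hnear : ∀ t₀ ∈ Icc 0 T, ∃ δ > 0, ∀ t, |t - t₀| < δ → h t ∈ Ioo m M := by
    intro t₀ ht₀
    have h1 : h t₀ ∈ Ioo m M := ⟨by linarith [hlow t₀ ht₀, ht₀.1], by linarith [hup t₀ ht₀]⟩
    have := hhc.continuousAt.eventually (Ioo_mem_nhds h1.1 h1.2)
    obtain ⟨δ, hδ, h⟩ := Metric.eventually_nhds_iff.1 this
    exact ⟨δ, hδ, fun t ht => h (by rwa [Real.dist_eq])⟩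
  obtain ⟨δ₁, hδ₁, hδ₁'⟩ := hnear 0 ⟨le_rfl, hT.le⟩
  obtain ⟨δ₂, hδ₂, hδ₂'⟩ := hnear T ⟨hT.le, le_rfl⟩
  obtain ⟨δ, hδ, hδle⟩ : ∃ δ > 0, δ ≤ δ₁ ∧ δ ≤ δ₂ ∧ δ ≤ 1 :=
    ⟨min δ₁ (min δ₂ 1), by positivity, min_le_left _ _, (min_le_right _ _).trans (min_le_left _ _),
      (min_le_right _ _).trans (min_le_right _ _)⟩
  have hI : ∀ t ∈ Ioo (-δ) (T + δ), h t ∈ Ioo m M := by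
    intro t ht
    rcases lt_or_ge t 0 with h0 | h0
    · apply hδ₁'; rw [abs_lt]; constructor <;> linarith [ht.1]
    · rcases lt_or_ge T t with h1 | h1
      · apply hδ₂'; rw [abs_lt]; constructor <;> linarith [ht.2]
      · exact ⟨by linarith [hlow t ⟨h0, h1⟩], by linarith [hup t ⟨h0, h1⟩]⟩
  let f : ℝ → ℝ := fun t => K / 4 * (Real.exp (2 * h t) - t * Real.exp (-(2 * h t)))
  have hGf : ∀ t ∈ Ioo (-δ) (T + δ), G t (h t) = f t := by
    intro t ht
    change K / 4 * (Real.exp (2 * cl (h t)) - ct t * Real.exp (-(2 * cl (h t)))) = _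
    rw [hctt t (by linarith [ht.1]) (by linarith [ht.2])]
    have : cl (h t) = h t := by
      change max m (min (h t) M) = h t
      rw [min_eq_left (hI t ht).2.le, max_eq_right (hI t ht).1.le]
    rw [this]
  have hQf : ∀ t ∈ Ioo (-δ) (T + δ), QQ G h t = ∫ τ in (0:ℝ)..1, τ ^ 0 * f (t * τ) := by
    intro t ht
    unfold QQ
    apply intervalIntegral.integral_congr
    intro τ hτ
    rw [uIcc_of_le zero_le_one] at hτ
    have : t * τ ∈ Ioo (-δ) (T + δ) := by
      have e1 := hτ.1
      have e2 := hτ.2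
      have e3 := ht.1
      have e4 := ht.2
      rcases le_total 0 t with h0 | h0
      · constructor <;> nlinarith
      · constructor <;> nlinarith
    simp only [pow_zero, one_mul]
    exact hGf _ this
  have hsm : ∀ n : ℕ, ContDiffOn ℝ n h (Ioo (-δ) (T + δ)) ∧ ContDiffOn ℝ n (QQ G h) (Ioo (-δ) (T + δ)) := by
    have key : ∀ n : ℕ, ContDiffOn ℝ n h (Ioo (-δ) (T + δ)) →
        ContDiffOn ℝ n (QQ G h) (Ioo (-δ) (T + δ)) := by
      intro n hn
      have : ContDiffOn ℝ n f (Ioo (-δ) (T + δ)) := by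
        change ContDiffOn ℝ n (fun t => K / 4 * (Real.exp (2 * h t) - t * Real.exp (-(2 * h t)))) _
        fun_prop
      exact (avg_smooth (-δ) (T + δ) (by linarith) (by linarith) n 0 f this).congr hQf
    intro n
    induction n with
    | zero =>
      have : ContDiffOn ℝ (0:ℕ) h (Ioo (-δ) (T + δ)) := by simpa using hhc.continuousOn
      exact ⟨this, key 0 this⟩
    | succ n ih =>
      have : ContDiffOn ℝ (n+1:ℕ) h (Ioo (-δ) (T + δ)) := by
        push_cast
        rw [contDiffOn_succ_iff_deriv_of_isOpen isOpen_Ioo]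
        refine ⟨fun t _ => (hd t).differentiableAt.differentiableWithinAt, by simp, ?_⟩
        exact ih.2.congr fun t _ => (hd t).deriv
      exact ⟨this, key _ this⟩
  have hsm' : ContDiffOn ℝ (⊤:ℕ∞) h (Ioo (-δ) (T + δ)) := contDiffOn_infty.2 fun n => (hsm n).1
  let χ : ContDiffBump (T / 2) := ⟨T / 2 + δ / 3, T / 2 + 2 * δ / 3, by positivity, by linarith⟩
  refine ⟨fun t => χ t * h t, ?_, ?_, δ / 3, by positivity, ?_⟩
  · rw [contDiff_iff_contDiffAt]
    intro t
    by_cases ht : t ∈ Ioo (-δ) (T + δ)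
    · exact χ.contDiffAt.mul (hsm'.contDiffAt (Ioo_mem_nhds ht.1 ht.2))
    · have : (fun t => χ t * h t) =ᶠ[nhds t] fun _ => 0 := by
        have h1 : t ∉ tsupport χ := by
          rw [χ.tsupport_eq]
          intro h2
          apply ht
          rw [mem_closedBall, Real.dist_eq, abs_le] at h2
          change -(T / 2 + 2 * δ / 3) ≤ _ ∧ _ ≤ (T / 2 + 2 * δ / 3) at h2
          constructor <;> linarith [h2.1, h2.2]
        filter_upwards [(notMem_tsupport_iff_eventuallyEq.1 h1)] with s hs
        rw [hs]; simp
      exact contDiffAt_const.congr_of_eventuallyEq this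
  · have : χ T = 1 := by
      apply χ.one_of_mem_closedBall
      rw [mem_closedBall, Real.dist_eq, abs_le]
      change -(T / 2 + δ / 3) ≤ _ ∧ _ ≤ (T / 2 + δ / 3)
      constructor <;> linarith
    simp only [this, ha, one_mul]
    exact hb
  · have hone : ∀ t ∈ Ioo (-(δ/3)) (T + δ/3), χ t = 1 := by
      intro t ht
      apply χ.one_of_mem_closedBall
      rw [mem_closedBall, Real.dist_eq, abs_le]
      change -(T / 2 + δ / 3) ≤ _ ∧ _ ≤ (T / 2 + δ / 3)
      constructor <;> linarith [ht.1, ht.2]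
    intro t ht
    have hdt : ∀ t ∈ Ioo (-(δ/3)) (T + δ/3), deriv (fun t => χ t * h t) t = QQ G h t := by
      intro t ht
      have : (fun t => χ t * h t) =ᶠ[nhds t] h := by
        filter_upwards [Ioo_mem_nhds ht.1 ht.2] with s hs
        rw [hone s hs, one_mul]
      rw [this.deriv_eq, (hd t).deriv]
    have h2 : deriv (deriv (fun t => χ t * h t)) t = deriv (QQ G h) t := by
      apply Filter.EventuallyEq.deriv_eq
      filter_upwards [Ioo_mem_nhds ht.1 ht.2] with s hs using hdt s hs
    have ht' : t ∈ Ioo (-δ) (T + δ) := ⟨by linarith [ht.1], by linarith [ht.2]⟩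
    have h3 : DifferentiableAt ℝ (QQ G h) t :=
      (((hsm 1).2.differentiableOn (by norm_num)) t ht').differentiableAt (Ioo_mem_nhds ht'.1 ht'.2)
    have h4 := ((hasDerivAt_id t).mul h3.hasDerivAt).unique (hP t)
    rw [h2, hdt t ht]
    simp only [hone t ht, one_mul]
    rw [hGf t ht'] at h4
    simp only [id, one_mul] at h4
    change _ = f t
    linarith
section Dpart
variable {T K : ℝ} {h : ℝ → ℝ}

lemma IsH.d1 (H : IsH T K h) (t : ℝ) : HasDerivAt h (deriv h t) t :=
  ((H.1.differentiable (by simp)) t).hasDerivAt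

lemma IsH.d2 (H : IsH T K h) (t : ℝ) : HasDerivAt (deriv h) (deriv (deriv h) t) t := by
  have h1 : ContDiff ℝ (1:ℕ) (deriv h) := by
    have := H.1
    exact contDiff_infty.1 (contDiff_infty_iff_deriv.1 this).2 1
  exact ((h1.differentiable (by simp)) t).hasDerivAt

lemma IsH.dP (H : IsH T K h) (t : ℝ) (ht : t ∈ Icc 0 T) : HasDerivAt (fun t => t * deriv h t)
    (K / 4 * (Real.exp (2 * h t) - t * Real.exp (-(2 * h t)))) t := by
  obtain ⟨δ, hδ, hh⟩ := H.2.2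
  have h1 := (hasDerivAt_id t).mul (H.d2 t)
  rw [← hh t ⟨by linarith [ht.1], by linarith [ht.2]⟩]
  refine h1.congr_deriv ?_
  simp; ring

lemma IsH.upper (H : IsH T K h) (hT : 0 < T) (hK : 0 < K) : ∀ t ∈ Icc 0 T, h t ≤ 1/4 * Real.log T := by
  have hexpb : Real.exp (4 * (1/4 * Real.log T)) = T := by
    rw [show 4 * (1/4 * Real.log T) = Real.log T by ring, Real.exp_log hT]
  have := maxp 0 T le_rfl hT (fun t => 1/4 * Real.log T - h t) (fun t => - deriv h t)
    (fun t => - (K / 4 * (Real.exp (2 * h t) - t * Real.exp (-(2 * h t)))))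
    (fun t _ => by simpa using (H.d1 t).const_sub (1/4 * Real.log T))
    (fun t ht => by
      have := (H.dP t ht).neg
      refine this.congr_of_eventuallyEq (Filter.Eventually.of_forall fun s => ?_)
      simp)
    (fun t ht hlt => by
      have h2 : Real.exp (4 * (1/4 * Real.log T)) < Real.exp (4 * h t) :=
        Real.exp_lt_exp.2 (by linarith)
      rw [hexpb] at h2
      have h4 : Real.exp (2 * h t) = Real.exp (4 * h t) * Real.exp (-(2 * h t)) := by
        rw [← Real.exp_add]; ring_nf
      rw [h4, ← sub_mul, neg_lt_zero]
      apply mul_pos (by positivity) (mul_pos _ (Real.exp_pos _))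
      linarith [ht.2])
    (Or.inl rfl) (by simp only [H.2.1]; linarith)
  intro t ht
  linarith [this t ht]

lemma IsH.lower (H : IsH T K h) (hT : 0 < T) (hK : 0 < K) (B : ℝ)
    (hB1 : K / 4 * Real.exp (2 * (T - B)) < 1) (hB2 : T - B ≤ 1/4 * Real.log T) :
    ∀ t ∈ Icc 0 T, t - B ≤ h t := by
  have := maxp 0 T le_rfl hT (fun t => h t - (t - B)) (fun t => deriv h t - 1)
    (fun t => (K / 4 * (Real.exp (2 * h t) - t * Real.exp (-(2 * h t)))) - 1)
    (fun t _ => (H.d1 t).sub ((hasDerivAt_id t).sub_const B))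
    (fun t ht => by
      refine ((H.dP t ht).sub (hasDerivAt_id t)).congr_of_eventuallyEq
        (Filter.Eventually.of_forall fun s => ?_)
      simp; ring)
    (fun t ht hlt => by
      have h3 : K / 4 * (Real.exp (2 * h t) - t * Real.exp (-(2 * h t))) ≤
          K / 4 * Real.exp (2 * (T - B)) := by
        gcongr
        have : Real.exp (2 * h t) ≤ Real.exp (2 * (T - B)) :=
          Real.exp_le_exp.2 (by linarith [ht.2])
        have : 0 ≤ t * Real.exp (-(2 * h t)) := mul_nonneg ht.1 (Real.exp_pos _).le
        linarith
      linarith)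
    (Or.inl rfl) (by simp only [H.2.1]; linarith)
  intro t ht
  linarith [this t ht]

lemma hd_w (H : IsH T K h) (t : ℝ) (ht : 0 < t) :
    HasDerivAt (fun t => h t - 1/4 * Real.log t) (deriv h t - 1/4 * t⁻¹) t :=
  (H.d1 t).sub ((Real.hasDerivAt_log ht.ne').const_mul (1/4))

lemma IsH.lower2 (H : IsH T K h) (hT : 0 < T) (hK : 0 < K) :
    ∀ t ∈ Ioc 0 T, 1/4 * Real.log t ≤ h t := by
  intro t₀ ht₀
  obtain ⟨m, hm⟩ : ∃ m, ∀ t ∈ Icc 0 T, m ≤ h t := by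
    obtain ⟨x, _, hx⟩ := isCompact_Icc.exists_isMinOn (nonempty_Icc.2 hT.le) H.1.continuous.continuousOn
    exact ⟨h x, fun t ht => hx ht⟩
  set δ := min (t₀ / 2) (Real.exp (4 * m)) with hδ
  have hδ0 : 0 < δ := lt_min (by linarith [ht₀.1]) (Real.exp_pos _)
  have hδt : δ < t₀ := lt_of_le_of_lt (min_le_left _ _) (by linarith [ht₀.1])
  have := maxp δ T hδ0.le (hδt.trans_le ht₀.2) (fun t => h t - 1/4 * Real.log t)
    (fun t => deriv h t - 1/4 * t⁻¹)
    (fun t => K / 4 * (Real.exp (2 * h t) - t * Real.exp (-(2 * h t))))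
    (fun t ht => hd_w H t (hδ0.trans_le ht.1))
    (fun t ht => by
      have ht0 := hδ0.trans_le ht.1
      refine ((H.dP t ⟨ht0.le, ht.2⟩).sub_const (1/4)).congr_of_eventuallyEq ?_
      filter_upwards [lt_mem_nhds ht0] with s hs
      simp; field_simp)
    (fun t ht hlt => by
      have ht0 := hδ0.trans_le ht.1
      have h2 : Real.exp (4 * h t) < Real.exp (Real.log t) :=
        Real.exp_lt_exp.2 (by linarith)
      rw [Real.exp_log ht0] at h2
      have h4 : Real.exp (2 * h t) = Real.exp (4 * h t) * Real.exp (-(2 * h t)) := by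
        rw [← Real.exp_add]; ring_nf
      rw [h4, ← sub_mul]
      apply mul_neg_of_pos_of_neg (by positivity) (mul_neg_of_neg_of_pos _ (Real.exp_pos _))
      linarith)
    (Or.inr (by
      have h1 : Real.log δ ≤ 4 * m := by
        rw [Real.log_le_iff_le_exp hδ0]; exact min_le_right _ _
      have := hm δ ⟨hδ0.le, (hδt.trans_le ht₀.2).le⟩
      change 0 ≤ h δ - _
      linarith))
    (by simp only [H.2.1]; linarith)
  linarith [this t₀ ⟨hδt.le, ht₀.2⟩]

/-- rewriting of the right side -/
lemma IsH.rhs (t : ℝ) (ht : 0 < t) (y : ℝ) : Real.exp (2 * y) - t * Real.exp (-(2 * y)) =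
    Real.sqrt t * (2 * Real.sinh (2 * (y - 1/4 * Real.log t))) := by
  have h1 : Real.sqrt t = Real.exp (Real.log t / 2) := by
    rw [Real.exp_half, Real.exp_log ht]
  have h2 : t * Real.exp (-(2 * y)) = Real.exp (Real.log t - 2 * y) := by
    rw [sub_eq_add_neg, Real.exp_add, Real.exp_log ht]
  rw [h1, h2, Real.sinh_eq]
  rw [mul_div_cancel₀ _ (two_ne_zero), mul_sub, ← Real.exp_add, ← Real.exp_add]
  ring_nf

lemma IsH.rhs_ge (H : IsH T K h) (hT : 0 < T) (hK : 0 < K) (t : ℝ) (ht : t ∈ Ioc 0 T) :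
    K * Real.sqrt t * (h t - 1/4 * Real.log t) ≤
      K / 4 * (Real.exp (2 * h t) - t * Real.exp (-(2 * h t))) := by
  have h1 := H.lower2 hT hK t ht
  rw [IsH.rhs t ht.1]
  have h2 : 2 * (h t - 1/4 * Real.log t) ≤ Real.sinh (2 * (h t - 1/4 * Real.log t)) :=
    Real.self_le_sinh_iff.2 (by linarith)
  have h3 : 0 ≤ K * Real.sqrt t := by positivity
  nlinarith

lemma IsH.rhs_nonneg (H : IsH T K h) (hT : 0 < T) (hK : 0 < K) (t : ℝ) (ht : t ∈ Icc 0 T) :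
    0 ≤ K / 4 * (Real.exp (2 * h t) - t * Real.exp (-(2 * h t))) := by
  rcases eq_or_lt_of_le ht.1 with h0 | h0
  · rw [← h0]; simp only [zero_mul, sub_zero]; positivity
  · refine le_trans ?_ (H.rhs_ge hT hK t ⟨h0, ht.2⟩)
    have h1 := H.lower2 hT hK t ⟨h0, ht.2⟩
    have : 0 ≤ h t - 1/4 * Real.log t := by linarith
    positivity

lemma IsH.monoP (H : IsH T K h) (hT : 0 < T) (hK : 0 < K) :
    MonotoneOn (fun t => t * deriv h t) (Icc 0 T) := by
  apply monotoneOn_of_deriv_nonneg (convex_Icc _ _)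
  · exact fun t ht => (H.dP t ht).continuousAt.continuousWithinAt
  · intro t ht
    rw [interior_Icc] at ht
    exact (H.dP t ⟨ht.1.le, ht.2.le⟩).differentiableAt.differentiableWithinAt
  · intro t ht
    rw [interior_Icc] at ht
    rw [(H.dP t ⟨ht.1.le, ht.2.le⟩).deriv]
    exact H.rhs_nonneg hT hK t ⟨ht.1.le, ht.2.le⟩

lemma IsH.P_nonneg (H : IsH T K h) (hT : 0 < T) (hK : 0 < K) (t : ℝ) (ht : t ∈ Icc 0 T) :
    0 ≤ t * deriv h t := by
  have := H.monoP hT hK (left_mem_Icc.2 hT.le) ht ht.1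
  simpa using this

lemma IsH.P_le (H : IsH T K h) (hT : 0 < T) (hK : 0 < K) (t : ℝ) (ht : t ∈ Ico 0 T) :
    t * deriv h t ≤ 1/4 := by
  by_contra hcon
  push Not at hcon
  have ht0 : 0 < t := by
    rcases eq_or_lt_of_le ht.1 with h0 | h0
    · rw [← h0] at hcon; norm_num at hcon
    · exact h0
  have hm : StrictMonoOn (fun t => h t - 1/4 * Real.log t) (Icc t T) := by
    apply strictMonoOn_of_deriv_pos (convex_Icc _ _)
    · exact fun s hs => (hd_w H s (ht0.trans_le hs.1)).continuousAt.continuousWithinAt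
    · intro s hs
      rw [interior_Icc] at hs
      have hs0 := ht0.trans hs.1
      rw [(hd_w H s hs0).deriv]
      have h1 := H.monoP hT hK ⟨ht.1, ht.2.le⟩ ⟨hs0.le, hs.2.le⟩ hs.1.le
      simp only at h1
      have h2 : 1/4 < s * deriv h s := by linarith
      have : 0 < s⁻¹ := by positivity
      have h3 : deriv h s - 1/4 * s⁻¹ = s⁻¹ * (s * deriv h s - 1/4) := by field_simp
      rw [h3]; apply mul_pos this; linarith
  have h1 := hm (left_mem_Icc.2 ht.2.le) (right_mem_Icc.2 ht.2.le) ht.2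
  simp only [H.2.1] at h1
  have h2 := H.lower2 hT hK t ⟨ht0, ht.2.le⟩
  linarith

lemma IsH.w_anti (H : IsH T K h) (hT : 0 < T) (hK : 0 < K) :
    AntitoneOn (fun t => h t - 1/4 * Real.log t) (Ioc 0 T) := by
  apply antitoneOn_of_deriv_nonpos (convex_Ioc _ _)
  · exact fun s hs => (hd_w H s hs.1).continuousAt.continuousWithinAt
  · intro s hs
    rw [interior_Ioc] at hs
    exact (hd_w H s hs.1).differentiableAt.differentiableWithinAt
  · intro s hs
    rw [interior_Ioc] at hs
    rw [(hd_w H s hs.1).deriv]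
    have hs0 := hs.1
    have h2 := H.P_le hT hK s ⟨hs.1.le, hs.2⟩
    have : 0 < s⁻¹ := by positivity
    have h3 : deriv h s - 1/4 * s⁻¹ = s⁻¹ * (s * deriv h s - 1/4) := by field_simp
    rw [h3]; apply mul_nonpos_of_nonneg_of_nonpos this.le; linarith

/-- one step of the decay iteration -/
lemma IsH.step_w (H : IsH T K h) (hT : 0 < T) (hK : 0 < K) (a : ℝ) (ha : 0 < a) (haT : a < T)
    (A : ℝ) (hA : 1/4 - (a/2) * deriv h (a/2) ≤ A) (t : ℝ) (ht : t ∈ Icc (3 * a / 4) T) :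
    h t - 1/4 * Real.log t ≤ 4 / (a * Real.sqrt (a/2)) * (A * K⁻¹) := by
  have h0 := H.w_anti hT hK (a := 3 * a / 4) (b := t) ⟨by linarith, by linarith⟩
    ⟨by linarith [ht.1], ht.2⟩ ht.1
  simp only at h0
  refine h0.trans ?_
  obtain ⟨ξ, hξ, hξ'⟩ := exists_hasDerivAt_eq_slope (fun t => t * deriv h t)
    (fun t => K / 4 * (Real.exp (2 * h t) - t * Real.exp (-(2 * h t)))) (a := a/2) (b := 3*a/4)
    (by linarith) (fun s hs => (H.dP s ⟨by linarith [hs.1], by linarith [hs.2]⟩).continuousAt.continuousWithinAt)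
    (fun s hs => (H.dP s ⟨by linarith [hs.1], by linarith [hs.2]⟩))
  have hξT : ξ ∈ Ioc 0 T := ⟨by linarith [hξ.1], by linarith [hξ.2]⟩
  have h1 := H.rhs_ge hT hK ξ hξT
  have h2 := H.P_le hT hK (3*a/4) ⟨by linarith, by linarith⟩
  have h3 := H.w_anti hT hK hξT ⟨by linarith, by linarith⟩ hξ.2.le
  simp only at h3
  have hw := H.lower2 hT hK (3 * a / 4) ⟨by linarith, by linarith⟩
  have h4 : Real.sqrt (a/2) ≤ Real.sqrt ξ := Real.sqrt_le_sqrt hξ.1.le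
  have h5 : K * Real.sqrt (a/2) * (h (3*a/4) - 1/4 * Real.log (3*a/4)) ≤ A / (a/4) := by
    calc _ ≤ K * Real.sqrt ξ * (h ξ - 1/4 * Real.log ξ) := by
          gcongr
      _ ≤ _ := h1
      _ = _ := hξ'
      _ ≤ A / (3 * a / 4 - a / 2) := by
        gcongr
        · linarith
        · linarith
      _ = _ := by ring_nf
  have hs : 0 < Real.sqrt (a/2) := Real.sqrt_pos.2 (by linarith)
  rw [show 4 / (a * Real.sqrt (a/2)) * (A * K⁻¹) = (A / (a/4)) / (K * Real.sqrt (a/2)) by field_simp]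
  rw [le_div_iff₀ (by positivity)]
  linarith

lemma IsH.step_p (H : IsH T K h) (hT : 0 < T) (hK : 0 < K) (a : ℝ) (ha : 0 < a) (haT : a < T)
    (A : ℝ) (hA : h (3*a/4) - 1/4 * Real.log (3*a/4) ≤ A) : 1/4 - a * deriv h a ≤ 4 * A := by
  obtain ⟨ξ, hξ, hξ'⟩ := exists_hasDerivAt_eq_slope (fun t => h t - 1/4 * Real.log t)
    (fun t => deriv h t - 1/4 * t⁻¹) (a := 3*a/4) (b := a)
    (by linarith) (fun s hs => (hd_w H s (by linarith [hs.1])).continuousAt.continuousWithinAt)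
    (fun s hs => hd_w H s (by linarith [hs.1]))
  have hξ0 : 0 < ξ := by linarith [hξ.1]
  have h1 := H.monoP hT hK ⟨hξ0.le, by linarith [hξ.2]⟩ ⟨ha.le, haT.le⟩ hξ.2.le
  simp only at h1
  have h2 := H.lower2 hT hK a ⟨ha, haT.le⟩
  have h3 : deriv h ξ - 1/4 * ξ⁻¹ = -((1/4 - ξ * deriv h ξ) / ξ) := by field_simp; ring
  rw [h3] at hξ'
  have h4 := H.P_le hT hK a ⟨ha.le, haT⟩
  have h5 : (1/4 - a * deriv h a) / a ≤ (1/4 - ξ * deriv h ξ) / ξ := by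
    gcongr
    · linarith
    · exact hξ.2.le
  have h6 : (1/4 - ξ * deriv h ξ) / ξ ≤ A / (a/4) := by
    rw [← neg_neg ((1/4 - ξ * deriv h ξ) / ξ), hξ', ← neg_div]
    rw [show a - 3*a/4 = a/4 by ring]
    gcongr
    linarith
  have h7 := h5.trans h6
  rw [div_le_div_iff₀ ha (by linarith)] at h7
  nlinarith

end Dpart

lemma decay_p (T : ℝ) (hT : 0 < T) (n : ℕ) : ∀ a, 0 < a → a < T → ∃ C, ∀ K h, 0 < K → IsH T K h →
    1/4 - a * deriv h a ≤ C * K⁻¹ ^ n := by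
  induction n with
  | zero =>
    intro a ha haT
    refine ⟨1/4, fun K h hK H => ?_⟩
    have := H.P_nonneg hT hK a ⟨ha.le, haT.le⟩
    simp; linarith
  | succ n ih =>
    intro a ha haT
    obtain ⟨C, hC⟩ := ih (a/2) (by linarith) (by linarith)
    refine ⟨4 * (4 / (a * Real.sqrt (a/2)) * C), fun K h hK H => ?_⟩
    have h1 := H.step_w hT hK a ha haT _ (hC K h hK H) (3*a/4) ⟨le_rfl, by linarith⟩
    have h2 := H.step_p hT hK a ha haT _ h1
    refine h2.trans (le_of_eq ?_)
    rw [pow_succ]; ring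

lemma decay_w (T : ℝ) (hT : 0 < T) (n : ℕ) (a : ℝ) (ha : 0 < a) (haT : a < T) :
    ∃ C, ∀ K h, 0 < K → IsH T K h → ∀ t ∈ Icc a T,
      h t - 1/4 * Real.log t ≤ C * K⁻¹ ^ (n+1) := by
  obtain ⟨C, hC⟩ := decay_p T hT n (a/2) (by linarith) (by linarith)
  refine ⟨4 / (a * Real.sqrt (a/2)) * C, fun K h hK H t ht => ?_⟩
  refine (H.step_w hT hK a ha haT _ (hC K h hK H) t ⟨by linarith [ht.1], ht.2⟩).trans (le_of_eq ?_)
  rw [pow_succ]; ring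
section Epart

lemma iter_mul_id (y : ℝ → ℝ) (hy : ContDiff ℝ (⊤:ℕ∞) y) (n : ℕ) :
    iteratedDeriv (n+1) (fun t => t * y t) =
      fun t => t * iteratedDeriv (n+1) y t + (n+1) * iteratedDeriv n y t := by
  have hd : ∀ m t, HasDerivAt (iteratedDeriv m y) (iteratedDeriv (m+1) y t) t := by
    intro m t
    rw [iteratedDeriv_succ]
    exact (hy.differentiable_iteratedDeriv m (by exact_mod_cast WithTop.coe_lt_top m) t).hasDerivAt
  induction n with
  | zero =>
    rw [zero_add, iteratedDeriv_one]
    funext t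
    have h0 := hd 0 t
    simp only [iteratedDeriv_zero, zero_add] at h0
    have := ((hasDerivAt_id t).mul h0).deriv
    simp only [iteratedDeriv_zero, Nat.cast_zero, zero_add, id, one_mul] at this ⊢
    rw [add_comm, ← this]; rfl
  | succ n ih =>
    rw [iteratedDeriv_succ, ih]
    funext t
    have := (((hasDerivAt_id t).mul (hd (n+1) t)).add ((hd n t).const_mul ((n:ℝ)+1))).deriv
    refine Eq.trans ?_ (this.trans ?_)
    · rfl
    · simp only [id]; push_cast; ring

noncomputable def FF (K : ℝ) (h : ℝ → ℝ) (t : ℝ) : ℝ :=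
  K / 4 * (Real.exp (2 * h t) - t * Real.exp (-(2 * h t)))

lemma IsH.ode {T K : ℝ} {h : ℝ → ℝ} (H : IsH T K h) (j : ℕ) (t : ℝ) (ht : t ∈ Icc 0 T) :
    t * iteratedDeriv (j+2) h t + (j+1) * iteratedDeriv (j+1) h t = iteratedDeriv j (FF K h) t := by
  obtain ⟨δ, hδ, hh⟩ := H.2.2
  have hs : ContDiff ℝ (⊤:ℕ∞) (deriv h) := (contDiff_infty_iff_deriv.1 H.1).2
  have h1 := congrFun (iter_mul_id (deriv h) hs j) t
  rw [← iteratedDeriv_succ', ← iteratedDeriv_succ'] at h1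
  rw [← h1, iteratedDeriv_succ']
  apply Filter.EventuallyEq.iteratedDeriv_eq
  filter_upwards [Ioo_mem_nhds (show -δ < t by linarith [ht.1]) (show t < T + δ by linarith [ht.2])] with s hs'
  have h2 := ((hasDerivAt_id s).mul (H.d2 s)).deriv
  unfold FF
  rw [← hh s hs']
  refine Eq.trans ?_ (h2.trans ?_)
  · rfl
  · simp; ring

lemma exp_comp_bound (n : ℕ) (c C l : ℝ) (hl : 0 < l) (hC : 1 ≤ C) (hc : |c| = 2) (h : ℝ → ℝ)
    (hs : ContDiff ℝ (⊤:ℕ∞) h) (t : ℝ)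
    (hb : ∀ i, 1 ≤ i → i ≤ n → |iteratedDeriv i h t| * l ^ i ≤ C) :
    |iteratedDeriv n (fun t => Real.exp (c * h t)) t| * l ^ n ≤
      n.factorial * 2 ^ n * C ^ n * Real.exp (c * h t) := by
  have hg : ContDiff ℝ (⊤:ℕ∞) (fun s : ℝ => Real.exp (c * s)) := by fun_prop
  have := norm_iteratedFDeriv_comp_le hg hs (n := n) (by exact_mod_cast le_top) t
    (C := 2 ^ n * Real.exp (c * h t)) (D := C / l)
    (by
      intro i hi
      rw [norm_iteratedFDeriv_eq_norm_iteratedDeriv, iteratedDeriv_exp_const_mul]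
      simp only [norm_mul, norm_pow, Real.norm_eq_abs, hc, Real.abs_exp]
      gcongr
      norm_num)
    (by
      intro i hi1 hi
      rw [norm_iteratedFDeriv_eq_norm_iteratedDeriv, Real.norm_eq_abs, div_pow, le_div_iff₀ (by positivity)]
      exact (hb i hi1 hi).trans (le_self_pow₀ hC (by omega)))
  rw [norm_iteratedFDeriv_eq_norm_iteratedDeriv, Real.norm_eq_abs, div_pow] at this
  calc _ ≤ (n.factorial * (2 ^ n * Real.exp (c * h t)) * (C ^ n / l ^ n)) * l ^ n := by
        gcongr; exact this
    _ = _ := by field_simp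

/-- monotonicity estimate for `t Y' + m Y = F` -/
lemma fuchs_bound (m : ℕ) (Y Y' F : ℝ → ℝ) (M t₀ : ℝ) (ht₀ : 0 ≤ t₀) (hM : 0 ≤ M)
    (hY : ∀ t ∈ Icc 0 t₀, HasDerivAt Y (Y' t) t)
    (hode : ∀ t ∈ Icc 0 t₀, t * Y' t + (m + 1) * Y t = F t)
    (hF : ∀ t ∈ Icc 0 t₀, F t ≤ M) : Y t₀ ≤ M := by
  rcases eq_or_lt_of_le ht₀ with h0 | h0
  · have h1 := hode t₀ ⟨ht₀, le_rfl⟩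
    have h2 := hF t₀ ⟨ht₀, le_rfl⟩
    rw [← h1, ← h0] at h2
    rw [← h0]
    have hm : (0:ℝ) ≤ m := by positivity
    nlinarith
  · have hd : ∀ t ∈ Icc 0 t₀, HasDerivAt (fun t => t ^ (m+1) * (Y t - M))
        (t ^ m * (F t - (m+1) * M)) t := by
      intro t ht
      refine ((hasDerivAt_pow (m+1) t).mul ((hY t ht).sub_const M)).congr_deriv ?_
      rw [← hode t ht]
      simp only [Nat.add_sub_cancel]; push_cast; ring
    have := antitoneOn_of_deriv_nonpos (convex_Icc 0 t₀)
      (fun t ht => (hd t ht).continuousAt.continuousWithinAt)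
      (fun t ht => (hd t (interior_subset ht)).differentiableAt.differentiableWithinAt)
      (fun t ht => by
        have ht := interior_subset ht
        rw [(hd t ht).deriv]
        apply mul_nonpos_of_nonneg_of_nonpos (pow_nonneg ht.1 _)
        have hm : (0:ℝ) ≤ m * M := by positivity
        linarith [hF t ht])
      (left_mem_Icc.2 ht₀) (right_mem_Icc.2 ht₀) ht₀
    simp only [ne_eq, Nat.add_eq_zero_iff, one_ne_zero, and_false, not_false_eq_true, zero_pow, zero_mul] at this
    have hp : 0 < t₀ ^ (m+1) := by positivity
    by_contra hcon
    push Not at hcon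
    have := mul_pos hp (sub_pos.2 hcon)
    linarith

noncomputable def KK (ε : ℝ) : ℝ := 4 * π ^ 2 * (ε ^ 2)⁻¹

lemma KK_pos {ε : ℝ} (h : 0 < ε) : 0 < KK ε := by unfold KK; positivity

lemma IsH.exp_up {T K : ℝ} {h : ℝ → ℝ} (H : IsH T K h) (hT : 0 < T) (hK : 0 < K) (t : ℝ)
    (ht : t ∈ Icc 0 T) : Real.exp (2 * h t) ≤ Real.sqrt T := by
  have := H.upper hT hK t ht
  have h1 : Real.sqrt T = Real.exp (Real.log T / 2) := by
    rw [Real.exp_half, Real.exp_log hT]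
  rw [h1, Real.exp_le_exp]; linarith

lemma IsH.exp_dn {T K : ℝ} {h : ℝ → ℝ} (H : IsH T K h) (hT : 0 < T) (hK : 0 < K) (t : ℝ)
    (ht : t ∈ Icc 0 T) : Real.sqrt t * Real.exp (-(2 * h t)) ≤ 1 := by
  rcases eq_or_lt_of_le ht.1 with h0 | h0
  · rw [← h0]; simp
  have := H.lower2 hT hK t ⟨h0, ht.2⟩
  have h1 : Real.sqrt t = Real.exp (Real.log t / 2) := by
    rw [Real.exp_half, Real.exp_log h0]
  rw [h1, ← Real.exp_add, Real.exp_le_one_iff]; linarith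

lemma IsH.low_eps (T : ℝ) (hT : 0 < T) : ∃ B, 0 ≤ B ∧ ∀ ε h, 0 < ε → IsH T (KK ε) h → ε < 1/8 →
    ∀ t ∈ Icc 0 T, Real.log ε - B ≤ h t := by
  refine ⟨T + |1/4 * Real.log T| + 2, by positivity, fun ε h hε H hε' t ht => ?_⟩
  have := H.lower hT (KK_pos hε) (T + |1/4 * Real.log T| + 2 - Real.log ε) ?_ ?_ t ht
  · linarith [ht.1]
  · have h1 : Real.exp (2 * (T - (T + |1/4 * Real.log T| + 2 - Real.log ε))) ≤ ε ^ 2 * Real.exp (-4) := by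
      have : ε ^ 2 = Real.exp (2 * Real.log ε) := by
        rw [two_mul, Real.exp_add, Real.exp_log hε]; ring
      rw [this, ← Real.exp_add, Real.exp_le_exp]
      linarith [abs_nonneg (1/4 * Real.log T)]
    have h2 : π ^ 2 * Real.exp (-4) < 1 := by
      rw [Real.exp_neg, ← div_eq_mul_inv, div_lt_one (Real.exp_pos _)]
      have h3 : (2.7:ℝ) < Real.exp 1 := by linarith [Real.exp_one_gt_d9]
      have h4 : Real.exp 4 = Real.exp 1 ^ 4 := by rw [← Real.exp_nat_mul]; norm_num
      have h5 : π ^ 2 < 3.15 ^ 2 := by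
        have := Real.pi_lt_d2; have := Real.pi_pos; gcongr
      have h6 : (2.7:ℝ) ^ 4 < Real.exp 1 ^ 4 := by gcongr
      rw [h4]; norm_num at h5 h6 ⊢; linarith
    calc _ ≤ KK ε / 4 * (ε ^ 2 * Real.exp (-4)) := by
          have := KK_pos hε
          gcongr
      _ = π ^ 2 * Real.exp (-4) := by unfold KK; field_simp
      _ < 1 := h2
  · have h3 : Real.log ε ≤ 0 := Real.log_nonpos hε.le (by linarith)
    linarith [neg_abs_le (1/4 * Real.log T)]

noncomputable def lam (ε t : ℝ) : ℝ := ε * (ε + Real.sqrt t)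

lemma lam_pos {ε t : ℝ} (hε : 0 < ε) : 0 < lam ε t := by
  unfold lam; have := Real.sqrt_nonneg t; positivity

lemma exp_lam (T : ℝ) (hT : 0 < T) : ∃ C, 0 ≤ C ∧ ∀ ε h, 0 < ε → IsH T (KK ε) h → ε < 1/8 →
    ∀ t ∈ Icc 0 T, Real.exp (-(2 * h t)) * lam ε t ≤ C := by
  obtain ⟨B, hB, hb⟩ := IsH.low_eps T hT
  refine ⟨Real.exp (2 * B) + 1, by positivity, fun ε h hε H hε' t ht => ?_⟩
  have h1 := hb ε h hε H hε' t ht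
  have h2 := H.exp_dn hT (KK_pos hε) t ht
  have h3 : Real.exp (-(2 * h t)) * ε ^ 2 ≤ Real.exp (2 * B) := by
    have : ε ^ 2 = Real.exp (2 * Real.log ε) := by
      rw [two_mul, Real.exp_add, Real.exp_log hε]; ring
    rw [this, ← Real.exp_add, Real.exp_le_exp]; linarith
  unfold lam
  have : ε * (Real.sqrt t * Real.exp (-(2 * h t))) ≤ 1 * 1 := by
    gcongr; linarith
  nlinarith

lemma abs_h (T : ℝ) (hT : 0 < T) : ∃ C, 0 ≤ C ∧ ∀ ε h, 0 < ε → IsH T (KK ε) h → ε < 1/8 →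
    ∀ t ∈ Icc 0 T, |h t| * ε ^ 2 ≤ C := by
  obtain ⟨B, hB, hb⟩ := IsH.low_eps T hT
  refine ⟨B + 1 + |1/4 * Real.log T|, by positivity, fun ε h hε H hε' t ht => ?_⟩
  have h1 := hb ε h hε H hε' t ht
  have h2 := H.upper hT (KK_pos hε) t ht
  have h3 : Real.log ε⁻¹ ≤ ε⁻¹ - 1 := Real.log_le_sub_one_of_pos (by positivity)
  rw [Real.log_inv] at h3
  have h4 : |h t| ≤ ε⁻¹ + B + |1/4 * Real.log T| := by
    have : 0 < ε⁻¹ := by positivity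
    rw [abs_le]; constructor
    · linarith [abs_nonneg (1/4 * Real.log T)]
    · linarith [le_abs_self (1/4 * Real.log T)]
  calc _ ≤ (ε⁻¹ + B + |1/4 * Real.log T|) * ε ^ 2 := by gcongr
    _ = ε + (B + |1/4 * Real.log T|) * ε ^ 2 := by field_simp; ring
    _ ≤ 1 + (B + |1/4 * Real.log T|) * 1 := by
      gcongr
      · linarith
      · nlinarith
    _ = _ := by ring

end Epart
section Fpart

lemma FF_smooth {T K : ℝ} {h : ℝ → ℝ} (H : IsH T K h) : ContDiff ℝ (⊤:ℕ∞) (FF K h) := by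
  have := H.1
  unfold FF
  fun_prop

lemma FF_bound (T : ℝ) (hT : 0 < T) (n : ℕ) (C : ℝ) (hC : 1 ≤ C) : ∃ C', 0 ≤ C' ∧ ∀ ε h, 0 < ε → IsH T (KK ε) h → ε < 1/8 →
    ∀ t ∈ Icc 0 T, (∀ i, 1 ≤ i → i ≤ n → |iteratedDeriv i h t| * lam ε t ^ i ≤ C) →
      |iteratedDeriv n (FF (KK ε) h) t| * lam ε t ^ n * ε ^ 2 ≤ C' := by
  obtain ⟨C₁, hC₁, hexp⟩ := exp_lam T hT
  set N : ℝ := n.factorial * 2 ^ n * C ^ n with hN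
  set N' : ℝ := (n-1).factorial * 2 ^ (n-1) * C ^ (n-1) with hN'
  refine ⟨π ^ 2 * (N * Real.sqrt T + (Real.sqrt T * N + n * (C₁ * N'))), by positivity,
    fun ε h hε H hε' t ht hb => ?_⟩
  have hl : 0 < lam ε t := lam_pos hε
  have hs := H.1
  have e1 := exp_comp_bound n 2 C (lam ε t) hl hC (by norm_num) h hs t hb
  have e2 := exp_comp_bound n (-2) C (lam ε t) hl hC (by norm_num) h hs t hb
  have e3 := exp_comp_bound (n-1) (-2) C (lam ε t) hl hC (by norm_num) h hs t
    (fun i hi hi' => hb i hi (by omega))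
  have u1 := H.exp_up hT (KK_pos hε) t ht
  have u2 := H.exp_dn hT (KK_pos hε) t ht
  have u3 := hexp ε h hε H hε' t ht
  rw [← hN] at e1 e2
  rw [← hN'] at e3
  rw [neg_mul] at e2 e3
  have hNpos : 0 ≤ N := by positivity
  have hNpos' : 0 ≤ N' := by positivity
  have hst : Real.sqrt t ≤ Real.sqrt T := Real.sqrt_le_sqrt ht.2
  have hprod : |iteratedDeriv n (fun t => t * Real.exp (-2 * h t)) t| * lam ε t ^ n ≤
      Real.sqrt T * N + n * (C₁ * N') := by
    have b1 : t * (|iteratedDeriv n (fun t => Real.exp (-2 * h t)) t| * lam ε t ^ n) ≤ Real.sqrt T * N := by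
      calc _ ≤ t * (N * Real.exp (-(2 * h t))) := by gcongr; exact ht.1
        _ = Real.sqrt t * (Real.sqrt t * Real.exp (-(2 * h t))) * N := by
          nth_rewrite 1 [← Real.mul_self_sqrt ht.1]; ring
        _ ≤ Real.sqrt T * 1 * N := by gcongr
        _ = _ := by ring
    cases n with
    | zero =>
      simp only [iteratedDeriv_zero, pow_zero, mul_one, Nat.cast_zero, zero_mul, add_zero] at b1 ⊢
      rw [abs_mul, abs_of_nonneg ht.1]; exact b1
    | succ n =>
      have hy : ContDiff ℝ (⊤:ℕ∞) (fun t => Real.exp (-2 * h t)) := by fun_prop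
      rw [congrFun (iter_mul_id _ hy n) t]
      simp only [Nat.add_sub_cancel] at e3
      have b2 : (|iteratedDeriv n (fun t => Real.exp (-2 * h t)) t| * lam ε t ^ n) * lam ε t ≤ C₁ * N' := by
        calc _ ≤ (N' * Real.exp (-(2 * h t))) * lam ε t := by gcongr
          _ = N' * (Real.exp (-(2 * h t)) * lam ε t) := by ring
          _ ≤ N' * C₁ := by gcongr
          _ = _ := by ring
      calc _ ≤ (t * |iteratedDeriv (n+1) (fun t => Real.exp (-2 * h t)) t| +
            (n+1) * |iteratedDeriv n (fun t => Real.exp (-2 * h t)) t|) * lam ε t ^ (n+1) := by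
            gcongr
            refine (abs_add_le _ _).trans ?_
            rw [abs_mul, abs_mul, abs_of_nonneg ht.1, abs_of_nonneg (show (0:ℝ) ≤ n + 1 by positivity)]
        _ = t * (|iteratedDeriv (n+1) (fun t => Real.exp (-2 * h t)) t| * lam ε t ^ (n+1)) +
            (n+1) * (|iteratedDeriv n (fun t => Real.exp (-2 * h t)) t| * lam ε t ^ n * lam ε t) := by ring
        _ ≤ Real.sqrt T * N + (n+1) * (C₁ * N') := by gcongr
        _ = _ := by push_cast; ring
  have hF : iteratedDeriv n (FF (KK ε) h) t = KK ε / 4 *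
      (iteratedDeriv n (fun t => Real.exp (2 * h t)) t - iteratedDeriv n (fun t => t * Real.exp (-2 * h t)) t) := by
    have c1 : ContDiff ℝ n (fun t => Real.exp (2 * h t)) :=
      ContDiff.of_le (n := (⊤:ℕ∞)) (by fun_prop) (by exact_mod_cast le_top)
    have c2 : ContDiff ℝ n (fun t => t * Real.exp (-2 * h t)) :=
      ContDiff.of_le (n := (⊤:ℕ∞)) (by fun_prop) (by exact_mod_cast le_top)
    rw [← iteratedDeriv_fun_sub c1.contDiffAt c2.contDiffAt,
      ← iteratedDeriv_const_mul _ (c1.sub c2).contDiffAt]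
    congr 1
    funext s; simp [FF]
  rw [hF, abs_mul, abs_of_pos (by have := KK_pos hε; positivity)]
  calc _ ≤ KK ε / 4 * (|iteratedDeriv n (fun t => Real.exp (2 * h t)) t| +
        |iteratedDeriv n (fun t => t * Real.exp (-2 * h t)) t|) * lam ε t ^ n * ε ^ 2 := by
        have := KK_pos hε
        gcongr
        exact abs_sub _ _
    _ = π ^ 2 * (|iteratedDeriv n (fun t => Real.exp (2 * h t)) t| * lam ε t ^ n +
        |iteratedDeriv n (fun t => t * Real.exp (-2 * h t)) t| * lam ε t ^ n) := by
        unfold KK; field_simp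
    _ ≤ π ^ 2 * (N * Real.sqrt T + (Real.sqrt T * N + n * (C₁ * N'))) := by
        exact mul_le_mul_of_nonneg_left (add_le_add
          (e1.trans (mul_le_mul_of_nonneg_left u1 hNpos)) hprod) (by positivity)

lemma S_all (T : ℝ) (hT : 0 < T) (n : ℕ) : ∃ C, 1 ≤ C ∧ ∀ ε h, 0 < ε → IsH T (KK ε) h → ε < 1/8 →
    ∀ t ∈ Ico 0 T, ∀ i, 1 ≤ i → i ≤ n → |iteratedDeriv i h t| * lam ε t ^ i ≤ C := by
  induction n with
  | zero => exact ⟨1, le_rfl, fun ε h _ _ _ t _ i hi hi' => by omega⟩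
  | succ j ih =>
    obtain ⟨C, hC, hb⟩ := ih
    obtain ⟨C₁, hC₁, hR⟩ := FF_bound T hT j C hC
    obtain ⟨C₂, hC₂, hR'⟩ := FF_bound T hT (j-1) C hC
    refine ⟨C + 2 ^ (j+1) * C₁ + (1 + 4 * C₂ + 2 * (j * C)), by
      have : 0 ≤ 2 ^ (j+1) * C₁ := by positivity
      have : 0 ≤ j * C := by positivity
      linarith, fun ε h hε H hε' t ht i hi hi' => ?_⟩
    have p1 : 0 ≤ 2 ^ (j+1) * C₁ := by positivity
    have p2 : 0 ≤ j * C := by positivity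
    have hl := lam_pos (t := t) hε
    rcases Nat.lt_or_ge i (j+1) with hlt | hge
    · have := hb ε h hε H hε' t ht i hi (by omega)
      linarith
    obtain rfl : i = j + 1 := by omega
    rcases le_total t (ε ^ 2) with hsm | hbig
    · -- small t
      have hbd : ∀ s ∈ Icc 0 t, |iteratedDeriv j (FF (KK ε) h) s| ≤ C₁ / (ε ^ 2) ^ (j+1) := by
        intro s hs
        have hsT : s ∈ Ico 0 T := ⟨hs.1, hs.2.trans_lt ht.2⟩
        have := hR ε h hε H hε' s ⟨hsT.1, hsT.2.le⟩ (hb ε h hε H hε' s hsT)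
        rw [le_div_iff₀ (by positivity)]
        refine le_trans ?_ this
        have h1 : ε ^ 2 ≤ lam ε s := by unfold lam; nlinarith [Real.sqrt_nonneg s]
        have h2 : (ε ^ 2) ^ j ≤ lam ε s ^ j := by gcongr
        rw [pow_succ, mul_assoc]
        gcongr
      have hY : ∀ s ∈ Icc 0 t, HasDerivAt (iteratedDeriv (j+1) h) (iteratedDeriv (j+2) h s) s := by
        intro s _
        rw [iteratedDeriv_succ (n := j+1)]
        exact (H.1.differentiable_iteratedDeriv (j+1) (by exact_mod_cast WithTop.coe_lt_top _) s).hasDerivAt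
      have hode : ∀ s ∈ Icc 0 t, s * iteratedDeriv (j+2) h s + (j+1) * iteratedDeriv (j+1) h s =
          iteratedDeriv j (FF (KK ε) h) s := fun s hs => H.ode j s ⟨hs.1, hs.2.trans ht.2.le⟩
      have hM : 0 ≤ C₁ / (ε ^ 2) ^ (j+1) := by positivity
      have b1 := fuchs_bound j _ _ _ _ t ht.1 hM hY hode (fun s hs => (le_abs_self _).trans (hbd s hs))
      have b2 := fuchs_bound j (fun s => - iteratedDeriv (j+1) h s) (fun s => - iteratedDeriv (j+2) h s)
        (fun s => - iteratedDeriv j (FF (KK ε) h) s) _ t ht.1 hM (fun s hs => (hY s hs).neg)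
        (fun s hs => by rw [← hode s hs]; ring) (fun s hs => (neg_le_abs _).trans (hbd s hs))
      have b3 : |iteratedDeriv (j+1) h t| ≤ C₁ / (ε ^ 2) ^ (j+1) := abs_le.2 ⟨by linarith, b1⟩
      have hl2 : lam ε t ≤ 2 * ε ^ 2 := by
        have : Real.sqrt t ≤ ε := by rw [Real.sqrt_le_left hε.le]; exact hsm
        unfold lam; nlinarith
      calc _ ≤ C₁ / (ε ^ 2) ^ (j+1) * (2 * ε ^ 2) ^ (j+1) := by gcongr
        _ = 2 ^ (j+1) * C₁ := by rw [mul_pow]; field_simp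
        _ ≤ _ := by nlinarith
    · have ht0 : 0 < t := lt_of_lt_of_le (by positivity) hbig
      have hsq : ε ≤ Real.sqrt t := Real.le_sqrt_of_sq_le hbig
      have hss := Real.mul_self_sqrt ht0.le
      have hl1 : lam ε t ≤ 2 * t := by unfold lam; nlinarith
      have hl2 : lam ε t ^ 2 ≤ 4 * ε ^ 2 * t := by
        have : lam ε t ≤ 2 * ε * Real.sqrt t := by unfold lam; nlinarith
        calc _ ≤ (2 * ε * Real.sqrt t) ^ 2 := by gcongr
          _ = 4 * ε ^ 2 * (Real.sqrt t * Real.sqrt t) := by ring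
          _ = _ := by rw [hss]
      cases j with
      | zero =>
        have q1 := H.P_le hT (KK_pos hε) t ht
        have q2 := H.P_nonneg hT (KK_pos hε) t ⟨ht.1, ht.2.le⟩
        simp only [zero_add, iteratedDeriv_one, pow_one]
        have q3 : 0 ≤ deriv h t := nonneg_of_mul_nonneg_right q2 ht0
        rw [abs_of_nonneg q3]
        have : deriv h t * lam ε t ≤ 1 := by
          calc _ ≤ deriv h t * (2 * t) := by gcongr
            _ ≤ 1 := by linarith
        linarith
      | succ j =>
        have hode := H.ode j t ⟨ht.1, ht.2.le⟩
        have r1 := hR' ε h hε H hε' t ⟨ht.1, ht.2.le⟩ (fun i hi hi' => hb ε h hε H hε' t ht i hi (by omega))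
        have r2 := hb ε h hε H hε' t ht (j+1) (by omega) le_rfl
        simp only [Nat.add_sub_cancel] at r1
        have r3 : t * |iteratedDeriv (j+2) h t| ≤ |iteratedDeriv j (FF (KK ε) h) t| + (j+1) * |iteratedDeriv (j+1) h t| := by
          rw [← abs_of_pos ht0, ← abs_mul, abs_of_pos ht0,
            show t * iteratedDeriv (j+2) h t = iteratedDeriv j (FF (KK ε) h) t - (j+1) * iteratedDeriv (j+1) h t by linarith]
          refine (abs_sub _ _).trans ?_
          rw [abs_mul, abs_of_nonneg (show (0:ℝ) ≤ j + 1 by positivity)]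
        have : |iteratedDeriv (j+2) h t| * lam ε t ^ (j+2) * t ≤ (4 * C₂ + 2 * ((j+1) * C)) * t := by
          calc _ = (t * |iteratedDeriv (j+2) h t|) * lam ε t ^ (j+2) := by ring
            _ ≤ (|iteratedDeriv j (FF (KK ε) h) t| + (j+1) * |iteratedDeriv (j+1) h t|) * lam ε t ^ (j+2) := by gcongr
            _ = (|iteratedDeriv j (FF (KK ε) h) t| * lam ε t ^ j) * lam ε t ^ 2 +
               (j+1) * (|iteratedDeriv (j+1) h t| * lam ε t ^ (j+1)) * lam ε t := by ring
            _ ≤ (|iteratedDeriv j (FF (KK ε) h) t| * lam ε t ^ j) * (4 * ε ^ 2 * t) + (j+1) * C * (2 * t) := by gcongr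
            _ = 4 * (|iteratedDeriv j (FF (KK ε) h) t| * lam ε t ^ j * ε ^ 2) * t + (j+1) * C * (2 * t) := by ring
            _ ≤ 4 * C₂ * t + (j+1) * C * (2 * t) := by gcongr
            _ = _ := by ring
        have := le_of_mul_le_mul_right this ht0
        push_cast at *
        linarith

end Fpart
section Gpart
variable {E : Type*} [NormedAddCommGroup E] [InnerProductSpace ℝ E]

lemma id_bound (n : ℕ) (x : E) : ‖iteratedFDeriv ℝ (n+2) (fun y : E => y) x‖ = 0 := by
  rw [← norm_iteratedFDeriv_fderiv]
  have : fderiv ℝ (fun y : E => y) = fun _ => ContinuousLinearMap.id ℝ E := by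
    funext y; exact fderiv_id
  rw [this, iteratedFDeriv_succ_const]; simp

lemma id_bound1 (x : E) : ‖iteratedFDeriv ℝ 1 (fun y : E => y) x‖ ≤ 1 := by
  rw [norm_iteratedFDeriv_one]
  have : fderiv ℝ (fun y : E => y) x = ContinuousLinearMap.id ℝ E := fderiv_id
  rw [this]; exact ContinuousLinearMap.norm_id_le

lemma normsq_sum (n : ℕ) (x : E) : ‖iteratedFDeriv ℝ n (fun y : E => ‖y‖ ^ 2) x‖ ≤
    ∑ i ∈ Finset.range (n+1), (n.choose i : ℝ) * ‖iteratedFDeriv ℝ i (fun y : E => y) x‖ *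
      ‖iteratedFDeriv ℝ (n-i) (fun y : E => y) x‖ := by
  have := ContinuousLinearMap.norm_iteratedFDeriv_le_of_bilinear_of_le_one (innerSL ℝ (E := E))
    (f := fun y : E => y) (g := fun y : E => y) (N := (⊤:ℕ∞)) contDiff_id contDiff_id x (n := n)
    (by exact_mod_cast le_top) (norm_innerSL_le ℝ)
  have he : (fun y : E => ‖y‖ ^ 2) = fun y : E => (innerSL ℝ y) y := by
    funext y; rw [innerSL_apply_apply, real_inner_self_eq_norm_sq]
  rw [he]; exact this

lemma normsq_bound (n : ℕ) (hn : 1 ≤ n) (x : E) (l D : ℝ) (hl : 0 < l) (h1 : 2 * ‖x‖ ≤ l * D)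
    (h2 : 2 ≤ l * D ^ 2) (hD : 0 ≤ D) :
    ‖iteratedFDeriv ℝ n (fun y : E => l⁻¹ * ‖y‖ ^ 2) x‖ ≤ D ^ n := by
  have hc : ContDiffAt ℝ n (fun y : E => ‖y‖ ^ 2) x := (contDiff_norm_sq ℝ).contDiffAt
  have h0 : iteratedFDeriv ℝ n (fun y : E => l⁻¹ * ‖y‖ ^ 2) x =
    l⁻¹ • iteratedFDeriv ℝ n (fun y : E => ‖y‖ ^ 2) x := by
    simpa only [smul_eq_mul] using iteratedFDeriv_const_smul_apply' (a := l⁻¹) hc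
  rw [h0, norm_smul, Real.norm_of_nonneg (by positivity), inv_mul_le_iff₀ hl]
  refine (normsq_sum n x).trans ?_
  obtain ⟨N, hN⟩ : ∃ N : ℕ → ℝ, ∀ i, ‖iteratedFDeriv ℝ i (fun y : E => y) x‖ = N i :=
    ⟨_, fun i => rfl⟩
  have n0 : N 0 = ‖x‖ := by rw [← hN, norm_iteratedFDeriv_zero]
  have n1 : N 1 ≤ 1 := by rw [← hN]; exact id_bound1 x
  have n1' : 0 ≤ N 1 := by rw [← hN]; exact norm_nonneg _
  have n2 : ∀ k, N (k+2) = 0 := fun k => by rw [← hN]; exact id_bound k x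
  simp only [hN]
  match n, hn with
  | 1, _ =>
    simp [Finset.sum_range_succ, n0]
    nlinarith [norm_nonneg x]
  | 2, _ =>
    have := n2 0
    simp only [zero_add] at this
    simp [Finset.sum_range_succ, this]
    nlinarith
  | (m+3), _ =>
    refine le_trans (le_of_eq (Finset.sum_eq_zero ?_)) (by positivity)
    intro i hi
    rcases Nat.lt_or_ge i 2 with h | h
    · obtain ⟨k, hk⟩ : ∃ k, m + 3 - i = k + 2 := ⟨m + 1 - i, by omega⟩
      rw [hk, n2, mul_zero]
    · obtain ⟨k, hk⟩ : ∃ k, i = k + 2 := ⟨i - 2, by omega⟩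
      rw [hk, n2, mul_zero, zero_mul]

lemma u_bound (T : ℝ) (hT : 0 < T) (n : ℕ) : ∃ C, 0 ≤ C ∧ ∀ ε h, 0 < ε → IsH T (KK ε) h → ε < 1/8 →
    ∀ x : E, ‖x‖ ^ 2 < T → ‖iteratedFDeriv ℝ n (fun y : E => h (‖y‖ ^ 2)) x‖ ≤ C * ε⁻¹ ^ (n+2) := by
  obtain ⟨C₀, hC₀, hS⟩ := S_all T hT n
  obtain ⟨C₁, hC₁, hA⟩ := abs_h T hT
  refine ⟨n.factorial * (C₀ + C₁) * 2 ^ n, by positivity, fun ε h hε H hε' x hx => ?_⟩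
  have hl : 0 < lam ε (‖x‖ ^ 2) := lam_pos hε
  set l := lam ε (‖x‖ ^ 2) with hldef
  have hl' : l = ε * (ε + ‖x‖) := by
    rw [hldef]; unfold lam; rw [Real.sqrt_sq (norm_nonneg x)]
  have ht : ‖x‖ ^ 2 ∈ Ico 0 T := ⟨by positivity, hx⟩
  have hs := H.1
  have hψ : ContDiff ℝ (⊤:ℕ∞) (fun y : E => l⁻¹ * ‖y‖ ^ 2) := contDiff_const.mul (contDiff_norm_sq ℝ)
  have hφ : ContDiff ℝ (⊤:ℕ∞) (fun s : ℝ => h (l * s)) := by fun_prop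
  have hε2 : 1 ≤ ε⁻¹ ^ 2 := by
    apply one_le_pow₀
    rw [one_le_inv₀ hε]; linarith
  have := norm_iteratedFDeriv_comp_le hφ hψ (n := n) (by exact_mod_cast le_top) x
    (C := (C₀ + C₁) * ε⁻¹ ^ 2) (D := 2 / ε)
    (by
      intro i hi
      rw [norm_iteratedFDeriv_eq_norm_iteratedDeriv,
        iteratedDeriv_comp_const_mul (hs.of_le (by exact_mod_cast le_top))]
      simp only [mul_inv_cancel_left₀ hl.ne', norm_mul, norm_pow, Real.norm_eq_abs, abs_of_pos hl]
      rcases Nat.eq_zero_or_pos i with h0 | h0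
      · subst h0
        simp only [pow_zero, one_mul, iteratedDeriv_zero]
        have := hA ε h hε H hε' (‖x‖ ^ 2) ⟨ht.1, ht.2.le⟩
        calc _ = (|h (‖x‖ ^ 2)| * ε ^ 2) * ε⁻¹ ^ 2 := by field_simp
          _ ≤ (C₀ + C₁) * ε⁻¹ ^ 2 := by gcongr; linarith
      · have := hS ε h hε H hε' _ ht i h0 hi
        rw [mul_comm]
        calc _ ≤ C₀ * 1 := by rw [mul_one]; exact this
          _ ≤ _ := by gcongr; linarith)
    (by
      intro i hi1 hi
      apply normsq_bound i hi1 x l _ hl _ _ (by positivity)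
      · rw [hl']; field_simp; nlinarith
      · rw [hl', div_pow]; field_simp; nlinarith [norm_nonneg x])
  have he : (fun s : ℝ => h (l * s)) ∘ (fun y : E => l⁻¹ * ‖y‖ ^ 2) = fun y : E => h (‖y‖ ^ 2) := by
    funext y; simp [mul_inv_cancel_left₀ hl.ne']
  rw [he] at this
  refine this.trans (le_of_eq ?_)
  rw [div_eq_mul_inv, mul_pow, pow_add]; ring
  
end Gpart
section Hpart

lemma hasF_radial (h : ℝ → ℝ) (hs : ContDiff ℝ (⊤:ℕ∞) h) (y : (EuclideanSpace ℝ (Fin 2))) :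
    HasFDerivAt (fun y : (EuclideanSpace ℝ (Fin 2)) => h (‖y‖ ^ 2)) (deriv h (‖y‖ ^ 2) • (2 • innerSL ℝ y)) y := by
  have h1 : HasDerivAt h (deriv h (‖y‖ ^ 2)) (‖y‖ ^ 2) :=
    ((hs.differentiable (by simp)) _).hasDerivAt
  exact h1.comp_hasFDerivAt y (hasStrictFDerivAt_norm_sq y).hasFDerivAt

lemma lap_radial (h : ℝ → ℝ) (hs : ContDiff ℝ (⊤:ℕ∞) h) (x : (EuclideanSpace ℝ (Fin 2))) :
    laplacian2 (fun y => h (‖y‖ ^ 2)) x =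
      4 * (‖x‖ ^ 2 * deriv (deriv h) (‖x‖ ^ 2) + deriv h (‖x‖ ^ 2)) := by
  have hs' : ContDiff ℝ (⊤:ℕ∞) (deriv h) := (contDiff_infty_iff_deriv.1 hs).2
  have key : ∀ i : Fin 2, fderiv ℝ (fun y : (EuclideanSpace ℝ (Fin 2)) => fderiv ℝ (fun y : (EuclideanSpace ℝ (Fin 2)) => h (‖y‖ ^ 2)) y (EuclideanSpace.single i 1)) x
      (EuclideanSpace.single i 1) = 4 * (deriv (deriv h) (‖x‖ ^ 2) * x i ^ 2) + 2 * deriv h (‖x‖ ^ 2) := by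
    intro i
    have e1 : (fun y : (EuclideanSpace ℝ (Fin 2)) => fderiv ℝ (fun y : (EuclideanSpace ℝ (Fin 2)) => h (‖y‖ ^ 2)) y (EuclideanSpace.single i 1)) =
        fun y => deriv h (‖y‖ ^ 2) * (2 * y i) := by
      funext y
      rw [(hasF_radial h hs y).fderiv]
      simp [EuclideanSpace.inner_single_right]
    rw [e1]
    have hp : HasFDerivAt (fun y : (EuclideanSpace ℝ (Fin 2)) => 2 * y i) ((2:ℝ) • (EuclideanSpace.proj i : (EuclideanSpace ℝ (Fin 2)) →L[ℝ] ℝ)) x :=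
      ((EuclideanSpace.proj i : (EuclideanSpace ℝ (Fin 2)) →L[ℝ] ℝ).hasFDerivAt).const_mul 2
    have h2 := ((hasF_radial (deriv h) hs' x).mul hp).fderiv
    have h3 := congrArg (fun L : (EuclideanSpace ℝ (Fin 2)) →L[ℝ] ℝ => L (EuclideanSpace.single i 1)) h2
    refine Eq.trans ?_ (h3.trans ?_)
    · rfl
    · simp [EuclideanSpace.inner_single_right]; ring
  unfold laplacian2
  rw [Fin.sum_univ_two, key, key, EuclideanSpace.real_norm_sq_eq, Fin.sum_univ_two]; ring

lemma second_dir (w : (EuclideanSpace ℝ (Fin 2)) → ℝ) (x e : (EuclideanSpace ℝ (Fin 2))) (hw : ContDiffAt ℝ (⊤:ℕ∞) w x) (hmax : IsLocalMax w x) :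
    fderiv ℝ (fun y => fderiv ℝ w y e) x e ≤ 0 := by
  by_contra hcon
  push Not at hcon
  have hw2 : ContDiffAt ℝ 2 w x := by exact_mod_cast contDiffAt_infty.1 hw 2
  have hline : ∀ t : ℝ, HasDerivAt (fun t : ℝ => x + t • e) e t := fun t => by
    simpa using ((hasDerivAt_id t).smul_const e).const_add x
  have htend : Filter.Tendsto (fun t : ℝ => x + t • e) (nhds 0) (nhds x) := by
    have := (hline 0).continuousAt.tendsto
    simpa using this
  have hdiff : ∀ᶠ y in nhds x, DifferentiableAt ℝ w y := by
    filter_upwards [hw2.eventually (by simp)] with y hy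
    exact hy.differentiableAt (by simp)
  have hd1 : ∀ᶠ t in nhds (0:ℝ), deriv (fun t : ℝ => w (x + t • e)) t = fderiv ℝ w (x + t • e) e := by
    filter_upwards [htend.eventually hdiff] with t ht
    exact (ht.hasFDerivAt.comp_hasDerivAt t (hline t)).deriv
  have hfd : DifferentiableAt ℝ (fun y => fderiv ℝ w y e) x := by
    have : ContDiffAt ℝ 1 (fderiv ℝ w) x := hw2.fderiv_right (by norm_num)
    exact (this.differentiableAt (by simp)).clm_apply (differentiableAt_const e)
  have hd2 : deriv (deriv (fun t : ℝ => w (x + t • e))) 0 = fderiv ℝ (fun y => fderiv ℝ w y e) x e := by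
    rw [Filter.EventuallyEq.deriv_eq hd1]
    have h0 : HasFDerivAt (fun y => fderiv ℝ w y e) (fderiv ℝ (fun y => fderiv ℝ w y e) x) (x + (0:ℝ) • e) := by
      simpa using hfd.hasFDerivAt
    exact (h0.comp_hasDerivAt 0 (hline 0)).deriv
  have hmax' : IsLocalMax (fun t : ℝ => w (x + t • e)) 0 := by
    have : ∀ᶠ t in nhds (0:ℝ), w (x + t • e) ≤ w x := htend.eventually hmax
    simpa [IsLocalMax, IsMaxFilter] using this
  have hcont : ContinuousAt (fun t : ℝ => w (x + t • e)) 0 := by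
    have : ContinuousAt w (x + (0:ℝ) • e) := by simpa using hw.continuousAt
    exact ContinuousAt.comp this (hline 0).continuousAt
  have hmin := isLocalMin_of_deriv_deriv_pos (by rw [hd2]; exact hcon) hmax'.deriv_eq_zero hcont
  have hconst : (fun t : ℝ => w (x + t • e)) =ᶠ[nhds 0] fun _ => w (x + (0:ℝ) • e) := by
    filter_upwards [hmin, hmax'] with t h1 h2
    exact le_antisymm h2 h1
  have h3 : deriv (deriv (fun t : ℝ => w (x + t • e))) 0 = 0 := by
    rw [hconst.deriv.deriv_eq]; simp
  rw [hd2] at h3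
  linarith

lemma lap_sub (u v : (EuclideanSpace ℝ (Fin 2)) → ℝ) (x : (EuclideanSpace ℝ (Fin 2))) (hu : ContDiffAt ℝ (⊤:ℕ∞) u x) (hv : ContDiffAt ℝ (⊤:ℕ∞) v x) :
    laplacian2 (fun y => u y - v y) x = laplacian2 u x - laplacian2 v x := by
  unfold laplacian2
  rw [← Finset.sum_sub_distrib]
  apply Finset.sum_congr rfl
  intro i _
  set e : (EuclideanSpace ℝ (Fin 2)) := EuclideanSpace.single i 1
  have key : ∀ u : (EuclideanSpace ℝ (Fin 2)) → ℝ, ContDiffAt ℝ (⊤:ℕ∞) u x → (∀ᶠ y in nhds x, DifferentiableAt ℝ u y) ∧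
      DifferentiableAt ℝ (fun y => fderiv ℝ u y e) x := by
    intro u hu
    have hw2 : ContDiffAt ℝ 2 u x := by exact_mod_cast contDiffAt_infty.1 hu 2
    refine ⟨?_, ?_⟩
    · filter_upwards [hw2.eventually (by simp)] with y hy
      exact hy.differentiableAt (by simp)
    · have : ContDiffAt ℝ 1 (fderiv ℝ u) x := hw2.fderiv_right (by norm_num)
      exact (this.differentiableAt (by simp)).clm_apply (differentiableAt_const e)
  have h1 : (fun y => fderiv ℝ (fun y => u y - v y) y e) =ᶠ[nhds x]
      fun y => fderiv ℝ u y e - fderiv ℝ v y e := by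
    filter_upwards [(key u hu).1, (key v hv).1] with y h1 h2
    rw [fderiv_fun_sub h1 h2]; rfl
  rw [h1.fderiv_eq, fderiv_fun_sub (key u hu).2 (key v hv).2]; rfl

lemma comparison (r₀ ε : ℝ) (hr : 0 < r₀) (hε : 0 < ε) (u v : (EuclideanSpace ℝ (Fin 2)) → ℝ)
    (hu : IsDirichletSolR r₀ ε u) (hv : IsDirichletSolR r₀ ε v) :
    ∀ x ∈ closedBall (0 : (EuclideanSpace ℝ (Fin 2))) (2 * r₀), u x ≤ v x := by
  intro x₁ hx₁
  by_contra hcon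
  push Not at hcon
  obtain ⟨x, hx, hmax⟩ := (isCompact_closedBall (0 : (EuclideanSpace ℝ (Fin 2))) (2 * r₀)).exists_isMaxOn ⟨x₁, hx₁⟩
    (hu.1.sub hv.1)
  have hpos : v x < u x := by
    have := hmax hx₁
    simp only [mem_ofPred_eq, Pi.sub_apply] at this
    linarith
  have hxb : x ∈ ball (0 : (EuclideanSpace ℝ (Fin 2))) (2 * r₀) := by
    rcases lt_or_eq_of_le (mem_closedBall.1 hx) with h | h
    · exact h
    · have h1 := hu.2.2.2 x h
      have h2 := hv.2.2.2 x h
      linarith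
  have hnb := isOpen_ball.mem_nhds hxb
  have cu : ContDiffAt ℝ (⊤:ℕ∞) u x := hu.2.1.contDiffAt hnb
  have cv : ContDiffAt ℝ (⊤:ℕ∞) v x := hv.2.1.contDiffAt hnb
  have hloc : IsLocalMax (fun y => u y - v y) x := by
    filter_upwards [hnb] with y hy
    exact hmax (ball_subset_closedBall hy)
  have h1 : laplacian2 (fun y => u y - v y) x ≤ 0 := by
    unfold laplacian2
    exact Finset.sum_nonpos fun i _ => second_dir _ x _ (cu.sub cv) hloc
  rw [lap_sub u v x cu cv, hu.2.2.1 x hxb, hv.2.2.1 x hxb, ← mul_sub] at h1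
  have e1 : Real.exp (2 * v x) < Real.exp (2 * u x) := Real.exp_lt_exp.2 (by linarith)
  have e2 : Real.exp (-(2 * u x)) ≤ Real.exp (-(2 * v x)) := Real.exp_le_exp.2 (by linarith)
  have e3 : ‖x‖ ^ 2 * Real.exp (-(2 * u x)) ≤ ‖x‖ ^ 2 * Real.exp (-(2 * v x)) := by gcongr
  have : 0 < 4 * π ^ 2 * (ε ^ 2)⁻¹ * (Real.exp (2 * u x) - ‖x‖ ^ 2 * Real.exp (-(2 * u x)) -
      (Real.exp (2 * v x) - ‖x‖ ^ 2 * Real.exp (-(2 * v x)))) := by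
    apply mul_pos (by positivity); linarith
  linarith

lemma sol_of_h (r₀ ε : ℝ) (hr : 0 < r₀) (h : ℝ → ℝ) (H : IsH (4 * r₀ ^ 2) (KK ε) h) :
    IsDirichletSolR r₀ ε (fun x => h (‖x‖ ^ 2)) := by
  have hs := H.1
  have hsm : ContDiff ℝ (⊤:ℕ∞) (fun x : (EuclideanSpace ℝ (Fin 2)) => h (‖x‖ ^ 2)) := hs.comp (contDiff_norm_sq ℝ)
  obtain ⟨δ, hδ, hh⟩ := H.2.2
  refine ⟨hsm.continuous.continuousOn, hsm.contDiffOn, ?_, ?_⟩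
  · intro x hx
    rw [mem_ball_zero_iff] at hx
    rw [lap_radial h hs, hh (‖x‖ ^ 2) ⟨by linarith [sq_nonneg ‖x‖], by nlinarith [norm_nonneg x]⟩]
    unfold KK; ring
  · intro x hx
    rw [mem_sphere_zero_iff_norm] at hx
    simp only [hx]
    rw [show (2 * r₀) ^ 2 = 4 * r₀ ^ 2 by ring, H.2.1, show 4 * r₀ ^ 2 = (2 * r₀) ^ 2 by ring, Real.log_pow]
    push_cast; ring

end Hpart
section Ipart

lemma hd_iter (f : ℝ → ℝ) (x : ℝ) (hf : ContDiffAt ℝ (⊤:ℕ∞) f x) (n : ℕ) :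
    HasDerivAt (iteratedDeriv n f) (iteratedDeriv (n+1) f x) x := by
  have h1 : ContDiffAt ℝ (n+1:ℕ) f x := contDiffAt_infty.1 hf (n+1)
  have h2 : DifferentiableAt ℝ (iteratedFDeriv ℝ n f) x :=
    h1.differentiableAt_iteratedFDeriv (by exact_mod_cast Nat.lt_succ_self n)
  have h3 : DifferentiableAt ℝ (iteratedDeriv n f) x :=
    h2.continuousMultilinear_apply_const (fun _ => (1:ℝ))
  rw [iteratedDeriv_succ]
  exact h3.hasDerivAt

lemma interp (f f1 f2 : ℝ → ℝ) (p q A B : ℝ) (hpq : p < q) (hf : ∀ s ∈ Icc p q, HasDerivAt f (f1 s) s)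
    (hf1 : ∀ s ∈ Icc p q, HasDerivAt f1 (f2 s) s) (hA : ∀ s ∈ Icc p q, |f s| ≤ A)
    (hB : ∀ s ∈ Icc p q, |f2 s| ≤ B) (s : ℝ) (hs : s ∈ Icc p q) :
    |f1 s| ≤ 2 * A / (q - p) + B * (q - p) := by
  obtain ⟨ξ, hξ, hξ'⟩ := exists_hasDerivAt_eq_slope f f1 hpq
    (fun s hs => (hf s hs).continuousAt.continuousWithinAt) (fun s hs => hf s (Ioo_subset_Icc_self hs))
  have hξ1 : ξ ∈ Icc p q := Ioo_subset_Icc_self hξ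
  have h1 : |f1 ξ| ≤ 2 * A / (q - p) := by
    rw [hξ', abs_div, abs_of_pos (sub_pos.2 hpq)]
    gcongr
    · have := abs_sub (f q) (f p)
      linarith [hA q (right_mem_Icc.2 hpq.le), hA p (left_mem_Icc.2 hpq.le)]
  have hB0 : 0 ≤ B := (abs_nonneg _).trans (hB s hs)
  have h2 : |f1 s - f1 ξ| ≤ B * (q - p) := by
    have := Convex.norm_image_sub_le_of_norm_hasDerivWithin_le (f := f1) (f' := f2) (C := B)
      (fun x hx => (hf1 x hx).hasDerivWithinAt) hB (convex_Icc p q) hξ1 hs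
    simp only [Real.norm_eq_abs] at this
    refine this.trans ?_
    gcongr
    rw [abs_le]; constructor <;> linarith [hξ1.1, hξ1.2, hs.1, hs.2]
  have h3 := abs_sub_abs_le_abs_sub (f1 s) (f1 ξ)
  linarith

noncomputable def vv (h : ℝ → ℝ) (s : ℝ) : ℝ := h (s ^ 2) - (1/2) * Real.log s

lemma vv_smooth (h : ℝ → ℝ) (hs : ContDiff ℝ (⊤:ℕ∞) h) (s : ℝ) (h0 : 0 < s) :
    ContDiffAt ℝ (⊤:ℕ∞) (vv h) s := by
  have h1 : ContDiffAt ℝ (⊤:ℕ∞) Real.log s := contDiffAt_log.2 h0.ne'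
  have h2 : ContDiff ℝ (⊤:ℕ∞) (fun s : ℝ => h (s ^ 2)) := by fun_prop
  exact h2.contDiffAt.sub (contDiffAt_const.mul h1)

lemma log_bound (r₀ : ℝ) (hr : 0 < r₀) (n : ℕ) : ∃ M, 0 ≤ M ∧ ∀ s ∈ Icc r₀ (2 * r₀),
    |iteratedDeriv n (fun s => (1/2) * Real.log s) s| ≤ M := by
  have hc : ContinuousOn (iteratedDeriv n (fun s => (1/2) * Real.log s)) (Icc r₀ (2 * r₀)) := by
    intro s hs
    have h0 : 0 < s := by linarith [hs.1]
    have h1 : ContDiffAt ℝ (⊤:ℕ∞) Real.log s := contDiffAt_log.2 h0.ne'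
    exact (hd_iter _ s (contDiffAt_const.mul h1) n).continuousAt.continuousWithinAt
  obtain ⟨M, hM⟩ := isCompact_Icc.exists_bound_of_continuousOn hc
  exact ⟨max M 0, le_max_right _ _, fun s hs => (hM s hs).trans (le_max_left _ _)⟩

lemma vv_crude (r₀ : ℝ) (hr : 0 < r₀) (n : ℕ) : ∃ C, 0 ≤ C ∧ ∀ ε h, 0 < ε → IsH (4 * r₀ ^ 2) (KK ε) h →
    ε < 1/8 → ∀ s ∈ Ico r₀ (2 * r₀), |iteratedDeriv n (vv h) s| ≤ C * ε⁻¹ ^ (n+2) := by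
  obtain ⟨C, hC, hu⟩ := u_bound (E := ℝ) (4 * r₀ ^ 2) (by positivity) n
  obtain ⟨M, hM, hl⟩ := log_bound r₀ hr n
  refine ⟨C + M, by positivity, fun ε h hε H hε' s hs => ?_⟩
  have h0 : 0 < s := by linarith [hs.1]
  have hsm := H.1
  have c1 : ContDiffAt ℝ n Real.log s := contDiffAt_log.2 h0.ne'
  have c2 : ContDiff ℝ (⊤:ℕ∞) (fun s : ℝ => h (s ^ 2)) := by fun_prop
  have c3 : ContDiffAt ℝ n (fun s : ℝ => h (s ^ 2)) s := (contDiff_infty.1 c2 n).contDiffAt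
  have e : iteratedDeriv n (vv h) s = iteratedDeriv n (fun s : ℝ => h (s ^ 2)) s -
      iteratedDeriv n (fun s => (1/2) * Real.log s) s :=
    iteratedDeriv_fun_sub c3 (contDiffAt_const.mul c1)
  have b1 := hu ε h hε H hε' s (by rw [Real.norm_eq_abs, sq_abs]; nlinarith [hs.1, hs.2])
  rw [norm_iteratedFDeriv_eq_norm_iteratedDeriv] at b1
  simp only [Real.norm_eq_abs, sq_abs] at b1
  have b2 := hl s ⟨hs.1, hs.2.le⟩
  have h1 : 1 ≤ ε⁻¹ ^ (n+2) := one_le_pow₀ (by rw [one_le_inv₀ hε]; linarith)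
  rw [e]
  refine (abs_sub _ _).trans ?_
  nlinarith

lemma vv_zero (r₀ : ℝ) (hr : 0 < r₀) (N : ℕ) : ∃ C, 0 ≤ C ∧ ∀ ε h, 0 < ε → IsH (4 * r₀ ^ 2) (KK ε) h →
    ε < 1/8 → ∀ s ∈ Icc r₀ (2 * r₀), |vv h s| ≤ C * ε ^ N := by
  obtain ⟨C, hC⟩ := decay_w (4 * r₀ ^ 2) (by positivity) N (r₀ ^ 2) (by positivity) (by nlinarith)
  refine ⟨|C|, abs_nonneg _, fun ε h hε H hε' s hs => ?_⟩
  have h0 : 0 < s := by linarith [hs.1]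
  have hK := KK_pos hε
  have e : vv h s = h (s ^ 2) - 1/4 * Real.log (s ^ 2) := by
    unfold vv; rw [Real.log_pow]; push_cast; ring
  have h1 := hC (KK ε) h hK H (s ^ 2) ⟨by nlinarith [hs.1], by nlinarith [hs.2]⟩
  have h2 := H.lower2 (by positivity) hK (s ^ 2) ⟨by positivity, by nlinarith [hs.2]⟩
  rw [← e] at h1
  rw [abs_of_nonneg (by rw [e]; linarith)]
  have h3 : (KK ε)⁻¹ ≤ ε := by
    unfold KK
    have hp := Real.pi_gt_three
    have : (4 * π ^ 2 * (ε ^ 2)⁻¹)⁻¹ = ε ^ 2 / (4 * π ^ 2) := by field_simp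
    rw [this, div_le_iff₀ (by positivity)]
    have h9 : 1 ≤ 4 * π ^ 2 := by nlinarith
    nlinarith [mul_le_mul_of_nonneg_left h9 hε.le]
  calc _ ≤ C * (KK ε)⁻¹ ^ (N+1) := h1
    _ ≤ |C| * ε ^ (N+1) := by
      gcongr
      exact le_abs_self C
    _ ≤ |C| * ε ^ N := by
      gcongr ?_ * ?_
      exact pow_le_pow_of_le_one hε.le (by linarith) (by omega)

lemma vv_all (r₀ : ℝ) (hr : 0 < r₀) (k : ℕ) : ∀ N : ℕ, ∃ C, 0 ≤ C ∧ ∀ ε h, 0 < ε →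
    IsH (4 * r₀ ^ 2) (KK ε) h →
    ε < 1/8 → ∀ s ∈ Ico r₀ (2 * r₀), |iteratedDeriv k (vv h) s| ≤ C * ε ^ N := by
  induction k with
  | zero =>
    intro N
    obtain ⟨C, hC, hv⟩ := vv_zero r₀ hr N
    refine ⟨C, hC, fun ε h hε H hε' s hs => ?_⟩
    rw [iteratedDeriv_zero]
    exact hv ε h hε H hε' s ⟨hs.1, hs.2.le⟩
  | succ k ih =>
    intro N
    obtain ⟨C₁, hC₁, h1⟩ := ih (N + (N + k + 4))
    obtain ⟨C₂, hC₂, h2⟩ := vv_crude r₀ hr (k+2)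
    refine ⟨4 * C₁ / r₀ + C₂ * (r₀ / 2), by positivity, fun ε h hε H hε' s hs => ?_⟩
    set δ := r₀ / 2 * ε ^ (N + k + 4) with hδ
    have hδ0 : 0 < δ := by positivity
    have hδ1 : δ ≤ r₀ / 2 := by
      have : ε ^ (N + k + 4) ≤ 1 := pow_le_one₀ hε.le (by linarith)
      rw [hδ]; nlinarith
    obtain ⟨p, q, hpq, hsp, hp, hq⟩ : ∃ p q, q - p = δ ∧ s ∈ Icc p q ∧ r₀ ≤ p ∧ q < 2 * r₀ := by
      rcases lt_or_ge (s + δ) (2 * r₀) with h | h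
      · exact ⟨s, s + δ, by ring, ⟨le_rfl, by linarith⟩, hs.1, h⟩
      · exact ⟨s - δ, s, by ring, ⟨by linarith, le_rfl⟩, by linarith, hs.2⟩
    have hsub : ∀ x ∈ Icc p q, x ∈ Ico r₀ (2 * r₀) := fun x hx =>
      ⟨hp.trans hx.1, hx.2.trans_lt hq⟩
    have hder : ∀ n, ∀ x ∈ Icc p q, HasDerivAt (iteratedDeriv n (vv h)) (iteratedDeriv (n+1) (vv h) x) x :=
      fun n x hx => hd_iter _ x (vv_smooth h H.1 x (by linarith [(hsub x hx).1])) n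
    have := interp _ _ _ p q _ _ (by linarith) (hder k) (hder (k+1))
      (fun x hx => h1 ε h hε H hε' x (hsub x hx)) (fun x hx => h2 ε h hε H hε' x (hsub x hx)) s hsp
    refine this.trans (le_of_eq ?_)
    rw [hpq, hδ]
    have e1 : ε⁻¹ ^ (k + 2 + 2) * ε ^ (N + k + 4) = ε ^ N := by
      rw [show N + k + 4 = (k + 2 + 2) + N by ring, pow_add ε, ← mul_assoc, ← mul_pow, inv_mul_cancel₀ hε.ne', one_pow, one_mul]
    have e2 : 2 * (C₁ * ε ^ (N + (N + k + 4))) / (r₀ / 2 * ε ^ (N + k + 4)) = 4 * C₁ / r₀ * ε ^ N := by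
      rw [pow_add ε N]; field_simp; ring
    rw [e2, ← e1]; ring

lemma endpoint (D : ℝ → ℝ) (a b M : ℝ) (hab : a < b) (hM : 0 ≤ M)
    (hd : ∀ x ∈ Ioo a b, DifferentiableAt ℝ D x) (hb : ∀ x ∈ Ioo a b, |deriv D x| ≤ M) :
    |deriv D b| ≤ M := by
  by_cases hdb : DifferentiableAt ℝ D b
  · have ht := (hasDerivWithinAt_iff_tendsto_slope' (s := Iio b) (by simp)).1 hdb.hasDerivAt.hasDerivWithinAt
    refine le_of_tendsto ht.abs ?_
    filter_upwards [Ioo_mem_nhdsLT hab] with t ht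
    obtain ⟨ξ, hξ, hξ'⟩ := exists_deriv_eq_slope D ht.2
      (fun x hx => by
        rcases eq_or_lt_of_le hx.2 with h | h
        · rw [h]; exact hdb.continuousAt.continuousWithinAt
        · exact (hd x ⟨ht.1.trans_le hx.1, h⟩).continuousAt.continuousWithinAt)
      (fun x hx => (hd x ⟨ht.1.trans hx.1, hx.2⟩).differentiableWithinAt)
    have := hb ξ ⟨ht.1.trans hξ.1, hξ.2⟩
    rw [slope_comm, slope_def_field, ← hξ']
    exact this
  · rw [deriv_zero_of_not_differentiableAt hdb]; simpa using hM

end Ipart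
lemma sol_eq (r₀ ε : ℝ) (hr : 0 < r₀) (hε : 0 < ε) (u : EuclideanSpace ℝ (Fin 2) → ℝ)
    (hu : IsDirichletSolR r₀ ε u) : ∃ h, IsH (4 * r₀ ^ 2) (KK ε) h ∧
      ∀ x ∈ closedBall (0 : EuclideanSpace ℝ (Fin 2)) (2 * r₀), u x = h (‖x‖ ^ 2) := by
  obtain ⟨h, H⟩ := exists_h (4 * r₀ ^ 2) (KK ε) (by positivity) (KK_pos hε)
  have hs := sol_of_h r₀ ε hr h H
  exact ⟨h, H, fun x hx => le_antisymm (comparison r₀ ε hr hε _ _ hu hs x hx)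
    (comparison r₀ ε hr hε _ _ hs hu x hx)⟩

lemma part_one (r₀ : ℝ) (hr : 0 < r₀) (k N : ℕ) : ∃ C : ℝ, ∀ ε : ℝ, 0 < ε → ε < 1/8 →
      ∀ u g, IsDirichletSolR r₀ ε u → IsRadialR r₀ u g →
        ∀ r ∈ Icc r₀ (2 * r₀),
          |iteratedDeriv k (fun s => g s - (1/2) * Real.log s) r| ≤ C * ε ^ N := by
  obtain ⟨C, hC, hv⟩ := vv_all r₀ hr k N
  refine ⟨C, fun ε hε hε' u g hu hg r hrr => ?_⟩
  obtain ⟨h, H, he⟩ := sol_eq r₀ ε hr hε u hu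
  have hgs : ∀ s ∈ Icc 0 (2 * r₀), g s - (1/2) * Real.log s = vv h s := by
    intro s hs
    have hn : ‖(EuclideanSpace.single 0 s : EuclideanSpace ℝ (Fin 2))‖ = s := by
      rw [EuclideanSpace.norm_single, Real.norm_of_nonneg hs.1]
    have hm : (EuclideanSpace.single 0 s : EuclideanSpace ℝ (Fin 2)) ∈ closedBall (0 : EuclideanSpace ℝ (Fin 2)) (2 * r₀) := by
      rw [mem_closedBall_zero_iff, hn]; exact hs.2
    have h1 := hg _ hm
    rw [he _ hm, hn] at h1
    rw [← h1]; rfl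
  have hit : ∀ m, ∀ s ∈ Ioo 0 (2 * r₀), iteratedDeriv m (fun s => g s - (1/2) * Real.log s) s =
      iteratedDeriv m (vv h) s := by
    intro m s hs
    apply Filter.EventuallyEq.iteratedDeriv_eq
    filter_upwards [Ioo_mem_nhds hs.1 hs.2] with t ht
    exact hgs t ⟨ht.1.le, ht.2.le⟩
  have hint : ∀ s ∈ Ico r₀ (2 * r₀), |iteratedDeriv k (fun s => g s - (1/2) * Real.log s) s| ≤ C * ε ^ N := by
    intro s hs
    rw [hit k s ⟨by linarith [hs.1], hs.2⟩]
    exact hv ε h hε H hε' s hs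
  rcases lt_or_eq_of_le hrr.2 with hlt | heq
  · exact hint r ⟨hrr.1, hlt⟩
  subst heq
  have hM : 0 ≤ C * ε ^ N := by positivity
  cases k with
  | zero =>
    rw [iteratedDeriv_zero]
    have h0 : vv h (2 * r₀) = 0 := by
      unfold vv
      rw [show (2 * r₀) ^ 2 = 4 * r₀ ^ 2 by ring, H.2.1, show 4 * r₀ ^ 2 = (2 * r₀) ^ 2 by ring, Real.log_pow]
      push_cast; ring
    rw [hgs (2 * r₀) ⟨by linarith, le_rfl⟩, h0, abs_zero]; exact hM
  | succ k =>
    rw [iteratedDeriv_succ]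
    apply endpoint _ r₀ (2 * r₀) _ (by linarith) hM
    · intro x hx
      have h1 := hd_iter (vv h) x (vv_smooth h H.1 x (by linarith [hx.1])) k
      refine (h1.congr_of_eventuallyEq ?_).differentiableAt
      filter_upwards [Ioo_mem_nhds hx.1 hx.2] with t ht
      exact hit k t ⟨by linarith [ht.1], ht.2⟩
    · intro x hx
      rw [← iteratedDeriv_succ]
      exact hint x ⟨hx.1.le, hx.2⟩

lemma part_two (r₀ : ℝ) (hr : 0 < r₀) (k : ℕ) : ∃ C : ℝ, ∀ ε : ℝ, 0 < ε → ε < 1/8 →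
      ∀ u g, IsDirichletSolR r₀ ε u → IsRadialR r₀ u g →
        ∀ i ≤ k, ∀ x ∈ ball (0 : EuclideanSpace ℝ (Fin 2)) (2 * r₀),
          ‖iteratedFDeriv ℝ i u x‖ ≤ C * ε ^ (-(k : ℤ) - 2) := by
  choose c hc hub using fun n => u_bound (E := EuclideanSpace ℝ (Fin 2)) (4 * r₀ ^ 2) (by positivity) n
  refine ⟨∑ i ∈ Finset.range (k+1), c i, fun ε hε hε' u g hu _ i hi x hx => ?_⟩
  obtain ⟨h, H, he⟩ := sol_eq r₀ ε hr hε u hu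
  have h1 : u =ᶠ[nhds x] fun y => h (‖y‖ ^ 2) := by
    filter_upwards [isOpen_ball.mem_nhds hx] with y hy
    exact he y (ball_subset_closedBall hy)
  rw [(h1.iteratedFDeriv ℝ i).eq_of_nhds]
  rw [mem_ball_zero_iff] at hx
  have h2 := hub i ε h hε H hε' x (by nlinarith [norm_nonneg x])
  have h3 : ε ^ (-(k : ℤ) - 2) = ε⁻¹ ^ (k+2) := by
    rw [show (-(k:ℤ) - 2) = -((k+2 : ℕ) : ℤ) by push_cast; ring, zpow_neg, zpow_natCast, inv_pow]
  rw [h3]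
  refine h2.trans ?_
  have h4 : 1 ≤ ε⁻¹ := by rw [one_le_inv₀ hε]; linarith
  have h5 : c i ≤ ∑ i ∈ Finset.range (k+1), c i :=
    Finset.single_le_sum (f := c) (fun j _ => hc j) (Finset.mem_range.2 (by omega))
  have h6 : ε⁻¹ ^ (i+2) ≤ ε⁻¹ ^ (k+2) := pow_le_pow_right₀ h4 (by omega)
  have h7 := (hc i).trans h5
  exact mul_le_mul h5 h6 (by positivity) h7

/-- for every `ε > 0` the Dirichlet problem on `B_{2r₀}(0)` has a unique smooth
radially symmetric solution `u_ε`, and it satisfies: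
(1) with `v_ε(r) = u_ε(r) − (1/2)·ln r`, for any integers `l > k ≥ 0` there is `C(r₀,l,k)`
with `sup_{r ∈ [r₀,2r₀]} |v_ε^{(k)}(r)| ≤ C·ε^{l−k}` for all `0 < ε < 1/8`;
(2) for any `k ≥ 0` and `0 < R ≤ 2r₀` there is `C(r₀,R,k)` with
`‖u_ε‖_{C^k(B_R(0))} ≤ C·ε^{−k−2}` for all `0 < ε < 1/8`. -/
theorem stmt_8 (r₀ : ℝ) (hr₀ : 0 < r₀) :
    (∀ ε : ℝ, 0 < ε → ∃ u g, IsDirichletSolR r₀ ε u ∧ IsRadialR r₀ u g) ∧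
    (∀ ε : ℝ, 0 < ε → ∀ u v gu gv,
      IsDirichletSolR r₀ ε u → IsRadialR r₀ u gu →
      IsDirichletSolR r₀ ε v → IsRadialR r₀ v gv →
      ∀ x ∈ closedBall (0 : EuclideanSpace ℝ (Fin 2)) (2 * r₀), u x = v x) ∧
    (∀ l k : ℕ, k < l → ∃ C : ℝ, ∀ ε : ℝ, 0 < ε → ε < 1/8 →
      ∀ u g, IsDirichletSolR r₀ ε u → IsRadialR r₀ u g →
        ∀ r ∈ Icc r₀ (2 * r₀),
          |iteratedDeriv k (fun s => g s - (1/2) * Real.log s) r| ≤ C * ε ^ (l - k)) ∧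
    (∀ k : ℕ, ∀ R : ℝ, 0 < R → R ≤ 2 * r₀ → ∃ C : ℝ, ∀ ε : ℝ, 0 < ε → ε < 1/8 →
      ∀ u g, IsDirichletSolR r₀ ε u → IsRadialR r₀ u g →
        ∀ i ≤ k, ∀ x ∈ ball (0 : EuclideanSpace ℝ (Fin 2)) R,
          ‖iteratedFDeriv ℝ i u x‖ ≤ C * ε ^ (-(k : ℤ) - 2)) := by

  refine ⟨?_, ?_, ?_, ?_⟩
  · intro ε hε
    obtain ⟨h, H⟩ := exists_h (4 * r₀ ^ 2) (KK ε) (by positivity) (KK_pos hε)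
    exact ⟨fun x => h (‖x‖ ^ 2), fun s => h (s ^ 2), sol_of_h r₀ ε hr₀ h H, fun x _ => rfl⟩
  · intro ε hε u v _ _ hu _ hv _ x hx
    exact le_antisymm (comparison r₀ ε hr₀ hε u v hu hv x hx) (comparison r₀ ε hr₀ hε v u hv hu x hx)
  · intro l k _
    exact part_one r₀ hr₀ k (l - k)
  · intro k R _ hR
    obtain ⟨C, hC⟩ := part_two r₀ hr₀ k
    exact ⟨C, fun ε hε hε' u g hu hg i hi x hx =>
      hC ε hε hε' u g hu hg i hi x (ball_subset_ball hR hx)⟩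
end

section
/- Let ū_ε be the unique radially symmetric solution of the Dirichlet problem, and define F(s, r) = ε⁻²·(exp(s) − r²·exp(−s)), so that F₁(s,r) = ε⁻²·(exp(s) + r²·exp(−s)) and F₂(s,r) = −2r·ε⁻²·exp(−s) are its partial derivatives. Then for all 0 < r < 1: 0 < F(ū_ε(r), r) < ε⁻², 0 < F₁(ū_ε(r), r) < 2ε⁻², and −2ε⁻² < F₂(ū_ε(r), r) < 0. -/
open Real Set Metric

theorem aux_second_s9 (f f' : ℝ → ℝ) (d : ℝ) (hf : ∀ᶠ s in nhds (0:ℝ), HasDerivAt f (f' s) s)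
    (hd : HasDerivAt f' d 0) (hm : IsLocalMin f 0) : 0 ≤ d := by
  by_contra hneg
  push Not at hneg
  have e1 : deriv f =ᶠ[nhds 0] f' := hf.mono fun s hs => hs.deriv
  have hdd : deriv (deriv f) 0 = d := by rw [e1.deriv_eq]; exact hd.deriv
  have hmax : IsLocalMax f 0 :=
    isLocalMax_of_deriv_deriv_neg (by rw [hdd]; exact hneg) hm.deriv_eq_zero
      hf.self_of_nhds.continuousAt
  have hc : f =ᶠ[nhds 0] fun _ => f 0 := by
    filter_upwards [hm, hmax] with s h1 h2 using le_antisymm h2 h1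
  have h2 : deriv (deriv f) 0 = 0 := by
    rw [hc.deriv.deriv_eq]; simp
  linarith

theorem aux_lap (u : EuclideanSpace ℝ (Fin 2) → ℝ) (hu : ContDiffOn ℝ (⊤ : ℕ∞) u (ball 0 1))
    (x : EuclideanSpace ℝ (Fin 2)) (hx : x ∈ ball (0 : EuclideanSpace ℝ (Fin 2)) 1)
    (c : ℝ) (H H' : ℝ → ℝ) (H'' : ℝ)
    (hH : ∀ᶠ q in nhds (‖x‖ ^ 2), HasDerivAt H (H' q) q)
    (hH' : HasDerivAt H' H'' (‖x‖ ^ 2))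
    (hm : IsLocalMin (fun y => c * u y - H (‖y‖ ^ 2)) x) :
    4 * H' (‖x‖ ^ 2) + 4 * ‖x‖ ^ 2 * H'' ≤ c * laplacian2 u x := by
  have key : ∀ i : Fin 2, 0 ≤ c * (fderiv ℝ (fun y => fderiv ℝ u y (EuclideanSpace.single i 1)) x
      (EuclideanSpace.single i 1)) - (H'' * (2 * x i) * (2 * x i) + H' (‖x‖ ^ 2) * 2) := by
    intro i
    set e : EuclideanSpace ℝ (Fin 2) := EuclideanSpace.single i 1 with he
    have hline : ∀ s : ℝ, HasDerivAt (fun s : ℝ => x + s • e) e s := by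
      intro s
      simpa using ((hasDerivAt_id s).smul_const e).const_add x
    have hl0 : x + (0:ℝ) • e = x := by simp
    have hlc : Filter.Tendsto (fun s : ℝ => x + s • e) (nhds 0) (nhds x) := by
      have := (hline 0).continuousAt.tendsto
      simpa using this
    have hnorm : ∀ s : ℝ, ‖x + s • e‖ ^ 2 = ‖x‖ ^ 2 + 2 * x i * s + s ^ 2 := by
      intro s
      rw [EuclideanSpace.real_norm_sq_eq, EuclideanSpace.real_norm_sq_eq]
      fin_cases i <;> simp [he, Fin.sum_univ_two] <;> ring
    have hq : ∀ s : ℝ, HasDerivAt (fun s : ℝ => ‖x‖ ^ 2 + 2 * x i * s + s ^ 2)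
        (2 * x i + 2 * s) s := by
      intro s
      have := (((hasDerivAt_id s).const_mul (2 * x i)).const_add (‖x‖ ^ 2)).add
        ((hasDerivAt_id s).pow 2)
      exact this.congr_deriv (by simp)
    have hqc : Filter.Tendsto (fun s : ℝ => ‖x‖ ^ 2 + 2 * x i * s + s ^ 2) (nhds 0)
        (nhds (‖x‖ ^ 2)) := by
      have := (hq 0).continuousAt.tendsto
      simpa using this
    apply aux_second_s9 (fun s => c * u (x + s • e) - H (‖x‖ ^ 2 + 2 * x i * s + s ^ 2))
      (fun s => c * fderiv ℝ u (x + s • e) e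
        - H' (‖x‖ ^ 2 + 2 * x i * s + s ^ 2) * (2 * x i + 2 * s))
    · filter_upwards [hlc.eventually (isOpen_ball.mem_nhds hx), hqc.eventually hH] with s h1 h2
      have hd : DifferentiableAt ℝ u (x + s • e) :=
        (hu.contDiffAt (isOpen_ball.mem_nhds h1)).differentiableAt (by simp)
      exact ((hd.hasFDerivAt.comp_hasDerivAt s (hline s)).const_mul c).sub (h2.comp s (hq s))
    · have hf2 : ContDiffAt ℝ 1 (fderiv ℝ u) x :=
        (hu.contDiffAt (isOpen_ball.mem_nhds hx)).fderiv_right (m := 1) (n := ((⊤ : ℕ∞) : WithTop ℕ∞))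
          (by
            have : ((1 + 1 : ℕ∞) : WithTop ℕ∞) ≤ ((⊤ : ℕ∞) : WithTop ℕ∞) :=
              WithTop.coe_le_coe.2 le_top
            exact this)
      have hd2 : DifferentiableAt ℝ (fun y => fderiv ℝ u y e) x :=
        (hf2.differentiableAt (by simp)).clm_apply (differentiableAt_const e)
      have h1 : HasDerivAt (fun s : ℝ => fderiv ℝ u (x + s • e) e)
          (fderiv ℝ (fun y => fderiv ℝ u y e) x e) 0 := by
        have h0 : HasFDerivAt (fun y => fderiv ℝ u y e)
          (fderiv ℝ (fun y => fderiv ℝ u y e) x) (x + (0:ℝ) • e) := by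
          rw [hl0]; exact hd2.hasFDerivAt
        exact h0.comp_hasDerivAt 0 (hline 0)
      have h2 : HasDerivAt (fun s : ℝ => H' (‖x‖ ^ 2 + 2 * x i * s + s ^ 2))
          (H'' * (2 * x i)) 0 := by
        have h0 : HasDerivAt H' H'' (‖x‖ ^ 2 + 2 * x i * 0 + 0 ^ 2) := by simpa using hH'
        have := h0.comp 0 (hq 0)
        simpa [Function.comp_def] using this
      have h3 : HasDerivAt (fun s : ℝ => 2 * x i + 2 * s) 2 0 := by
        simpa using ((hasDerivAt_id (0:ℝ)).const_mul 2).const_add (2 * x i)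
      have := (h1.const_mul c).sub (h2.mul h3)
      exact this.congr_deriv (by simp)
    · have := hlc.eventually hm
      filter_upwards [this] with s hs
      simpa [hnorm] using hs
  have k0 := key 0
  have k1 := key 1
  have hn : ‖x‖ ^ 2 = x 0 ^ 2 + x 1 ^ 2 := by
    rw [EuclideanSpace.real_norm_sq_eq, Fin.sum_univ_two]
  unfold laplacian2
  rw [Fin.sum_univ_two]
  have : 4 * ‖x‖ ^ 2 * H'' = 4 * (x 0 ^ 2 + x 1 ^ 2) * H'' := by rw [hn]
  rw [this]
  linarith

theorem aux_upper (ε : ℝ) (hε : 0 < ε) (u : EuclideanSpace ℝ (Fin 2) → ℝ)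
    (hu : IsDirichletSol ε u) :
    ∀ x ∈ closedBall (0 : EuclideanSpace ℝ (Fin 2)) 1, u x ≤ 0 := by
  obtain ⟨hc, hs, hlap, hb⟩ := hu
  intro x hx
  by_contra hpos
  push Not at hpos
  obtain ⟨y, hy, hmax⟩ := (isCompact_closedBall (0 : EuclideanSpace ℝ (Fin 2)) 1).exists_isMaxOn
    ⟨x, hx⟩ hc
  have huy : 0 < u y := hpos.trans_le (hmax hx)
  have hyb : y ∈ ball (0 : EuclideanSpace ℝ (Fin 2)) 1 := by
    rcases (mem_closedBall.1 hy).lt_or_eq with h | h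
    · exact h
    · exact absurd (hb y h) huy.ne'
  have hm : IsLocalMin (fun y => (-1) * u y - (fun _ : ℝ => (0:ℝ)) (‖y‖ ^ 2)) y := by
    filter_upwards [isOpen_ball.mem_nhds hyb] with z hz
    have := hmax (ball_subset_closedBall hz)
    simp only [mem_ofPred_eq] at this
    linarith
  have h := aux_lap u hs y hyb (-1) (fun _ => 0) (fun _ => 0) 0
    (Filter.Eventually.of_forall fun q => hasDerivAt_const q 0) (hasDerivAt_const _ 0) hm
  rw [hlap y hyb] at h
  have hn : ‖y‖ ^ 2 ≤ 1 := by
    have : ‖y‖ < 1 := by simpa using hyb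
    nlinarith [norm_nonneg y]
  have h1 : 1 < Real.exp (u y) := Real.one_lt_exp_iff.2 huy
  have h2 : Real.exp (-u y) < 1 := by rw [Real.exp_lt_one_iff]; linarith
  have h3 : ‖y‖ ^ 2 * Real.exp (-u y) ≤ 1 := by
    nlinarith [Real.exp_pos (-u y), sq_nonneg ‖y‖]
  have h4 : 0 < (ε ^ 2)⁻¹ * (Real.exp (u y) - ‖y‖ ^ 2 * Real.exp (-u y)) :=
    mul_pos (by positivity) (by linarith)
  linarith

theorem aux_H (δ : ℝ) (m : ℕ) (q : ℝ) (hq : 0 < q) :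
    HasDerivAt (fun q : ℝ => 1 / 2 * Real.log q + δ * ((q ^ m)⁻¹ - 1))
      (1 / 2 * q⁻¹ - δ * (m * (q ^ (m + 1))⁻¹)) q := by
  have h := ((Real.hasDerivAt_log hq.ne').const_mul (1 / 2)).add
    (((((hasDerivAt_id q).pow m).inv (pow_pos hq m).ne').sub_const 1).const_mul δ)
  refine h.congr_deriv ?_
  rcases m with _ | m
  · simp
  · simp only [id, Pi.pow_apply, Nat.add_sub_cancel]
    field_simp
    push_cast
    ring

theorem aux_H' (δ : ℝ) (m : ℕ) (q : ℝ) (hq : 0 < q) :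
    HasDerivAt (fun q : ℝ => 1 / 2 * q⁻¹ - δ * (m * (q ^ (m + 1))⁻¹))
      (-(1 / 2 * (q ^ 2)⁻¹) + δ * (m * ((m + 1) * (q ^ (m + 2))⁻¹))) q := by
  have h := ((hasDerivAt_inv hq.ne').const_mul (1 / 2)).sub
    ((((((hasDerivAt_id q).pow (m + 1)).inv (pow_pos hq (m + 1)).ne')).const_mul (m:ℝ)).const_mul δ)
  refine h.congr_deriv ?_
  simp only [id, Pi.pow_apply, Nat.add_sub_cancel]
  field_simp
  push_cast
  ring

set_option maxHeartbeats 1000000 in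
theorem aux_lower (ε : ℝ) (hε : 0 < ε) (u : EuclideanSpace ℝ (Fin 2) → ℝ)
    (hu : IsDirichletSol ε u) (x : EuclideanSpace ℝ (Fin 2)) (hx0 : 0 < ‖x‖) (hx1 : ‖x‖ < 1) :
    Real.log ‖x‖ < u x := by
  obtain ⟨hc, hs, hlap, hb⟩ := hu
  obtain ⟨a, ha, hmin⟩ := (isCompact_closedBall (0 : EuclideanSpace ℝ (Fin 2)) 1).exists_isMinOn
    ⟨0, by simp⟩ hc
  set M := u a with hM
  obtain ⟨m, hmε⟩ := exists_nat_gt ε⁻¹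
  have hm0 : 0 < m := by
    have : (0:ℝ) < m := (inv_pos.2 hε).trans hmε
    exact_mod_cast this
  set ρ := min (‖x‖ / 2) (Real.exp (M - 2)) with hρ
  have hρ0 : 0 < ρ := lt_min (by linarith) (Real.exp_pos _)
  have hρx : ρ < ‖x‖ := (min_le_left _ _).trans_lt (by linarith)
  have hρ1 : ρ < 1 := hρx.trans hx1
  have hρM : Real.log ρ ≤ M - 2 := by
    rw [Real.log_le_iff_le_exp hρ0]; exact min_le_right _ _
  have hinv : ∀ t : ℝ, 0 < t → t < 1 → 0 < ((t ^ 2) ^ m)⁻¹ - 1 := by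
    intro t h0 h1
    have : (t ^ 2) ^ m < 1 := pow_lt_one₀ (by positivity) (pow_lt_one₀ h0.le h1 (by simp)) hm0.ne'
    linarith [(one_lt_inv₀ (by positivity)).2 this]
  set δ := (((ρ ^ 2) ^ m)⁻¹ - 1)⁻¹ with hδ
  have hδ0 : 0 < δ := inv_pos.2 (hinv ρ hρ0 hρ1)
  have hδ1 : δ * (((ρ ^ 2) ^ m)⁻¹ - 1) = 1 := inv_mul_cancel₀ (hinv ρ hρ0 hρ1).ne'
  set H : ℝ → ℝ := fun q => 1 / 2 * Real.log q + δ * ((q ^ m)⁻¹ - 1) with hH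
  have hHt : ∀ t : ℝ, H (t ^ 2) = Real.log t + δ * (((t ^ 2) ^ m)⁻¹ - 1) := by
    intro t
    simp only [hH, Real.log_pow]
    push_cast
    ring
  suffices hsuf : H (‖x‖ ^ 2) ≤ u x by
    rw [hHt] at hsuf
    have := mul_pos hδ0 (hinv _ hx0 hx1)
    linarith
  by_contra hlt
  push Not at hlt
  set K : Set (EuclideanSpace ℝ (Fin 2)) := closedBall 0 1 ∩ {y | ρ ≤ ‖y‖} with hK
  have hKc : IsCompact K :=
    (isCompact_closedBall _ _).inter_right (isClosed_le continuous_const continuous_norm)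
  have hxK : x ∈ K := ⟨by simpa using hx1.le, hρx.le⟩
  have hcont : ContinuousOn (fun y => 1 * u y - H (‖y‖ ^ 2)) K := by
    intro y hy
    have hy0 : 0 < ‖y‖ ^ 2 := by
      have : 0 < ‖y‖ := hρ0.trans_le hy.2
      positivity
    have h1 : ContinuousWithinAt u K y := (hc.mono inter_subset_left) y hy
    have h2 : ContinuousAt H (‖y‖ ^ 2) := (aux_H δ m _ hy0).continuousAt
    have h3 : ContinuousAt (fun y : EuclideanSpace ℝ (Fin 2) => ‖y‖ ^ 2) y := by fun_prop
    exact (continuousWithinAt_const.mul h1).sub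
      (ContinuousAt.comp (f := fun y : EuclideanSpace ℝ (Fin 2) => ‖y‖ ^ 2) h2 h3).continuousWithinAt
  obtain ⟨y, hy, hym⟩ := hKc.exists_isMinOn ⟨x, hxK⟩ hcont
  have hyneg : u y < H (‖y‖ ^ 2) := by
    have := hym hxK
    simp only [mem_ofPred_eq] at this
    linarith
  have hy1 : ‖y‖ < 1 := by
    have h : ‖y‖ ≤ 1 := by simpa using hy.1
    rcases h.lt_or_eq with h | h
    · exact h
    · have := hb y (by simpa using h)
      rw [this, hHt, h] at hyneg
      simp at hyneg
  have hyρ : ρ < ‖y‖ := by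
    have h : ρ ≤ ‖y‖ := hy.2
    rcases h.lt_or_eq with h | h
    · exact h
    · rw [hHt, ← h, hδ1] at hyneg
      have := hmin hy.1
      simp only [mem_ofPred_eq] at this
      linarith
  have hy0 : 0 < ‖y‖ := hρ0.trans hyρ
  have hyb : y ∈ ball (0 : EuclideanSpace ℝ (Fin 2)) 1 := by simpa using hy1
  have hloc : IsLocalMin (fun y => 1 * u y - H (‖y‖ ^ 2)) y := by
    apply hym.isLocalMin
    refine Filter.inter_mem (Filter.mem_of_superset (isOpen_ball.mem_nhds hyb)
      ball_subset_closedBall) ?_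
    refine Filter.mem_of_superset ((isOpen_lt continuous_const continuous_norm).mem_nhds hyρ)
      fun z hz => ?_
    exact le_of_lt (show ρ < ‖z‖ from hz)
  have hq0 : 0 < ‖y‖ ^ 2 := by positivity
  have h := aux_lap u hs y hyb 1 H _ _
    ((lt_mem_nhds hq0).mono fun q hq => aux_H δ m q hq) (aux_H' δ m _ hq0) hloc
  rw [hlap y hyb, one_mul] at h
  rw [hHt] at hyneg
  set t := ‖y‖ with ht
  set φ := δ * (((t ^ 2) ^ m)⁻¹ - 1) with hφ
  have hφ0 : 0 < φ := mul_pos hδ0 (hinv t hy0 hy1)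
  have hφ1 : φ ≤ 1 := by
    rw [← hδ1]
    apply mul_le_mul_of_nonneg_left _ hδ0.le
    have : ((t ^ 2) ^ m)⁻¹ ≤ ((ρ ^ 2) ^ m)⁻¹ := by gcongr
    linarith
  have e1 : Real.exp (u y) ≤ t * Real.exp φ := by
    have h5 := Real.exp_le_exp.2 hyneg.le
    rwa [Real.exp_add, Real.exp_log hy0] at h5
  have e2 : t * Real.exp (-φ) ≤ t ^ 2 * Real.exp (-u y) := by
    have : Real.exp (-φ) ≤ t * Real.exp (-u y) := by
      have h5 : Real.exp (-φ) ≤ Real.exp (Real.log t + -u y) :=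
        Real.exp_le_exp.2 (by linarith)
      rwa [Real.exp_add, Real.exp_log hy0] at h5
    nlinarith
  have e3 : Real.exp φ ≤ 1 + 2 * φ := by
    have := Real.abs_exp_sub_one_le (x := φ) (by rw [abs_of_pos hφ0]; exact hφ1)
    rw [abs_of_pos hφ0] at this
    linarith [le_abs_self (Real.exp φ - 1)]
  have e4 : 1 - φ ≤ Real.exp (-φ) := by linarith [Real.add_one_le_exp (-φ)]
  have e5 : Real.exp (u y) - t ^ 2 * Real.exp (-u y) ≤ 3 * φ := by
    have : t * (Real.exp φ - Real.exp (-φ)) ≤ t * (3 * φ) := by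
      apply mul_le_mul_of_nonneg_left _ hy0.le; linarith
    nlinarith
  have hLHS : 4 * (1 / 2 * (t ^ 2)⁻¹ - δ * (m * ((t ^ 2) ^ (m + 1))⁻¹)) + 4 * t ^ 2 *
      (-(1 / 2 * ((t ^ 2) ^ 2)⁻¹) + δ * (m * ((m + 1) * ((t ^ 2) ^ (m + 2))⁻¹)))
      = 4 * δ * m ^ 2 * ((t ^ 2) ^ (m + 1))⁻¹ := by
    field_simp
    ring
  rw [hLHS] at h
  have e6 : ((t ^ 2) ^ m)⁻¹ ≤ ((t ^ 2) ^ (m + 1))⁻¹ := by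
    apply inv_anti₀ (by positivity)
    exact pow_le_pow_of_le_one hq0.le (pow_le_one₀ hy0.le hy1.le) (Nat.le_succ m)
  have e7 : φ ≤ δ * ((t ^ 2) ^ (m + 1))⁻¹ := by
    rw [hφ]
    apply mul_le_mul_of_nonneg_left _ hδ0.le
    linarith
  have e8 : (ε ^ 2)⁻¹ ≤ (m:ℝ) ^ 2 := by
    rw [← inv_pow]
    exact pow_le_pow_left₀ (inv_pos.2 hε).le hmε.le 2
  have hεp : 0 < (ε ^ 2)⁻¹ := by positivity
  have e9 : (ε ^ 2)⁻¹ * (Real.exp (u y) - t ^ 2 * Real.exp (-u y)) ≤ (m:ℝ) ^ 2 * (3 * φ) :=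
    (mul_le_mul_of_nonneg_left e5 hεp.le).trans (mul_le_mul_of_nonneg_right e8 (by positivity))
  have hm2 : (0:ℝ) < (m:ℝ) ^ 2 := by positivity
  have e10 : (m:ℝ) ^ 2 * φ ≤ (m:ℝ) ^ 2 * (δ * ((t ^ 2) ^ (m + 1))⁻¹) :=
    mul_le_mul_of_nonneg_left e7 hm2.le
  have e11 : 0 < (m:ℝ) ^ 2 * φ := by positivity
  linarith

/-- with `F(s,r) = ε⁻²·(exp s − r²·exp(−s))`,
`F₁(s,r) = ε⁻²·(exp s + r²·exp(−s))` and `F₂(s,r) = −2r·ε⁻²·exp(−s)`, the unique radially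
symmetric solution `ū_ε` (with radial profile `g`) satisfies, for all `0 < r < 1`:
`0 < F(ū_ε(r),r) < ε⁻²`, `0 < F₁(ū_ε(r),r) < 2ε⁻²`, and `−2ε⁻² < F₂(ū_ε(r),r) < 0`. -/
theorem stmt_9 (ε : ℝ) (hε : 0 < ε) (u : EuclideanSpace ℝ (Fin 2) → ℝ) (g : ℝ → ℝ)
    (hu : IsDirichletSol ε u)
    (hrad : ∀ x ∈ closedBall (0 : EuclideanSpace ℝ (Fin 2)) 1, u x = g ‖x‖) :
    ∀ r ∈ Ioo (0 : ℝ) 1,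
      (0 < (ε ^ 2)⁻¹ * (Real.exp (g r) - r ^ 2 * Real.exp (-g r)) ∧
        (ε ^ 2)⁻¹ * (Real.exp (g r) - r ^ 2 * Real.exp (-g r)) < (ε ^ 2)⁻¹) ∧
      (0 < (ε ^ 2)⁻¹ * (Real.exp (g r) + r ^ 2 * Real.exp (-g r)) ∧
        (ε ^ 2)⁻¹ * (Real.exp (g r) + r ^ 2 * Real.exp (-g r)) < 2 * (ε ^ 2)⁻¹) ∧
      (-(2 * (ε ^ 2)⁻¹) < -(2 * r * (ε ^ 2)⁻¹ * Real.exp (-g r)) ∧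
        -(2 * r * (ε ^ 2)⁻¹ * Real.exp (-g r)) < 0) := by
  intro r hr
  obtain ⟨hr0, hr1⟩ := hr
  set x : EuclideanSpace ℝ (Fin 2) := EuclideanSpace.single 0 r with hx
  have hn : ‖x‖ = r := by
    rw [hx, EuclideanSpace.norm_single, Real.norm_eq_abs, abs_of_pos hr0]
  have hxb : x ∈ closedBall (0 : EuclideanSpace ℝ (Fin 2)) 1 := by
    rw [mem_closedBall_zero_iff, hn]; exact hr1.le
  have hup := aux_upper ε hε u hu x hxb
  have hlo := aux_lower ε hε u hu x (by rw [hn]; exact hr0) (by rw [hn]; exact hr1)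
  rw [hrad x hxb, hn] at hup hlo
  have hE : r < Real.exp (g r) := (Real.log_lt_iff_lt_exp hr0).1 hlo
  have hE1 : Real.exp (g r) ≤ 1 := Real.exp_le_one_iff.2 hup
  rw [Real.exp_neg]
  set E := Real.exp (g r) with hEdef
  have hE0 : 0 < E := Real.exp_pos _
  have hp : 0 < (ε ^ 2)⁻¹ := by positivity
  have hI : E * E⁻¹ = 1 := mul_inv_cancel₀ hE0.ne'
  have hI0 : 0 < E⁻¹ := inv_pos.2 hE0
  have hrI : r * E⁻¹ < 1 := by rw [← hI]; exact mul_lt_mul_of_pos_right hE hI0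
  have hrI0 : 0 < r * E⁻¹ := mul_pos hr0 hI0
  have h1 : r ^ 2 * E⁻¹ < r := by nlinarith
  have h10 : 0 < r ^ 2 * E⁻¹ := by positivity
  refine ⟨⟨mul_pos hp (by linarith), ?_⟩, ⟨by positivity, ?_⟩, ?_, ?_⟩
  · nlinarith
  · have : E + r ^ 2 * E⁻¹ < 2 := by linarith
    nlinarith
  · have := mul_lt_mul_of_pos_left hrI hp
    nlinarith
  · have : 0 < 2 * r * (ε ^ 2)⁻¹ * E⁻¹ := by positivity
    linarith
end
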